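/- Let n ≥ 4 and let V ∈ L^∞(ℝⁿ) be real-valued with |V(x)| ≤ C₀⟨x⟩^{-δ} for all x ∈ ℝⁿ, for some constants C₀ > 0 and δ > (n+2)/2. Fix 0 ≤ s ≤ n/2 and a sufficiently small ε > 0; let m ≥ 0 be the largest integer ≤ s and set μ = s − m. Define, for λ > 0, the bounded operator ℛ_s^±(λ) = λ ⟨x⟩^{-1/2-s-ε} R^±(λ) ⟨x⟩^{-1/2-s-ε} on L²(ℝⁿ). Then λ ↦ ℛ_s^±(λ) is m times continuously differentiable on (0,+∞) in operator norm, its m-th derivative is Hölder continuous of order μ, and for every λ₀ > 0 there exists C > 0 such that ‖∂_λ^j ℛ_s^±(λ)‖_{L²→L²} ≤ C for all λ ≥ λ₀ and 0 ≤ j ≤ m, and ‖∂_λ^m ℛ_s^±(λ₂) − ∂_λ^m ℛ_s^±(λ₁)‖_{L²→L²} ≤ C |λ₂ − λ₁|^μ for all λ₂ > λ₁ ≥ λ₀. -/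

import Mathlib

/-!
Write `R₀(z) = (-Δ - z)⁻¹`, `R(z) = (-Δ + V - z)⁻¹`, and let `z = λ² ± ie` with `e > 0` small.
Since `∂_z R(z) = R(z)²`, the derivatives of `λ ⟨x⟩^{-a} R(λ² ± i0) ⟨x⟩^{-a}` are combinations of
terms `λ^r ⟨x⟩^{-a} R(λ² ± i0)^q ⟨x⟩^{-a}` with `r ≤ q`. It therefore suffices to bound the weighted
`q`-th power by `O(λ^{-q})`, and to prove its Hölder continuity, uniformly up to the real axis.

* Free resolvent. For `b > 1/2` a Morawetz multiplier `X·∇ + ½ div X`, with `X` a radial field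
  whose Jacobian dominates a multiple of `⟨x⟩^{-2b}`, gives
  `‖⟨x⟩^{-b} R₀(z) ⟨x⟩^{-b}‖ = O(λ^{-1})`. Because `[x·∇, R₀^j]` equals `2j (R₀^j + z R₀^{j+1})`, a
  power `R₀^{j+1}` can be traded for `R₀^j` and one dilation derivative, which costs one more factor
  `⟨x⟩` on each side; this yields `‖⟨x⟩^{-b-j} R₀(z)^{j+1} ⟨x⟩^{-b-j}‖ = O(λ^{-j-1})`.
* Hölder continuity. Two consecutive powers give a bound and a Lipschitz estimate in weights that
  differ by `⟨x⟩^{-1}`. In a C⋆-algebra `‖a d b‖² ≤ ‖d‖ ‖a² d b²‖` for self-adjoint `a` and `b`, so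
  `θ ↦ log ‖⟨x⟩^{-b-θ} S ⟨x⟩^{-b-θ}‖` is midpoint convex, and interpolation gives the exponents
  between.
* Perturbation. `R = R₀ - R V R₀ = R₀ - R₀ V R`. For large `λ` the term with `V` is absorbed. At a
  fixed energy the existence of the limit is a bound in the weight `⟨x⟩^{-a}`, which the identities
  improve to the weight `⟨x⟩^{-b}`; the Hölder continuity of `R₀` propagates it to nearby energies,
  and compactness makes it uniform on `[λ₀, ∞)`. Powers of `R` reduce to powers of `R₀` by the same
  identities, the decay of `V` being split between its two neighbours.
* Limits. The Hölder estimates make `R^q` and its derivatives converge uniformly as `e → 0`, and the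
  bounds pass to the limit.
-/

open MeasureTheory Filter Topology Real Set

noncomputable section

abbrev Euc (n : ℕ) := EuclideanSpace ℝ (Fin n)

abbrev L2 (n : ℕ) := Lp ℂ 2 (volume : Measure (Euc n))

/-- Japanese bracket `⟨x⟩ = (1+|x|²)^{1/2}`. -/
def jb {n : ℕ} (x : Euc n) : ℝ := Real.sqrt (1 + ‖x‖ ^ 2)

/-- `⟨r⟩ = (1+r²)^{1/2}` for a real number `r`. -/
def jbR (r : ℝ) : ℝ := Real.sqrt (1 + r ^ 2)

/-- The Euclidean Laplacian of a function. -/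
def lapl {n : ℕ} (f : Euc n → ℂ) (x : Euc n) : ℂ :=
  ∑ i : Fin n,
    iteratedFDeriv ℝ 2 f x ![EuclideanSpace.single i (1 : ℝ), EuclideanSpace.single i (1 : ℝ)]

/-- `T` is the (unique) self-adjoint realization of the Schrödinger operator `-Δ + V`
on `L²(ℝⁿ)`: `T` is self-adjoint and acts as `-Δ + V` on Schwartz functions. -/
structure IsSchrodingerOp {n : ℕ} (V : Euc n → ℝ) (T : L2 n →ₗ.[ℂ] L2 n) : Prop where
  selfAdjoint : IsSelfAdjoint T
  eq_on_schwartz : ∀ f : SchwartzMap (Euc n) ℂ,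
    ∃ u : T.domain, ((u : L2 n) : Euc n → ℂ) =ᵐ[volume] ⇑f ∧
      ((T u : L2 n) : Euc n → ℂ) =ᵐ[volume] fun x => -lapl (⇑f) x + (V x : ℂ) * f x

/-- `fc` is the Borel functional calculus of the self-adjoint operator `T`:
a bounded-pointwise-continuous algebra homomorphism on bounded Borel functions
whose value on `(· - z)⁻¹` is the resolvent `(T - z)⁻¹`. -/
structure IsBorelFunctionalCalculus {n : ℕ} (T : L2 n →ₗ.[ℂ] L2 n)
    (fc : (ℝ → ℂ) → (L2 n →L[ℂ] L2 n)) : Prop where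
  map_one : fc (fun _ => 1) = ContinuousLinearMap.id ℂ (L2 n)
  map_add : ∀ f g : ℝ → ℂ, Measurable f → Measurable g → (∃ M, ∀ x, ‖f x‖ ≤ M) →
    (∃ M, ∀ x, ‖g x‖ ≤ M) → fc (fun x => f x + g x) = fc f + fc g
  map_mul : ∀ f g : ℝ → ℂ, Measurable f → Measurable g → (∃ M, ∀ x, ‖f x‖ ≤ M) →
    (∃ M, ∀ x, ‖g x‖ ≤ M) → fc (fun x => f x * g x) = (fc f).comp (fc g)
  norm_le : ∀ (f : ℝ → ℂ) (M : ℝ), Measurable f → (∀ x, ‖f x‖ ≤ M) → ‖fc f‖ ≤ M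
  tendsto_of_ptwise : ∀ (F : ℕ → ℝ → ℂ) (f : ℝ → ℂ) (M : ℝ),
    (∀ k, Measurable (F k)) → Measurable f → (∀ k x, ‖F k x‖ ≤ M) →
    (∀ x, Tendsto (fun k => F k x) atTop (𝓝 (f x))) →
    ∀ u : L2 n, Tendsto (fun k => fc (F k) u) atTop (𝓝 (fc f u))
  resolvent : ∀ z : ℂ, z.im ≠ 0 → ∀ u : L2 n,
    ∃ v : T.domain, (v : L2 n) = fc (fun x => ((x : ℂ) - z)⁻¹) u ∧
      T v = z • (v : L2 n) + u

/-- A real-valued function of class `C₀^∞((0,+∞))`. -/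
def IsCutoff (ψ : ℝ → ℝ) : Prop :=
  ContDiff ℝ (⊤ : ℕ∞) ψ ∧ HasCompactSupport ψ ∧ tsupport ψ ⊆ Set.Ioi 0

/-- A real-valued `C^∞(ℝ)` function supported in `[a,+∞)` which equals `1` on `[2a,+∞)`. -/
def IsChi (a : ℝ) (χ : ℝ → ℝ) : Prop :=
  ContDiff ℝ (⊤ : ℕ∞) χ ∧ Function.support χ ⊆ Set.Ici a ∧ ∀ x, 2 * a ≤ x → χ x = 1

section Proof

open scoped LineDeriv Laplacian ComplexConjugate

variable {n : ℕ}

/-! ### Schwartz functions and the free resolvent -/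

/-- Complex-valued Schwartz functions on `ℝⁿ`, on which all integrations by parts are done. -/
abbrev Sch (n : ℕ) := SchwartzMap (Euc n) ℂ

/-- The inclusion of the Schwartz space into `L²`. -/
def toL2 : Sch n →L[ℂ] L2 n := SchwartzMap.toLpCLM ℂ ℂ 2 volume

/-- Multiplication of Schwartz functions by a real function. Junk (zero) unless the function has
temperate growth. -/
def schMul (φ : Euc n → ℝ) : Module.End ℂ (Sch n) :=
  (SchwartzMap.smulLeftCLM ℂ (fun x => (φ x : ℂ))).toLinearMap

/-- The `i`-th partial derivative of a Schwartz function. -/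
def schDeriv (i : Fin n) : Module.End ℂ (Sch n) :=
  (LineDeriv.lineDerivOpCLM ℂ (Sch n) (EuclideanSpace.single i (1 : ℝ))).toLinearMap

/-- The positive Laplacian `-Δ` on Schwartz functions. -/
def negLaplacian : Module.End ℂ (Sch n) := -∑ i, schDeriv i * schDeriv i

lemma coeFn_toL2 (f : Sch n) : (toL2 f : Euc n → ℂ) =ᵐ[volume] f :=
  SchwartzMap.coeFn_toLp f 2 volume

lemma denseRange_toL2 : DenseRange (toL2 : Sch n → L2 n) :=
  SchwartzMap.denseRange_toLpCLM (F := ℂ) (by norm_num)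

lemma inner_toL2 (f g : Sch n) : inner ℂ (toL2 f) (toL2 g) = ∫ x, conj (f x) * g x := by
  rw [toL2, SchwartzMap.toLpCLM_apply, SchwartzMap.toLpCLM_apply,
    SchwartzMap.inner_toL2_toL2_eq f g (volume : Measure (Euc n))]
  simp only [RCLike.inner_apply, mul_comm]

lemma inner_self_eq_ofReal_norm_sq {H : Type*} [NormedAddCommGroup H] [InnerProductSpace ℂ H]
    (u : H) : inner ℂ u u = ((‖u‖ ^ 2 : ℝ) : ℂ) := by
  rw [inner_self_eq_norm_sq_to_K]; simp

lemma norm_toL2_sq (f : Sch n) : ‖toL2 f‖ ^ 2 = ∫ x, ‖f x‖ ^ 2 := by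
  apply Complex.ofReal_injective
  rw [← inner_self_eq_ofReal_norm_sq, inner_toL2, ← integral_complex_ofReal]
  congr 1 with x
  rw [mul_comm, Complex.mul_conj, Complex.normSq_eq_norm_sq]

lemma hasTemperateGrowth_ofReal_comp {φ : Euc n → ℝ} (hφ : φ.HasTemperateGrowth) :
    (fun x => (φ x : ℂ)).HasTemperateGrowth := by fun_prop

lemma schMul_apply {φ : Euc n → ℝ} (hφ : φ.HasTemperateGrowth) (f : Sch n) (x : Euc n) :
    schMul φ f x = φ x * f x := by
  simp [schMul, hasTemperateGrowth_ofReal_comp hφ]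

lemma schDeriv_apply (i : Fin n) (f : Sch n) (x : Euc n) :
    schDeriv i f x = fderiv ℝ f x (EuclideanSpace.single i 1) := by
  simp [schDeriv, SchwartzMap.lineDerivOp_apply_eq_fderiv]

lemma schMul_schMul {φ ψ χ : Euc n → ℝ} (hφ : φ.HasTemperateGrowth) (hψ : ψ.HasTemperateGrowth)
    (h : ∀ x, φ x * ψ x = χ x) (f : Sch n) : schMul φ (schMul ψ f) = schMul χ f := by
  obtain rfl : φ * ψ = χ := funext h
  ext x
  rw [schMul_apply hφ, schMul_apply hψ, schMul_apply (hφ.mul hψ), Pi.mul_apply]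
  push_cast
  ring

lemma schMul_one (f : Sch n) : schMul (fun _ => 1) f = f := by
  ext x
  rw [schMul_apply (by fun_prop), Complex.ofReal_one, one_mul]

lemma norm_schMul_le_mul {φ ψ : Euc n → ℝ} (hφ : φ.HasTemperateGrowth)
    (hψ : ψ.HasTemperateGrowth) {C : ℝ} (h : ∀ x, |φ x| ≤ C * |ψ x|) (f : Sch n) :
    ‖toL2 (schMul φ f)‖ ≤ C * ‖toL2 (schMul ψ f)‖ := by
  refine Lp.norm_le_mul_norm_of_ae_le_mul ?_
  filter_upwards [coeFn_toL2 (schMul φ f), coeFn_toL2 (schMul ψ f)] with x hx hx'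
  rw [hx, hx', schMul_apply hφ, schMul_apply hψ, norm_mul, norm_mul, ← mul_assoc]
  gcongr
  simpa using h x

lemma inner_schMul {φ : Euc n → ℝ} (hφ : φ.HasTemperateGrowth) (f g : Sch n) :
    inner ℂ (toL2 (schMul φ f)) (toL2 g) = inner ℂ (toL2 f) (toL2 (schMul φ g)) := by
  rw [inner_toL2, inner_toL2]
  congr 1 with x
  rw [schMul_apply hφ, schMul_apply hφ, map_mul, Complex.conj_ofReal]
  ring

lemma inner_schDeriv (i : Fin n) (f g : Sch n) :
    inner ℂ (toL2 (schDeriv i f)) (toL2 g) = -inner ℂ (toL2 f) (toL2 (schDeriv i g)) := by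
  have h := SchwartzMap.integral_bilinear_lineDerivOp_right_eq_neg_left (μ := volume) f g
    ((ContinuousLinearMap.mul ℝ ℂ).comp (Complex.conjCLE : ℂ →L[ℝ] ℂ)) (EuclideanSpace.single i 1)
  rw [inner_toL2, inner_toL2]
  exact (neg_eq_iff_eq_neg.2 h).symm

/-- The `i`-th partial derivative of a real function; junk (zero) where it is not differentiable. -/
def partialDeriv (i : Fin n) (φ : Euc n → ℝ) (x : Euc n) : ℝ :=
  fderiv ℝ φ x (EuclideanSpace.single i 1)

@[fun_prop]
lemma partialDeriv_hasTemperateGrowth {φ : Euc n → ℝ} (hφ : φ.HasTemperateGrowth) (i : Fin n) :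
    (partialDeriv i φ).HasTemperateGrowth := by
  have hfderiv : (fderiv ℝ φ).HasTemperateGrowth :=
    ⟨hφ.1.fderiv_right (by simp), fun k => by
      simpa only [norm_iteratedFDeriv_fderiv] using hφ.2 (k + 1)⟩
  exact (ContinuousLinearMap.apply ℝ ℝ (EuclideanSpace.single i 1)).hasTemperateGrowth.comp hfderiv

lemma schDeriv_schMul {φ : Euc n → ℝ} (hφ : φ.HasTemperateGrowth) (i : Fin n) (f : Sch n) :
    schDeriv i (schMul φ f) = schMul φ (schDeriv i f) + schMul (partialDeriv i φ) f := by
  ext x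
  have hcoe : (schMul φ f : Euc n → ℂ) = fun x => φ x • f x := by
    ext y; rw [schMul_apply hφ, Complex.real_smul]
  rw [add_apply, schDeriv_apply, schMul_apply hφ, schMul_apply (by fun_prop), schDeriv_apply, hcoe,
    fderiv_fun_smul (hφ.1.differentiable (by simp) x) f.differentiableAt]
  simp [partialDeriv]

lemma schDeriv_comm (i k : Fin n) (f : Sch n) :
    schDeriv i (schDeriv k f) = schDeriv k (schDeriv i f) := by
  have hM (l : Fin n) (g : Sch n) : schDeriv l g = (2 * π * Complex.I) •
      SchwartzMap.fourierMultiplierCLM ℂ (inner ℝ · (EuclideanSpace.single l (1 : ℝ))) g :=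
    SchwartzMap.lineDeriv_eq_fourierMultiplierCLM _ _
  simp only [hM, map_smul, ← SchwartzMap.fourierMultiplierCLM_ofReal ℂ
    (Function.hasTemperateGrowth_inner_left _)]
  rw [SchwartzMap.fourierMultiplierCLM_fourierMultiplierCLM_apply (by fun_prop) (by fun_prop),
    SchwartzMap.fourierMultiplierCLM_fourierMultiplierCLM_apply (by fun_prop) (by fun_prop)]
  congr 4 with ξ
  exact mul_comm _ _

lemma negLaplacian_eq (f : Sch n) : negLaplacian f = -∑ i, schDeriv i (schDeriv i f) := by
  simp [negLaplacian]

lemma negLaplacian_apply (f : Sch n) (x : Euc n) : negLaplacian f x = -lapl f x := by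
  rw [negLaplacian_eq, lapl, neg_apply, sum_apply]
  simp only [← SchwartzMap.iteratedLineDerivOp_eq_iteratedFDeriv]
  rfl

lemma inner_negLaplacian (f g : Sch n) : inner ℂ (toL2 (negLaplacian f)) (toL2 g) =
    ∑ i, inner ℂ (toL2 (schDeriv i f)) (toL2 (schDeriv i g)) := by
  simp only [negLaplacian_eq, map_neg, map_sum, inner_neg_left, sum_inner, inner_schDeriv _ _ g,
    Finset.sum_neg_distrib, neg_neg]

lemma negLaplacian_symm (f g : Sch n) :
    inner ℂ (toL2 (negLaplacian f)) (toL2 g) = inner ℂ (toL2 f) (toL2 (negLaplacian g)) := by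
  rw [inner_negLaplacian, ← inner_conj_symm (toL2 f), inner_negLaplacian, map_sum]
  simp

/-- The symbol `(2π|ξ|)² - z` of `-Δ - z` in the normalization `e^{-2πi⟨x,ξ⟩}` of the Fourier
transform. -/
def freeSymbol (z : ℂ) (ξ : Euc n) : ℂ := (((2 * π) ^ 2 * ‖ξ‖ ^ 2 : ℝ) : ℂ) - z

lemma freeSymbol_hasTemperateGrowth (z : ℂ) : (freeSymbol z : Euc n → ℂ).HasTemperateGrowth :=
  (hasTemperateGrowth_ofReal_comp (by fun_prop)).sub (by fun_prop)

lemma freeSymbol_ne_zero {z : ℂ} (hz : z.im ≠ 0) (ξ : Euc n) : freeSymbol z ξ ≠ 0 := fun h =>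
  hz (by simpa [freeSymbol, ← Complex.ofReal_pow] using congrArg Complex.im h)

lemma inv_freeSymbol_eq {z : ℂ} (hz : z.im ≠ 0) (ξ : Euc n) : (freeSymbol z ξ)⁻¹ =
    (((1 + ‖((2 * π) ^ 2 * ‖ξ‖ ^ 2 - z.re) * z.im⁻¹‖ ^ 2) ^ (-1 : ℝ) * z.im⁻¹ ^ 2 : ℝ) : ℂ) *
      freeSymbol (conj z) ξ := by
  have hnormSq : Complex.normSq (freeSymbol z ξ) =
      ((2 * π) ^ 2 * ‖ξ‖ ^ 2 - z.re) ^ 2 + z.im ^ 2 := by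
    rw [freeSymbol, Complex.normSq_apply, Complex.sub_re, Complex.sub_im, Complex.ofReal_re,
      Complex.ofReal_im]
    ring
  rw [Complex.inv_def, hnormSq, mul_comm, Real.rpow_neg_one, norm_eq_abs, sq_abs]
  congr 2
  · have : ((2 * π) ^ 2 * ‖ξ‖ ^ 2 - z.re) ^ 2 + z.im ^ 2 ≠ 0 := by positivity
    field_simp
    rw [add_comm]
  · rw [freeSymbol, freeSymbol, map_sub, Complex.conj_ofReal]

lemma inv_freeSymbol_hasTemperateGrowth {z : ℂ} (hz : z.im ≠ 0) :
    (fun ξ : Euc n => (freeSymbol z ξ)⁻¹).HasTemperateGrowth := by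
  simp only [inv_freeSymbol_eq hz]
  have hpow := (Function.hasTemperateGrowth_one_add_norm_sq_rpow ℝ (-1)).comp
    (show (fun ξ : Euc n => ((2 * π) ^ 2 * ‖ξ‖ ^ 2 - z.re) * z.im⁻¹).HasTemperateGrowth by fun_prop)
  exact (hasTemperateGrowth_ofReal_comp (hpow.mul (.const _))).mul (freeSymbol_hasTemperateGrowth _)

lemma fourierMultiplier_freeSymbol (z : ℂ) (f : Sch n) :
    SchwartzMap.fourierMultiplierCLM ℂ (freeSymbol z) f = negLaplacian f - z • f := by
  have hΔ : negLaplacian f = -Δ f := by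
    rw [negLaplacian_eq, SchwartzMap.laplacian_eq_sum (EuclideanSpace.basisFun (Fin n) ℝ)]
    simp [schDeriv]
  have hq : (fun ξ : Euc n => ‖ξ‖ ^ 2).HasTemperateGrowth := by fun_prop
  rw [hΔ, SchwartzMap.laplacian_eq_fourierMultiplierCLM, neg_smul, neg_neg,
    ← SchwartzMap.fourierMultiplierCLM_ofReal ℂ hq]
  have hsplit : (freeSymbol z : Euc n → ℂ) =
      ((2 * π) ^ 2 : ℝ) • (fun ξ : Euc n => ((‖ξ‖ ^ 2 : ℝ) : ℂ)) - fun _ => z := by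
    ext ξ; simp [freeSymbol]
  rw [hsplit, SchwartzMap.fourierMultiplierCLM_apply, SchwartzMap.smulLeftCLM_sub
    (by fun_prop) (by fun_prop), SchwartzMap.smulLeftCLM_real_smul (by fun_prop)]
  simp [SchwartzMap.fourierMultiplierCLM_apply, sub_eq_add_neg, FourierTransform.fourierInv_add,
    FourierTransform.fourierInv_smul, ← neg_smul]

/-- The free resolvent `(-Δ - z)⁻¹` on Schwartz functions, for nonreal `z`. -/
def schFreeResolvent (z : ℂ) : Module.End ℂ (Sch n) :=
  (SchwartzMap.fourierMultiplierCLM ℂ fun ξ => (freeSymbol z ξ)⁻¹).toLinearMap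

lemma negLaplacian_sub_smul_schFreeResolvent {z : ℂ} (hz : z.im ≠ 0) (f : Sch n) :
    negLaplacian (schFreeResolvent z f) - z • schFreeResolvent z f = f := by
  rw [← fourierMultiplier_freeSymbol, schFreeResolvent, ContinuousLinearMap.coe_coe,
    SchwartzMap.fourierMultiplierCLM_fourierMultiplierCLM_apply
      (freeSymbol_hasTemperateGrowth z) (inv_freeSymbol_hasTemperateGrowth hz)]
  rw [show freeSymbol z * (fun ξ : Euc n => (freeSymbol z ξ)⁻¹) = fun _ => 1 from
    funext fun ξ => mul_inv_cancel₀ (freeSymbol_ne_zero hz ξ)]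
  simp

lemma schFreeResolvent_negLaplacian_sub_smul {z : ℂ} (hz : z.im ≠ 0) (f : Sch n) :
    schFreeResolvent z (negLaplacian f - z • f) = f := by
  rw [← fourierMultiplier_freeSymbol, schFreeResolvent, ContinuousLinearMap.coe_coe,
    SchwartzMap.fourierMultiplierCLM_fourierMultiplierCLM_apply
      (inv_freeSymbol_hasTemperateGrowth hz) (freeSymbol_hasTemperateGrowth z)]
  rw [show (fun ξ : Euc n => (freeSymbol z ξ)⁻¹) * freeSymbol z = fun _ => 1 from
    funext fun ξ => inv_mul_cancel₀ (freeSymbol_ne_zero hz ξ)]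
  simp

lemma inner_negLaplacian_sub_smul (z : ℂ) (u : Sch n) :
    inner ℂ (toL2 (negLaplacian u - z • u)) (toL2 u) =
      ((∑ i, ‖toL2 (schDeriv i u)‖ ^ 2 : ℝ) : ℂ) - conj z * ((‖toL2 u‖ ^ 2 : ℝ) : ℂ) := by
  rw [map_sub, inner_sub_left, map_smul, inner_smul_left, inner_self_eq_ofReal_norm_sq,
    inner_negLaplacian, Complex.ofReal_sum]
  simp only [inner_self_eq_ofReal_norm_sq]

lemma abs_im_mul_norm_sq_le (z : ℂ) (u : Sch n) : |z.im| * ‖toL2 u‖ ^ 2 ≤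
    ‖inner ℂ (toL2 (negLaplacian u - z • u)) (toL2 u)‖ := by
  have him : (inner ℂ (toL2 (negLaplacian u - z • u)) (toL2 u)).im = z.im * ‖toL2 u‖ ^ 2 := by
    rw [inner_negLaplacian_sub_smul, Complex.sub_im, Complex.ofReal_im, Complex.im_mul_ofReal,
      Complex.conj_im]
    ring
  rw [← abs_of_nonneg (sq_nonneg ‖toL2 u‖), ← abs_mul, ← him]
  exact Complex.abs_im_le_norm _

lemma abs_im_mul_norm_le (z : ℂ) (u : Sch n) :
    |z.im| * ‖toL2 u‖ ≤ ‖toL2 (negLaplacian u - z • u)‖ := by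
  have hle := (abs_im_mul_norm_sq_le z u).trans (norm_inner_le_norm _ _)
  rcases (norm_nonneg (toL2 u)).eq_or_lt with h | h
  · rw [← h, mul_zero]; exact norm_nonneg _
  · exact le_of_mul_le_mul_right (by linarith) h

lemma norm_schFreeResolvent_le {z : ℂ} (hz : z.im ≠ 0) (f : Sch n) :
    ‖toL2 (schFreeResolvent z f)‖ ≤ |z.im|⁻¹ * ‖toL2 f‖ := by
  have h := abs_im_mul_norm_le z (schFreeResolvent z f)
  rw [negLaplacian_sub_smul_schFreeResolvent hz] at h
  rwa [le_inv_mul_iff₀ (abs_pos.2 hz)]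

lemma conj_im_ne_zero {z : ℂ} (hz : z.im ≠ 0) : (conj z).im ≠ 0 := by simpa using hz

lemma inner_schFreeResolvent {z : ℂ} (hz : z.im ≠ 0) (f g : Sch n) :
    inner ℂ (toL2 (schFreeResolvent z f)) (toL2 g) =
      inner ℂ (toL2 f) (toL2 (schFreeResolvent (conj z) g)) := by
  conv_lhs => rw [← negLaplacian_sub_smul_schFreeResolvent (conj_im_ne_zero hz) g]
  conv_rhs => rw [← negLaplacian_sub_smul_schFreeResolvent hz f]
  rw [map_sub, map_sub, inner_sub_right, inner_sub_left, negLaplacian_symm, map_smul, map_smul,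
    inner_smul_left, inner_smul_right]

/-! ### Weights and weighted norms -/

/-- The scaled weight `⟨ηx⟩^{2r} = (1 + η²|x|²)^r`. -/
def bracketPow (η r : ℝ) (x : Euc n) : ℝ := (1 + η ^ 2 * ‖x‖ ^ 2) ^ r

lemma one_le_one_add_sq_mul_sq (η : ℝ) (x : Euc n) : 1 ≤ 1 + η ^ 2 * ‖x‖ ^ 2 :=
  le_add_of_nonneg_right (by positivity)

lemma bracketPow_pos (η r : ℝ) (x : Euc n) : 0 < bracketPow η r x :=
  Real.rpow_pos_of_pos (by linarith [one_le_one_add_sq_mul_sq η x]) _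

lemma abs_bracketPow (η r : ℝ) (x : Euc n) : |bracketPow η r x| = bracketPow η r x :=
  abs_of_pos (bracketPow_pos η r x)

lemma bracketPow_mul (η r s : ℝ) (x : Euc n) :
    bracketPow η r x * bracketPow η s x = bracketPow η (r + s) x :=
  (Real.rpow_add (by linarith [one_le_one_add_sq_mul_sq η x]) _ _).symm

lemma bracketPow_mono {η r s : ℝ} (h : r ≤ s) (x : Euc n) : bracketPow η r x ≤ bracketPow η s x :=
  Real.rpow_le_rpow_of_exponent_le (one_le_one_add_sq_mul_sq η x) h

lemma bracketPow_zero (η : ℝ) (x : Euc n) : bracketPow η 0 x = 1 := Real.rpow_zero _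

lemma bracketPow_one (η : ℝ) (x : Euc n) : bracketPow η 1 x = 1 + η ^ 2 * ‖x‖ ^ 2 :=
  Real.rpow_one _

lemma bracketPow_le_one {η r : ℝ} (h : r ≤ 0) (x : Euc n) : bracketPow η r x ≤ 1 := by
  rw [← bracketPow_zero η x]; exact bracketPow_mono h x

lemma bracketPow_mul_eq_one {η r s : ℝ} (h : r + s = 0) (x : Euc n) :
    bracketPow η r x * bracketPow η s x = 1 := by
  rw [bracketPow_mul, h, bracketPow_zero]

@[fun_prop]
lemma bracketPow_hasTemperateGrowth (η r : ℝ) :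
    (bracketPow η r : Euc n → ℝ).HasTemperateGrowth := by
  have h := (Function.hasTemperateGrowth_one_add_norm_sq_rpow (Euc n) r).comp
    (f := fun x : Euc n => η • x) (by fun_prop)
  refine (congrArg Function.HasTemperateGrowth ?_).mp h
  ext x
  simp [bracketPow, norm_smul, mul_pow]

lemma hasFDerivAt_bracketPow (η r : ℝ) (x : Euc n) : HasFDerivAt (bracketPow η r)
    ((r * (1 + η ^ 2 * ‖x‖ ^ 2) ^ (r - 1)) • η ^ 2 • (2 • innerSL ℝ x)) x :=
  ((((hasStrictFDerivAt_norm_sq x).hasFDerivAt).const_mul _).const_add _).rpow_const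
    (Or.inl (by linarith [one_le_one_add_sq_mul_sq η x]))

lemma partialDeriv_bracketPow (η r : ℝ) (i : Fin n) (x : Euc n) :
    partialDeriv i (bracketPow η r) x = 2 * r * η ^ 2 * x i * bracketPow η (r - 1) x := by
  rw [partialDeriv, (hasFDerivAt_bracketPow η r x).fderiv]
  simp [bracketPow, EuclideanSpace.inner_single_right]
  ring

@[fun_prop]
lemma coord_hasTemperateGrowth (i : Fin n) : (fun x : Euc n => x i).HasTemperateGrowth :=
  (EuclideanSpace.proj i : Euc n →L[ℝ] ℝ).hasTemperateGrowth

lemma partialDeriv_coord (i k : Fin n) :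
    partialDeriv i (fun x : Euc n => x k) = fun _ => if i = k then 1 else 0 := by
  ext x
  have hproj : HasFDerivAt (fun x : Euc n => x k) (EuclideanSpace.proj k : Euc n →L[ℝ] ℝ) x :=
    (EuclideanSpace.proj k : Euc n →L[ℝ] ℝ).hasFDerivAt
  rw [partialDeriv, hproj.fderiv]
  simp [eq_comm]

lemma mul_abs_coord_le (η : ℝ) (i : Fin n) (x : Euc n) : η * |x i| ≤ bracketPow η (1 / 2) x := by
  have hcoord : |x i| ≤ ‖x‖ := by simpa using PiLp.norm_apply_le x i
  rw [bracketPow, ← Real.sqrt_eq_rpow]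
  apply Real.le_sqrt_of_sq_le
  rw [mul_pow]
  have : |x i| ^ 2 ≤ ‖x‖ ^ 2 := by gcongr
  nlinarith [sq_nonneg η]

/-- The weighted norm `‖⟨ηx⟩^{-a} u‖`. -/
def weightedNorm (η a : ℝ) (u : Sch n) : ℝ := ‖toL2 (schMul (bracketPow η (-a / 2)) u)‖

lemma weightedNorm_nonneg (η a : ℝ) (u : Sch n) : 0 ≤ weightedNorm η a u := norm_nonneg _

lemma weightedNorm_add_le (η a : ℝ) (u v : Sch n) :
    weightedNorm η a (u + v) ≤ weightedNorm η a u + weightedNorm η a v := by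
  rw [weightedNorm, map_add, map_add]; exact norm_add_le _ _

lemma weightedNorm_sub_le (η a : ℝ) (u v : Sch n) :
    weightedNorm η a (u - v) ≤ weightedNorm η a u + weightedNorm η a v := by
  rw [weightedNorm, map_sub, map_sub]; exact norm_sub_le _ _

lemma weightedNorm_smul (η a : ℝ) (c : ℂ) (u : Sch n) :
    weightedNorm η a (c • u) = ‖c‖ * weightedNorm η a u := by
  rw [weightedNorm, map_smul, map_smul, norm_smul, weightedNorm]

lemma weightedNorm_sum_le {ι : Type*} (η a : ℝ) (s : Finset ι) (u : ι → Sch n) :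
    weightedNorm η a (∑ k ∈ s, u k) ≤ ∑ k ∈ s, weightedNorm η a (u k) := by
  rw [weightedNorm, map_sum, map_sum]; exact norm_sum_le _ _

lemma weightedNorm_zero_exponent (η : ℝ) (u : Sch n) : weightedNorm η 0 u = ‖toL2 u‖ := by
  have hone : (bracketPow η (-0 / 2) : Euc n → ℝ) = fun _ => 1 := by
    ext x; rw [neg_zero, zero_div, bracketPow_zero]
  rw [weightedNorm, hone, schMul_one]

lemma weightedNorm_schMul_le {φ : Euc n → ℝ} (hφ : φ.HasTemperateGrowth) {η a b C : ℝ}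
    (h : ∀ x, |φ x| ≤ C * bracketPow η ((a - b) / 2) x) (u : Sch n) :
    weightedNorm η a (schMul φ u) ≤ C * weightedNorm η b u := by
  rw [weightedNorm, schMul_schMul (by fun_prop) hφ (χ := bracketPow η (-a / 2) * φ) fun _ => rfl]
  refine norm_schMul_le_mul (by fun_prop) (by fun_prop) (fun x => ?_) u
  have hexp : bracketPow η (-b / 2) x = bracketPow η (-a / 2) x * bracketPow η ((a - b) / 2) x := by
    rw [bracketPow_mul]; congr 1; ring
  rw [Pi.mul_apply, abs_mul, abs_bracketPow, abs_bracketPow, hexp, mul_left_comm]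
  exact mul_le_mul_of_nonneg_left (h x) (bracketPow_pos _ _ _).le

lemma weightedNorm_schMul_le_of_le {φ : Euc n → ℝ} (hφ : φ.HasTemperateGrowth) {C : ℝ}
    (h : ∀ x, |φ x| ≤ C) (η a : ℝ) (u : Sch n) :
    weightedNorm η a (schMul φ u) ≤ C * weightedNorm η a u :=
  weightedNorm_schMul_le hφ (fun x => by simpa [bracketPow_zero] using h x) u

lemma weightedNorm_anti {η a b : ℝ} (h : b ≤ a) (u : Sch n) :
    weightedNorm η a u ≤ weightedNorm η b u := by
  have := weightedNorm_schMul_le (φ := fun _ => 1) (by fun_prop) (a := a) (b := b) (η := η) (C := 1)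
    (fun x => by
      rw [abs_one, one_mul, ← bracketPow_zero η x]
      exact bracketPow_mono (by linarith) x) u
  rwa [schMul_one, one_mul] at this

lemma weightedNorm_le_of_le_scale {η a : ℝ} (hη : 0 ≤ η) {θ : ℝ} (h : η ≤ θ) (ha : 0 ≤ a)
    (u : Sch n) : weightedNorm θ a u ≤ weightedNorm η a u := by
  have := norm_schMul_le_mul (bracketPow_hasTemperateGrowth θ (-a / 2))
    (bracketPow_hasTemperateGrowth η (-a / 2)) (C := 1) (fun x => by
      rw [abs_bracketPow, abs_bracketPow, one_mul]
      exact Real.rpow_le_rpow_of_nonpos (by linarith [one_le_one_add_sq_mul_sq η x]) (by gcongr)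
        (by linarith)) u
  rwa [one_mul] at this

lemma weightedNorm_neg_le_of_le_scale {η a : ℝ} (hη : 0 ≤ η) {θ : ℝ} (h : η ≤ θ) (ha : 0 ≤ a)
    (u : Sch n) : weightedNorm η (-a) u ≤ weightedNorm θ (-a) u := by
  have := norm_schMul_le_mul (bracketPow_hasTemperateGrowth η (- -a / 2))
    (bracketPow_hasTemperateGrowth θ (- -a / 2)) (C := 1) (fun x => by
      rw [abs_bracketPow, abs_bracketPow, one_mul]
      exact Real.rpow_le_rpow (by linarith [one_le_one_add_sq_mul_sq η x]) (by gcongr)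
        (by linarith)) u
  rwa [one_mul] at this

lemma norm_inner_le_weightedNorm (η a : ℝ) (u v : Sch n) :
    ‖inner ℂ (toL2 u) (toL2 v)‖ ≤ weightedNorm η (-a) u * weightedNorm η a v := by
  have hv : v = schMul (bracketPow η (- -a / 2)) (schMul (bracketPow η (-a / 2)) v) := by
    rw [schMul_schMul (by fun_prop) (by fun_prop) (χ := fun _ => 1), schMul_one]
    exact bracketPow_mul_eq_one (by ring)
  conv_lhs => rw [hv, ← inner_schMul (by fun_prop)]
  exact norm_inner_le_norm _ _

lemma norm_inner_schMul_le_weightedNorm {φ : Euc n → ℝ} (hφ : φ.HasTemperateGrowth) {η a C : ℝ}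
    (h : ∀ x, |φ x| ≤ C * bracketPow η (-a) x) (u v : Sch n) :
    ‖inner ℂ (toL2 u) (toL2 (schMul φ v))‖ ≤ C * (weightedNorm η a u * weightedNorm η a v) := by
  refine (norm_inner_le_weightedNorm η (-a) u (schMul φ v)).trans ?_
  have hφv : weightedNorm η (-a) (schMul φ v) ≤ C * weightedNorm η a v :=
    weightedNorm_schMul_le hφ (fun x => by convert h x using 3; ring) v
  rw [neg_neg, mul_left_comm]
  exact mul_le_mul_of_nonneg_left hφv (weightedNorm_nonneg _ _ _)

lemma inner_schMul_bracketPow (η a : ℝ) (u : Sch n) :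
    inner ℂ (toL2 u) (toL2 (schMul (bracketPow η (-a)) u)) =
      ((weightedNorm η a u ^ 2 : ℝ) : ℂ) := by
  rw [weightedNorm, ← inner_self_eq_ofReal_norm_sq, inner_schMul (by fun_prop),
    schMul_schMul (by fun_prop) (by fun_prop) (χ := bracketPow η (-a))]
  intro x
  rw [bracketPow_mul]
  congr 1
  ring

/-- The weighted norm `‖⟨ηx⟩^{-a} ∇u‖`. -/
def gradNorm (η a : ℝ) (u : Sch n) : ℝ := √(∑ i, weightedNorm η a (schDeriv i u) ^ 2)

lemma gradNorm_nonneg (η a : ℝ) (u : Sch n) : 0 ≤ gradNorm η a u := Real.sqrt_nonneg _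

lemma gradNorm_sq (η a : ℝ) (u : Sch n) :
    gradNorm η a u ^ 2 = ∑ i, weightedNorm η a (schDeriv i u) ^ 2 :=
  Real.sq_sqrt (Finset.sum_nonneg fun _ _ => sq_nonneg _)

lemma weightedNorm_schDeriv_le_gradNorm (η a : ℝ) (u : Sch n) (i : Fin n) :
    weightedNorm η a (schDeriv i u) ≤ gradNorm η a u :=
  Real.le_sqrt_of_sq_le <| Finset.single_le_sum (f := fun i => weightedNorm η a (schDeriv i u) ^ 2)
    (fun _ _ => sq_nonneg _) (Finset.mem_univ i)

lemma sum_weightedNorm_schDeriv_le (η a : ℝ) (u : Sch n) :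
    ∑ i, weightedNorm η a (schDeriv i u) ≤ n * gradNorm η a u := by
  calc ∑ i, weightedNorm η a (schDeriv i u) ≤ ∑ _i : Fin n, gradNorm η a u :=
        Finset.sum_le_sum fun i _ => weightedNorm_schDeriv_le_gradNorm η a u i
    _ = n * gradNorm η a u := by simp

/-! ### Energy identities -/

lemma abs_mul_coord_mul_bracketPow_le {η : ℝ} (hη : 0 ≤ η) (a : ℝ) (i : Fin n) (x : Euc n) :
    |2 * (-a) * η ^ 2 * x i * bracketPow η (-a - 1) x| ≤ 2 * |a| * η * bracketPow η (-a) x := by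
  calc |2 * (-a) * η ^ 2 * x i * bracketPow η (-a - 1) x|
      = 2 * |a| * η * (η * |x i|) * bracketPow η (-a - 1) x := by
        simp only [abs_mul, abs_neg, abs_of_nonneg (sq_nonneg η), abs_two, abs_bracketPow]; ring
    _ ≤ 2 * |a| * η * bracketPow η (1 / 2) x * bracketPow η (-a - 1) x := by
        have := (bracketPow_pos η (-a - 1) x).le
        gcongr; exact mul_abs_coord_le η i x
    _ = 2 * |a| * η * bracketPow η (1 / 2 + (-a - 1)) x := by rw [← bracketPow_mul]; ring
    _ ≤ 2 * |a| * η * bracketPow η (-a) x := by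
        gcongr 2 * |a| * η * ?_; exact bracketPow_mono (by linarith) x

lemma inner_negLaplacian_schMul {φ : Euc n → ℝ} (hφ : φ.HasTemperateGrowth) (u : Sch n) :
    inner ℂ (toL2 (negLaplacian u)) (toL2 (schMul φ u)) =
      ∑ i, inner ℂ (toL2 (schDeriv i u)) (toL2 (schMul φ (schDeriv i u))) +
      ∑ i, inner ℂ (toL2 (schDeriv i u)) (toL2 (schMul (partialDeriv i φ) u)) := by
  rw [inner_negLaplacian, ← Finset.sum_add_distrib]
  simp only [schDeriv_schMul hφ, map_add, inner_add_right]

-- The equation is tested against `⟨ηx⟩^{-2a} u`.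
lemma abs_gradNorm_sq_sub_le {η : ℝ} (hη : 0 ≤ η) (a : ℝ) (z : ℂ) (u : Sch n) :
    |gradNorm η a u ^ 2 - z.re * weightedNorm η a u ^ 2| ≤
      2 * |a| * η * (∑ i, weightedNorm η a (schDeriv i u)) * weightedNorm η a u +
      ‖inner ℂ (toL2 (negLaplacian u - z • u)) (toL2 (schMul (bracketPow η (-a)) u))‖ := by
  set w : Euc n → ℝ := bracketPow η (-a) with hw
  set S := ∑ i, inner ℂ (toL2 (schDeriv i u)) (toL2 (schMul (partialDeriv i w) u)) with hS
  have hS_le : ‖S‖ ≤ 2 * |a| * η * (∑ i, weightedNorm η a (schDeriv i u)) * weightedNorm η a u := by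
    rw [mul_assoc, Finset.sum_mul, Finset.mul_sum]
    refine (norm_sum_le _ _).trans (Finset.sum_le_sum fun i _ => ?_)
    refine norm_inner_schMul_le_weightedNorm (by fun_prop) (fun x => ?_) _ _
    rw [hw, partialDeriv_bracketPow]
    exact abs_mul_coord_mul_bracketPow_le hη a i x
  have henergy : inner ℂ (toL2 (negLaplacian u - z • u)) (toL2 (schMul w u)) =
      ((gradNorm η a u ^ 2 : ℝ) : ℂ) + S - conj z * ((weightedNorm η a u ^ 2 : ℝ) : ℂ) := by
    rw [map_sub, inner_sub_left, map_smul, inner_smul_left,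
      inner_negLaplacian_schMul (by fun_prop), gradNorm_sq, Complex.ofReal_sum]
    simp only [hw, inner_schMul_bracketPow, hS]
  have hre := congrArg Complex.re henergy
  rw [Complex.sub_re, Complex.add_re, Complex.ofReal_re, Complex.re_mul_ofReal,
    Complex.conj_re] at hre
  have hle := Complex.abs_re_le_norm (inner ℂ (toL2 (negLaplacian u - z • u)) (toL2 (schMul w u)))
  have hSre := (Complex.abs_re_le_norm S).trans hS_le
  rw [abs_le] at hle hSre ⊢
  constructor <;> linarith

lemma sum_norm_schDeriv_sq_le (z : ℂ) (u : Sch n) : ∑ i, ‖toL2 (schDeriv i u)‖ ^ 2 ≤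
    z.re * ‖toL2 u‖ ^ 2 + ‖inner ℂ (toL2 (negLaplacian u - z • u)) (toL2 u)‖ := by
  have h := (Complex.re_le_norm (inner ℂ (toL2 (negLaplacian u - z • u)) (toL2 u)))
  nth_rw 1 [inner_negLaplacian_sub_smul] at h
  rw [Complex.sub_re, Complex.ofReal_re, Complex.re_mul_ofReal, Complex.conj_re] at h
  linarith

lemma abs_im_mul_norm_mul_norm_schDeriv_le {l : ℝ} (hl : 0 ≤ l) {z : ℂ} (hre : z.re = l ^ 2)
    (him : |z.im| ≤ 1) (u : Sch n) (i : Fin n) : |z.im| * ‖toL2 u‖ * ‖toL2 (schDeriv i u)‖ ≤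
      (l + 1) * ‖inner ℂ (toL2 (negLaplacian u - z • u)) (toL2 u)‖ := by
  have him_le := abs_im_mul_norm_sq_le z u
  have hgrad : ‖toL2 (schDeriv i u)‖ ^ 2 ≤ l ^ 2 * ‖toL2 u‖ ^ 2 +
      ‖inner ℂ (toL2 (negLaplacian u - z • u)) (toL2 u)‖ := by
    rw [← hre]
    exact (Finset.single_le_sum (f := fun i => ‖toL2 (schDeriv i u)‖ ^ 2)
      (fun _ _ => sq_nonneg _) (Finset.mem_univ i)).trans (sum_norm_schDeriv_sq_le z u)
  set q := ‖inner ℂ (toL2 (negLaplacian u - z • u)) (toL2 u)‖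
  have : 0 ≤ q := norm_nonneg _
  refine abs_le_of_sq_le_sq' ?_ (by positivity) |>.2
  calc (|z.im| * ‖toL2 u‖ * ‖toL2 (schDeriv i u)‖) ^ 2
      = (|z.im| * ‖toL2 u‖ ^ 2) * (|z.im| * ‖toL2 (schDeriv i u)‖ ^ 2) := by ring
    _ ≤ q * (|z.im| * (l ^ 2 * ‖toL2 u‖ ^ 2 + q)) := by gcongr
    _ = q * (l ^ 2 * (|z.im| * ‖toL2 u‖ ^ 2) + |z.im| * q) := by ring
    _ ≤ q * (l ^ 2 * q + 1 * q) := by gcongr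
    _ ≤ ((l + 1) * q) ^ 2 := by nlinarith [mul_nonneg hl (sq_nonneg q)]

/-! ### Derivations along vector fields -/

/-- The derivation `X·∇` along a vector field `X`. -/
def fieldDeriv (X : Fin n → Euc n → ℝ) : Module.End ℂ (Sch n) := ∑ k, schMul (X k) * schDeriv k

/-- The divergence of a vector field. -/
def divergence (X : Fin n → Euc n → ℝ) (x : Euc n) : ℝ := ∑ k, partialDeriv k (X k) x

/-- The antisymmetrized derivation `X·∇ + ½ div X`. -/
def skewFieldDeriv (X : Fin n → Euc n → ℝ) : Module.End ℂ (Sch n) :=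
  fieldDeriv X + (2⁻¹ : ℂ) • schMul (divergence X)

lemma fieldDeriv_apply (X : Fin n → Euc n → ℝ) (u : Sch n) :
    fieldDeriv X u = ∑ k, schMul (X k) (schDeriv k u) := by
  simp [fieldDeriv]

lemma skewFieldDeriv_apply (X : Fin n → Euc n → ℝ) (u : Sch n) :
    skewFieldDeriv X u = fieldDeriv X u + (2⁻¹ : ℂ) • schMul (divergence X) u := rfl

section
variable {X : Fin n → Euc n → ℝ} (hX : ∀ k, (X k).HasTemperateGrowth)
include hX

lemma divergence_hasTemperateGrowth : (divergence X).HasTemperateGrowth :=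
  .sum fun k _ => partialDeriv_hasTemperateGrowth (hX k) k

lemma sum_schMul_partialDeriv (u : Sch n) :
    ∑ k, schMul (partialDeriv k (X k)) u = schMul (divergence X) u := by
  ext x
  rw [sum_apply, schMul_apply (divergence_hasTemperateGrowth hX), divergence, Complex.ofReal_sum,
    Finset.sum_mul]
  exact Finset.sum_congr rfl fun k _ =>
    schMul_apply (partialDeriv_hasTemperateGrowth (hX k) k) u x

lemma schDeriv_fieldDeriv (i : Fin n) (u : Sch n) : schDeriv i (fieldDeriv X u) =
    fieldDeriv X (schDeriv i u) + ∑ k, schMul (partialDeriv i (X k)) (schDeriv k u) := by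
  simp only [fieldDeriv_apply, map_sum, schDeriv_schMul (hX _), schDeriv_comm i,
    Finset.sum_add_distrib]

lemma inner_skewFieldDeriv (u v : Sch n) :
    inner ℂ (toL2 (skewFieldDeriv X u)) (toL2 v) =
      -inner ℂ (toL2 u) (toL2 (skewFieldDeriv X v)) := by
  have hk (k : Fin n) : inner ℂ (toL2 (schMul (X k) (schDeriv k u))) (toL2 v) =
      -inner ℂ (toL2 u) (toL2 (schMul (X k) (schDeriv k v))) -
        inner ℂ (toL2 u) (toL2 (schMul (partialDeriv k (X k)) v)) := by
    rw [inner_schMul (hX k), inner_schDeriv, schDeriv_schMul (hX k), map_add, inner_add_right]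
    ring
  have hfield : inner ℂ (toL2 (fieldDeriv X u)) (toL2 v) =
      -inner ℂ (toL2 u) (toL2 (fieldDeriv X v)) -
        inner ℂ (toL2 u) (toL2 (schMul (divergence X) v)) := by
    rw [← sum_schMul_partialDeriv hX, fieldDeriv_apply, fieldDeriv_apply]
    simp only [map_sum, sum_inner, inner_sum, hk, Finset.sum_sub_distrib, Finset.sum_neg_distrib]
  rw [skewFieldDeriv_apply, skewFieldDeriv_apply, map_add, map_add, inner_add_left,
    inner_add_right, hfield, map_smul, map_smul, inner_smul_left, inner_smul_right,
    inner_schMul (divergence_hasTemperateGrowth hX), map_inv₀, map_ofNat]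
  ring

lemma re_inner_skewFieldDeriv (u : Sch n) :
    (inner ℂ (toL2 u) (toL2 (skewFieldDeriv X u))).re = 0 := by
  have h := congrArg Complex.re (inner_skewFieldDeriv hX u u)
  rw [← inner_conj_symm, Complex.conj_re, Complex.neg_re] at h
  linarith

lemma schDeriv_skewFieldDeriv (i : Fin n) (u : Sch n) : schDeriv i (skewFieldDeriv X u) =
    skewFieldDeriv X (schDeriv i u) + ∑ k, schMul (partialDeriv i (X k)) (schDeriv k u) +
      (2⁻¹ : ℂ) • schMul (partialDeriv i (divergence X)) u := by
  rw [skewFieldDeriv_apply, skewFieldDeriv_apply, map_add, schDeriv_fieldDeriv hX, map_smul,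
    schDeriv_schMul (divergence_hasTemperateGrowth hX), smul_add]
  abel

-- Only the commutator of `X·∇ + ½ div X` with the gradient survives, by antisymmetry.
lemma re_inner_negLaplacian_skewFieldDeriv (u : Sch n) :
    (inner ℂ (toL2 (negLaplacian u)) (toL2 (skewFieldDeriv X u))).re =
      (∑ i, ∑ k, inner ℂ (toL2 (schDeriv i u))
        (toL2 (schMul (partialDeriv i (X k)) (schDeriv k u)))).re +
      (∑ i, 2⁻¹ * inner ℂ (toL2 (schDeriv i u))
        (toL2 (schMul (partialDeriv i (divergence X)) u))).re := by
  rw [inner_negLaplacian, Complex.re_sum, Complex.re_sum, Complex.re_sum, ← Finset.sum_add_distrib]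
  refine Finset.sum_congr rfl fun i _ => ?_
  rw [schDeriv_skewFieldDeriv hX, map_add, map_add, inner_add_right, inner_add_right,
    Complex.add_re, Complex.add_re, re_inner_skewFieldDeriv hX, map_sum, inner_sum, zero_add,
    map_smul, inner_smul_right]

end

/-! ### The Morawetz vector field -/

/-- The radial profile `h = ⟨ηx⟩^{-1} - ½⟨ηx⟩^{-1-2ε}` of the Morawetz vector field `x ↦ h(x) x`. -/
def morawetzProfile (η ε : ℝ) (x : Euc n) : ℝ :=
  bracketPow η (-1 / 2) x - 1 / 2 * bracketPow η (-1 / 2 - ε) x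

/-- The function `g` with `∂ᵢh = xᵢ g`, where `h` is the Morawetz profile. -/
def morawetzSlope (η ε : ℝ) (x : Euc n) : ℝ :=
  η ^ 2 * (-bracketPow η (-3 / 2) x + (1 / 2 + ε) * bracketPow η (-3 / 2 - ε) x)

/-- The Morawetz vector field `x ↦ h(x) x`. Its Jacobian is positive definite with a lower bound
decaying only like `⟨ηx⟩^{-1-2ε}`, while the field itself stays bounded. -/
def morawetzField (η ε : ℝ) (k : Fin n) (x : Euc n) : ℝ := x k * morawetzProfile η ε x

@[fun_prop]
lemma morawetzProfile_hasTemperateGrowth (η ε : ℝ) :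
    (morawetzProfile η ε : Euc n → ℝ).HasTemperateGrowth := by
  unfold morawetzProfile; fun_prop

lemma morawetzField_hasTemperateGrowth (η ε : ℝ) (k : Fin n) :
    (morawetzField η ε k).HasTemperateGrowth := by
  unfold morawetzField; fun_prop

lemma partialDeriv_mul {φ ψ : Euc n → ℝ} (hφ : Differentiable ℝ φ) (hψ : Differentiable ℝ ψ)
    (i : Fin n) (x : Euc n) : partialDeriv i (fun x => φ x * ψ x) x =
      φ x * partialDeriv i ψ x + ψ x * partialDeriv i φ x := by
  rw [partialDeriv, fderiv_fun_mul (hφ x) (hψ x)]; rfl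

lemma partialDeriv_sum_const_mul_bracketPow {ι : Type*} (s : Finset ι) (c r : ι → ℝ) (η : ℝ)
    (i : Fin n) (x : Euc n) :
    partialDeriv i (fun x => ∑ j ∈ s, c j * bracketPow η (r j) x) x =
      2 * η ^ 2 * x i * ∑ j ∈ s, c j * r j * bracketPow η (r j - 1) x := by
  have h : HasFDerivAt (fun x : Euc n => ∑ j ∈ s, c j * bracketPow η (r j) x) _ x :=
    .fun_sum fun j _ => (hasFDerivAt_bracketPow η (r j) x).differentiableAt.hasFDerivAt.const_mul _
  rw [partialDeriv, h.fderiv, _root_.sum_apply, Finset.mul_sum]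
  refine Finset.sum_congr rfl fun j _ => ?_
  rw [smul_apply, ← partialDeriv, partialDeriv_bracketPow, smul_eq_mul]
  ring

lemma partialDeriv_morawetzProfile (η ε : ℝ) (i : Fin n) (x : Euc n) :
    partialDeriv i (morawetzProfile η ε) x = x i * morawetzSlope η ε x := by
  have h := partialDeriv_sum_const_mul_bracketPow Finset.univ ![1, -(1 / 2)] ![-1 / 2, -1 / 2 - ε]
    η i x
  simp only [Fin.sum_univ_two, Matrix.cons_val_zero, Matrix.cons_val_one, one_mul, neg_mul,
    ← sub_eq_add_neg] at h
  refine h.trans ?_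
  rw [morawetzSlope, show (-1 / 2 - 1 : ℝ) = -3 / 2 by norm_num,
    show (-1 / 2 - ε - 1 : ℝ) = -3 / 2 - ε by ring]
  ring

lemma partialDeriv_morawetzField (η ε : ℝ) (i k : Fin n) (x : Euc n) :
    partialDeriv i (morawetzField η ε k) x =
      (if i = k then morawetzProfile η ε x else 0) + x i * x k * morawetzSlope η ε x := by
  have hdiff {φ : Euc n → ℝ} (hφ : φ.HasTemperateGrowth) : Differentiable ℝ φ :=
    hφ.1.differentiable (by simp)
  refine (partialDeriv_mul (hdiff (coord_hasTemperateGrowth k))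
    (hdiff (morawetzProfile_hasTemperateGrowth η ε)) i x).trans ?_
  rw [partialDeriv_coord, partialDeriv_morawetzProfile]
  split_ifs <;> ring

lemma sq_mul_norm_sq_mul_bracketPow (η r : ℝ) (x : Euc n) :
    η ^ 2 * ‖x‖ ^ 2 * bracketPow η r x = bracketPow η (r + 1) x - bracketPow η r x := by
  rw [← bracketPow_mul, bracketPow_one]; ring

lemma norm_sq_mul_morawetzSlope (η ε : ℝ) (x : Euc n) : ‖x‖ ^ 2 * morawetzSlope η ε x =
    -(bracketPow η (-1 / 2) x - bracketPow η (-3 / 2) x) +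
      (1 / 2 + ε) * (bracketPow η (-1 / 2 - ε) x - bracketPow η (-3 / 2 - ε) x) := by
  have h₁ := sq_mul_norm_sq_mul_bracketPow η (-3 / 2) x
  have h₂ := sq_mul_norm_sq_mul_bracketPow η (-3 / 2 - ε) x
  rw [show (-3 / 2 + 1 : ℝ) = -1 / 2 by norm_num] at h₁
  rw [show (-3 / 2 - ε + 1 : ℝ) = -1 / 2 - ε by ring] at h₂
  rw [morawetzSlope]
  linear_combination -h₁ + (1 / 2 + ε) * h₂

lemma divergence_morawetzField (η ε : ℝ) (x : Euc n) : divergence (morawetzField η ε) x =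
    (n - 1) * bracketPow η (-1 / 2) x + (1 / 2 + ε - n / 2) * bracketPow η (-1 / 2 - ε) x +
      1 * bracketPow η (-3 / 2) x + -(1 / 2 + ε) * bracketPow η (-3 / 2 - ε) x := by
  have hsum : divergence (morawetzField η ε) x =
      n * morawetzProfile η ε x + ‖x‖ ^ 2 * morawetzSlope η ε x := by
    rw [EuclideanSpace.real_norm_sq_eq, Finset.sum_mul]
    simp only [divergence, partialDeriv_morawetzField, if_true, Finset.sum_add_distrib,
      Finset.sum_const, Finset.card_univ, Fintype.card_fin, nsmul_eq_mul, sq]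
  rw [hsum, norm_sq_mul_morawetzSlope, morawetzProfile]
  ring

lemma partialDeriv_divergence_morawetzField (η ε : ℝ) (i : Fin n) (x : Euc n) :
    partialDeriv i (divergence (morawetzField η ε)) x =
      η ^ 2 * x i * (-(n - 1) * bracketPow η (-3 / 2) x +
        (1 / 2 + ε - n / 2) * (-1 - 2 * ε) * bracketPow η (-3 / 2 - ε) x +
        -3 * bracketPow η (-5 / 2) x +
        (1 / 2 + ε) * (3 + 2 * ε) * bracketPow η (-5 / 2 - ε) x) := by
  have h := partialDeriv_sum_const_mul_bracketPow Finset.univ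
    ![(n : ℝ) - 1, 1 / 2 + ε - n / 2, 1, -(1 / 2 + ε)]
    ![-1 / 2, -1 / 2 - ε, -3 / 2, -3 / 2 - ε] η i x
  rw [Fin.sum_univ_four] at h
  simp only [Fin.sum_univ_four] at h
  rw [funext (divergence_morawetzField η ε)]
  refine h.trans ?_
  simp only [Matrix.cons_val]
  rw [show (-1 / 2 - 1 : ℝ) = -3 / 2 by norm_num, show (-1 / 2 - ε - 1 : ℝ) = -3 / 2 - ε by ring,
    show (-3 / 2 - 1 : ℝ) = -5 / 2 by norm_num, show (-3 / 2 - ε - 1 : ℝ) = -5 / 2 - ε by ring]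
  ring

/-! ### Positivity of the Jacobian -/

lemma morawetzSlope_nonpos {ε : ℝ} (hε : 0 ≤ ε) (hε' : ε ≤ 1 / 2) (η : ℝ) (x : Euc n) :
    morawetzSlope η ε x ≤ 0 := by
  have hmono : bracketPow η (-3 / 2 - ε) x ≤ bracketPow η (-3 / 2) x :=
    bracketPow_mono (by linarith) x
  have hpos := bracketPow_pos η (-3 / 2 - ε) x
  exact mul_nonpos_of_nonneg_of_nonpos (sq_nonneg _) (by nlinarith)

lemma le_morawetzProfile_add {ε : ℝ} (hε : 0 ≤ ε) (hε' : ε ≤ 1 / 2) (η : ℝ) (x : Euc n) :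
    ε * bracketPow η (-1 / 2 - ε) x ≤ morawetzProfile η ε x + ‖x‖ ^ 2 * morawetzSlope η ε x := by
  have hmono : bracketPow η (-3 / 2 - ε) x ≤ bracketPow η (-3 / 2) x :=
    bracketPow_mono (by linarith) x
  have hpos := bracketPow_pos η (-3 / 2 - ε) x
  rw [norm_sq_mul_morawetzSlope, morawetzProfile]
  nlinarith

lemma norm_sum_mul_sq_eq (t : Fin n → ℝ) (a : Fin n → ℂ) :
    ‖∑ k, (t k : ℂ) * a k‖ ^ 2 = ∑ i, ∑ k, t i * t k * (conj (a i) * a k).re := by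
  have hre : ‖∑ k, (t k : ℂ) * a k‖ ^ 2 =
      (conj (∑ k, (t k : ℂ) * a k) * ∑ k, (t k : ℂ) * a k).re := by
    rw [mul_comm, Complex.mul_conj, Complex.ofReal_re, Complex.normSq_eq_norm_sq]
  rw [hre, map_sum, Finset.sum_mul_sum, Complex.re_sum]
  refine Finset.sum_congr rfl fun i _ => ?_
  rw [Complex.re_sum]
  refine Finset.sum_congr rfl fun k _ => ?_
  rw [map_mul, Complex.conj_ofReal, mul_mul_mul_comm, ← Complex.ofReal_mul, Complex.re_ofReal_mul]

lemma sum_partialDeriv_morawetzField_mul (η ε : ℝ) (x : Euc n) (a : Fin n → ℂ) :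
    ∑ i, ∑ k, partialDeriv i (morawetzField η ε k) x * (conj (a i) * a k).re =
      morawetzProfile η ε x * ∑ i, ‖a i‖ ^ 2 +
        morawetzSlope η ε x * ‖∑ k, (x k : ℂ) * a k‖ ^ 2 := by
  have hdiag (i : Fin n) : (conj (a i) * a i).re = ‖a i‖ ^ 2 := by
    rw [mul_comm, Complex.mul_conj, Complex.ofReal_re, Complex.normSq_eq_norm_sq]
  simp only [partialDeriv_morawetzField, add_mul, Finset.sum_add_distrib, ite_mul, zero_mul,
    Finset.sum_ite_eq, Finset.mem_univ, if_true, hdiag, norm_sum_mul_sq_eq, Finset.mul_sum]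
  congr 1
  exact Finset.sum_congr rfl fun i _ => Finset.sum_congr rfl fun k _ => by ring

lemma norm_sum_coord_mul_sq_le (x : Euc n) (a : Fin n → ℂ) :
    ‖∑ k, (x k : ℂ) * a k‖ ^ 2 ≤ ‖x‖ ^ 2 * ∑ i, ‖a i‖ ^ 2 := by
  calc ‖∑ k, (x k : ℂ) * a k‖ ^ 2 ≤ (∑ k, |x k| * ‖a k‖) ^ 2 := by
        gcongr
        refine (norm_sum_le _ _).trans_eq ?_
        simp
    _ ≤ (∑ k, |x k| ^ 2) * ∑ i, ‖a i‖ ^ 2 := Finset.sum_mul_sq_le_sq_mul_sq _ _ _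
    _ = ‖x‖ ^ 2 * ∑ i, ‖a i‖ ^ 2 := by simp only [EuclideanSpace.real_norm_sq_eq, sq_abs]

lemma le_sum_partialDeriv_morawetzField_mul {ε : ℝ} (hε : 0 ≤ ε) (hε' : ε ≤ 1 / 2) (η : ℝ)
    (x : Euc n) (a : Fin n → ℂ) : ε * ∑ i, bracketPow η (-1 / 2 - ε) x * ‖a i‖ ^ 2 ≤
      ∑ i, ∑ k, partialDeriv i (morawetzField η ε k) x * (conj (a i) * a k).re := by
  rw [sum_partialDeriv_morawetzField_mul, ← Finset.mul_sum]
  have hsum : 0 ≤ ∑ i, ‖a i‖ ^ 2 := by positivity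
  nlinarith [le_morawetzProfile_add hε hε' η x, morawetzSlope_nonpos hε hε' η x,
    norm_sum_coord_mul_sq_le x a]

lemma integrable_re_conj_mul (f g : Sch n) : Integrable (fun x => (conj (f x) * g x).re) := by
  have hint : Integrable (fun x => conj (f x) * g x) := by
    refine (L2.integrable_inner (𝕜 := ℂ) (toL2 f) (toL2 g)).congr ?_
    filter_upwards [coeFn_toL2 f, coeFn_toL2 g] with x hf hg
    rw [hf, hg, RCLike.inner_apply, mul_comm]
  exact hint.re

lemma integrable_norm_sq (f : Sch n) : Integrable (fun x => ‖f x‖ ^ 2) :=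
  (SchwartzMap.memLp f 2 volume).integrable_norm_pow (by norm_num)

lemma re_inner_toL2 (f g : Sch n) :
    (inner ℂ (toL2 f) (toL2 g)).re = ∫ x, (conj (f x) * g x).re := by
  rw [L2.inner_def]
  refine (integral_re (L2.integrable_inner (𝕜 := ℂ) (toL2 f) (toL2 g))).symm.trans
    (integral_congr_ae ?_)
  filter_upwards [coeFn_toL2 f, coeFn_toL2 g] with x hf hg
  rw [hf, hg, RCLike.inner_apply, mul_comm]
  rfl

lemma le_re_sum_inner_partialDeriv_morawetzField {ε : ℝ} (hε : 0 ≤ ε) (hε' : ε ≤ 1 / 2) (η : ℝ)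
    (v : Fin n → Sch n) : ε * ∑ i, weightedNorm η (1 / 2 + ε) (v i) ^ 2 ≤
      (∑ i, ∑ k, inner ℂ (toL2 (v i))
        (toL2 (schMul (partialDeriv i (morawetzField η ε k)) (v k)))).re := by
  have hright : (∑ i, ∑ k, inner ℂ (toL2 (v i))
      (toL2 (schMul (partialDeriv i (morawetzField η ε k)) (v k)))).re = ∫ x, ∑ i, ∑ k,
        (conj (v i x) * (schMul (partialDeriv i (morawetzField η ε k)) (v k)) x).re := by
    rw [integral_finsetSum _ (fun i _ => integrable_finsetSum _ fun k _ =>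
      integrable_re_conj_mul _ _), Complex.re_sum]
    refine Finset.sum_congr rfl fun i _ => ?_
    rw [integral_finsetSum _ (fun k _ => integrable_re_conj_mul _ _), Complex.re_sum]
    exact Finset.sum_congr rfl fun k _ => re_inner_toL2 _ _
  have hleft : ε * ∑ i, weightedNorm η (1 / 2 + ε) (v i) ^ 2 =
      ∫ x, ε * ∑ i, ‖schMul (bracketPow η (-(1 / 2 + ε) / 2)) (v i) x‖ ^ 2 := by
    rw [integral_const_mul, integral_finsetSum _ (fun i _ => integrable_norm_sq _)]
    simp only [weightedNorm, norm_toL2_sq]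
  rw [hright, hleft]
  refine integral_mono ((integrable_finsetSum _ fun i _ => integrable_norm_sq _).const_mul _)
    (integrable_finsetSum _ fun i _ => integrable_finsetSum _ fun k _ =>
      integrable_re_conj_mul _ _) fun x => ?_
  refine le_trans (le_of_eq ?_) ((le_sum_partialDeriv_morawetzField_mul hε hε' η x
    fun i => v i x).trans (le_of_eq ?_))
  · refine congrArg (ε * ·) (Finset.sum_congr rfl fun i _ => ?_)
    rw [schMul_apply (by fun_prop), norm_mul, mul_pow, Complex.norm_real, norm_eq_abs, sq_abs, sq,
      bracketPow_mul]
    congr 2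
    ring
  · refine Finset.sum_congr rfl fun i _ => Finset.sum_congr rfl fun k _ => ?_
    rw [schMul_apply (partialDeriv_hasTemperateGrowth (morawetzField_hasTemperateGrowth η ε k) i),
      mul_left_comm, Complex.re_ofReal_mul]

/-! ### Bounds for the Morawetz vector field -/

lemma abs_morawetzField_le {η ε : ℝ} (hη : 0 < η) (hε : 0 ≤ ε) (k : Fin n) (x : Euc n) :
    |morawetzField η ε k x| ≤ 1 / η := by
  have hmono : bracketPow η (-1 / 2 - ε) x ≤ bracketPow η (-1 / 2) x :=
    bracketPow_mono (by linarith) x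
  have hpos := bracketPow_pos η (-1 / 2 - ε) x
  have hprofile : |morawetzProfile η ε x| ≤ bracketPow η (-1 / 2) x := by
    rw [abs_le]; simp only [morawetzProfile]; constructor <;> linarith
  rw [morawetzField, abs_mul, le_div_iff₀ hη]
  calc |x k| * |morawetzProfile η ε x| * η = (η * |x k|) * |morawetzProfile η ε x| := by ring
    _ ≤ bracketPow η (1 / 2) x * bracketPow η (-1 / 2) x := by
        gcongr
        · exact (bracketPow_pos _ _ _).le
        · exact mul_abs_coord_le η k x
    _ = 1 := bracketPow_mul_eq_one (by norm_num) x

lemma abs_sum_mul_bracketPow_le {ι : Type*} (s : Finset ι) (c r A : ι → ℝ) {ρ : ℝ}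
    (hc : ∀ j ∈ s, |c j| ≤ A j) (hr : ∀ j ∈ s, r j ≤ ρ) (η : ℝ) (x : Euc n) :
    |∑ j ∈ s, c j * bracketPow η (r j) x| ≤ (∑ j ∈ s, A j) * bracketPow η ρ x := by
  rw [Finset.sum_mul]
  refine (Finset.abs_sum_le_sum_abs _ _).trans (Finset.sum_le_sum fun j hj => ?_)
  rw [abs_mul, abs_bracketPow]
  exact mul_le_mul (hc j hj) (bracketPow_mono (hr j hj) x) (bracketPow_pos _ _ _).le
    ((abs_nonneg _).trans (hc j hj))

lemma abs_divergence_morawetzField_le {ε : ℝ} (hε : 0 ≤ ε) (hε' : ε ≤ 1 / 2) (η : ℝ)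
    (x : Euc n) : |divergence (morawetzField η ε) x| ≤ 2 * n + 10 := by
  have h := abs_sum_mul_bracketPow_le Finset.univ
    ![(n : ℝ) - 1, 1 / 2 + ε - n / 2, 1, -(1 / 2 + ε)] ![-1 / 2, -1 / 2 - ε, -3 / 2, -3 / 2 - ε]
    ![n + 1, n + 1, 1, 1] (ρ := 0)
    (by
      simp only [Finset.mem_univ, forall_true_left, Fin.forall_fin_succ,
        Matrix.cons_val_zero, Matrix.cons_val_succ]
      simp only [abs_le]
      refine ⟨⟨?_, ?_⟩, ⟨?_, ?_⟩, ⟨?_, ?_⟩, ⟨?_, ?_⟩, by simp⟩ <;> linarith)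
    (by
      simp only [Finset.mem_univ, forall_true_left, Fin.forall_fin_succ,
        Matrix.cons_val_zero, Matrix.cons_val_succ]
      refine ⟨?_, ?_, ?_, ?_, by simp⟩ <;> linarith) η x
  simp only [Fin.sum_univ_four, Matrix.cons_val, bracketPow_zero] at h
  rw [divergence_morawetzField]
  linarith

lemma abs_partialDeriv_divergence_morawetzField_le {η ε : ℝ} (hη : 0 ≤ η) (hε : 0 ≤ ε)
    (hε' : ε ≤ 1 / 2) (i : Fin n) (x : Euc n) :
    |partialDeriv i (divergence (morawetzField η ε)) x| ≤
      (2 * n + 10) * η * bracketPow η (-(1 / 2 + ε)) x := by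
  have h := abs_sum_mul_bracketPow_le Finset.univ
    ![-((n : ℝ) - 1), (1 / 2 + ε - n / 2) * (-1 - 2 * ε), -3, (1 / 2 + ε) * (3 + 2 * ε)]
    ![-3 / 2, -3 / 2 - ε, -5 / 2, -5 / 2 - ε] ![n + 1, n + 2, 3, 4] (ρ := -3 / 2)
    (by
      simp only [Finset.mem_univ, forall_true_left, Fin.forall_fin_succ,
        Matrix.cons_val_zero, Matrix.cons_val_succ]
      simp only [abs_le]
      refine ⟨⟨?_, ?_⟩, ⟨?_, ?_⟩, ⟨?_, ?_⟩, ⟨?_, ?_⟩, by simp⟩ <;> nlinarith)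
    (by
      simp only [Finset.mem_univ, forall_true_left, Fin.forall_fin_succ,
        Matrix.cons_val_zero, Matrix.cons_val_succ]
      refine ⟨?_, ?_, ?_, ?_, by simp⟩ <;> linarith) η x
  simp only [Fin.sum_univ_four, Matrix.cons_val] at h
  have hpos := (bracketPow_pos η (-3 / 2) x).le
  rw [partialDeriv_divergence_morawetzField, abs_mul, abs_mul, abs_of_nonneg (sq_nonneg η)]
  calc _ ≤ η ^ 2 * |x i| * ((n + 1 + (n + 2) + 3 + 4) * bracketPow η (-3 / 2) x) := by gcongr
    _ = (2 * n + 10) * η * ((η * |x i|) * bracketPow η (-3 / 2) x) := by ring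
    _ ≤ (2 * n + 10) * η * (bracketPow η (1 / 2) x * bracketPow η (-3 / 2) x) := by
        gcongr; exact mul_abs_coord_le η i x
    _ ≤ (2 * n + 10) * η * bracketPow η (-(1 / 2 + ε)) x := by
        rw [bracketPow_mul]
        gcongr (2 * n + 10) * η * ?_
        exact bracketPow_mono (by linarith) x

/-! ### The free weighted estimate -/

section
variable {X : Fin n → Euc n → ℝ} (hX : ∀ k, (X k).HasTemperateGrowth) {B D : ℝ}

include hX in
lemma weightedNorm_skewFieldDeriv_le (hB : ∀ k x, |X k x| ≤ B) (hD : ∀ x, |divergence X x| ≤ 2 * D)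
    (η a : ℝ) (u : Sch n) : weightedNorm η a (skewFieldDeriv X u) ≤
      B * ∑ k, weightedNorm η a (schDeriv k u) + D * weightedNorm η a u := by
  rw [skewFieldDeriv_apply, fieldDeriv_apply, Finset.mul_sum]
  refine (weightedNorm_add_le η a _ _).trans (add_le_add ?_ ?_)
  · exact (weightedNorm_sum_le η a _ _).trans (Finset.sum_le_sum fun k _ =>
      weightedNorm_schMul_le_of_le (hX k) (hB k) η a _)
  · have hdiv := weightedNorm_schMul_le_of_le (divergence_hasTemperateGrowth hX) hD η a u
    rw [weightedNorm_smul, norm_inv, Complex.norm_ofNat]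
    linarith

include hX in
lemma abs_im_mul_norm_inner_skewFieldDeriv_le (hB : ∀ k x, |X k x| ≤ B)
    (hD : ∀ x, |divergence X x| ≤ 2 * D) {l : ℝ} (hl : 0 ≤ l) {z : ℂ} (hre : z.re = l ^ 2)
    (him : |z.im| ≤ 1) (u : Sch n) :
    |z.im| * ‖inner ℂ (toL2 u) (toL2 (skewFieldDeriv X u))‖ ≤
      (n * (l + 1) * B + D) * ‖inner ℂ (toL2 (negLaplacian u - z • u)) (toL2 u)‖ := by
  set q := ‖inner ℂ (toL2 (negLaplacian u - z • u)) (toL2 u)‖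
  have hD0 : 0 ≤ D := by linarith [(abs_nonneg _).trans (hD 0)]
  have hA := weightedNorm_skewFieldDeriv_le hX hB hD 1 0 u
  simp only [weightedNorm_zero_exponent] at hA
  have hderiv : ∀ k ∈ Finset.univ, B * (|z.im| * ‖toL2 u‖ * ‖toL2 (schDeriv k u)‖) ≤
      B * ((l + 1) * q) := fun k _ =>
    mul_le_mul_of_nonneg_left (abs_im_mul_norm_mul_norm_schDeriv_le hl hre him u k)
      ((abs_nonneg _).trans (hB k 0))
  calc |z.im| * ‖inner ℂ (toL2 u) (toL2 (skewFieldDeriv X u))‖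
      ≤ |z.im| * (‖toL2 u‖ * (B * ∑ k, ‖toL2 (schDeriv k u)‖ + D * ‖toL2 u‖)) := by
        gcongr
        exact (norm_inner_le_norm _ _).trans (by gcongr)
    _ = ∑ k, B * (|z.im| * ‖toL2 u‖ * ‖toL2 (schDeriv k u)‖) + D * (|z.im| * ‖toL2 u‖ ^ 2) := by
        simp only [← Finset.mul_sum]
        ring
    _ ≤ ∑ k : Fin n, B * ((l + 1) * q) + D * q := add_le_add (Finset.sum_le_sum hderiv)
        (mul_le_mul_of_nonneg_left (abs_im_mul_norm_sq_le z u) hD0)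
    _ = (n * (l + 1) * B + D) * q := by
        rw [Finset.sum_const, Finset.card_univ, Fintype.card_fin, nsmul_eq_mul]
        ring

include hX in
lemma re_inner_negLaplacian_skewFieldDeriv_le (z : ℂ) (u : Sch n) :
    (inner ℂ (toL2 (negLaplacian u)) (toL2 (skewFieldDeriv X u))).re ≤
      ‖inner ℂ (toL2 (negLaplacian u - z • u)) (toL2 (skewFieldDeriv X u))‖ +
      |z.im| * ‖inner ℂ (toL2 u) (toL2 (skewFieldDeriv X u))‖ := by
  have hsplit : inner ℂ (toL2 (negLaplacian u)) (toL2 (skewFieldDeriv X u)) =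
      inner ℂ (toL2 (negLaplacian u - z • u)) (toL2 (skewFieldDeriv X u)) +
        conj z * inner ℂ (toL2 u) (toL2 (skewFieldDeriv X u)) := by
    rw [map_sub, inner_sub_left, map_smul, inner_smul_left]
    ring
  rw [hsplit, Complex.add_re]
  refine add_le_add (Complex.re_le_norm _) ?_
  rw [Complex.mul_re, re_inner_skewFieldDeriv hX, mul_zero, zero_sub, Complex.conj_im, neg_mul,
    neg_neg]
  refine (le_abs_self _).trans ?_
  rw [abs_mul]
  gcongr
  exact Complex.abs_im_le_norm _

end

lemma abs_re_sum_inner_partialDeriv_divergence_morawetzField_le {η ε : ℝ} (hη : 0 ≤ η)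
    (hε : 0 ≤ ε) (hε' : ε ≤ 1 / 2) (u : Sch n) :
    |(∑ i, 2⁻¹ * inner ℂ (toL2 (schDeriv i u))
      (toL2 (schMul (partialDeriv i (divergence (morawetzField η ε))) u))).re| ≤
      (n + 5) * η * (n * gradNorm η (1 / 2 + ε) u) * weightedNorm η (1 / 2 + ε) u := by
  have hgrowth := divergence_hasTemperateGrowth (morawetzField_hasTemperateGrowth (n := n) η ε)
  refine (Complex.abs_re_le_norm _).trans ((norm_sum_le _ _).trans ?_)
  calc _ ≤ ∑ i, (n + 5) * η * (weightedNorm η (1 / 2 + ε) (schDeriv i u) *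
        weightedNorm η (1 / 2 + ε) u) := Finset.sum_le_sum fun i _ => by
        have hi := norm_inner_schMul_le_weightedNorm (partialDeriv_hasTemperateGrowth hgrowth i)
          (abs_partialDeriv_divergence_morawetzField_le hη hε hε' i) (schDeriv i u) u
        rw [norm_mul, norm_inv, Complex.norm_ofNat]
        linarith
    _ = (n + 5) * η * (∑ i, weightedNorm η (1 / 2 + ε) (schDeriv i u)) *
        weightedNorm η (1 / 2 + ε) u := by
        rw [← Finset.mul_sum, ← Finset.sum_mul]
        ring
    _ ≤ _ := by
        gcongr
        · exact weightedNorm_nonneg _ _ _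
        · exact sum_weightedNorm_schDeriv_le _ _ _

lemma morawetz_inequality {η ε l : ℝ} (hη : 0 < η) (hε : 0 ≤ ε) (hε' : ε ≤ 1 / 2) (hl : 0 ≤ l)
    {z : ℂ} (hre : z.re = l ^ 2) (him : |z.im| ≤ 1) {u : Sch n} {P Q F : ℝ}
    (hP : gradNorm η (1 / 2 + ε) u = P) (hQ : weightedNorm η (1 / 2 + ε) u = Q)
    (hF : weightedNorm η (-(1 / 2 + ε)) (negLaplacian u - z • u) = F) :
    ε * P ^ 2 ≤ (n + 5) * η * (n * P) * Q + F * (n * P / η + (n + 5) * Q) +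
      (n * (l + 1) / η + (n + 5)) * (F * Q) := by
  have hX := morawetzField_hasTemperateGrowth (n := n) η ε
  have hD : ∀ x : Euc n, |divergence (morawetzField η ε) x| ≤ 2 * (n + 5) := fun x =>
    (abs_divergence_morawetzField_le hε hε' η x).trans (by linarith)
  have hF0 : 0 ≤ F := hF ▸ weightedNorm_nonneg _ _ _
  have hlower := le_re_sum_inner_partialDeriv_morawetzField hε hε' η fun i => schDeriv i u
  have hcomm := re_inner_negLaplacian_skewFieldDeriv hX u
  have herr := (abs_le.1
    (abs_re_sum_inner_partialDeriv_divergence_morawetzField_le hη.le hε hε' u)).1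
  have hupper := re_inner_negLaplacian_skewFieldDeriv_le hX z u
  have hsource : ‖inner ℂ (toL2 (negLaplacian u - z • u))
      (toL2 (skewFieldDeriv (morawetzField η ε) u))‖ ≤ F * (n * P / η + (n + 5) * Q) := by
    refine (norm_inner_le_weightedNorm η (1 / 2 + ε) _ _).trans ?_
    rw [hF]
    gcongr
    refine (weightedNorm_skewFieldDeriv_le hX (abs_morawetzField_le hη hε) hD _ _ u).trans ?_
    rw [hQ]
    gcongr
    calc _ ≤ 1 / η * (n * P) := by gcongr; exact hP ▸ sum_weightedNorm_schDeriv_le _ _ _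
      _ = n * P / η := by ring
  have habsorption : |z.im| * ‖inner ℂ (toL2 u) (toL2 (skewFieldDeriv (morawetzField η ε) u))‖ ≤
      (n * (l + 1) / η + (n + 5)) * (F * Q) := by
    refine (abs_im_mul_norm_inner_skewFieldDeriv_le hX (abs_morawetzField_le hη hε) hD hl hre him
      u).trans ?_
    rw [mul_one_div, ← hF, ← hQ]
    gcongr
    exact norm_inner_le_weightedNorm η (1 / 2 + ε) _ _
  rw [← gradNorm_sq, hP] at hlower
  rw [hP, hQ] at herr
  linarith

lemma weighted_energy_inequality {η a : ℝ} (hη : 0 ≤ η) (ha : 0 ≤ a) (ha' : a ≤ 1) {z : ℂ}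
    {u : Sch n} {P Q F : ℝ} (hP : gradNorm η a u = P) (hQ : weightedNorm η a u = Q)
    (hF : weightedNorm η (-a) (negLaplacian u - z • u) = F) :
    z.re * Q ^ 2 ≤ P ^ 2 + 2 * η * (n * P) * Q + F * Q := by
  have hQ0 : 0 ≤ Q := hQ ▸ weightedNorm_nonneg _ _ _
  have henergy := (abs_le.1 (abs_gradNorm_sq_sub_le hη a z u)).1
  have hsource : ‖inner ℂ (toL2 (negLaplacian u - z • u)) (toL2 (schMul (bracketPow η (-a)) u))‖
      ≤ F * Q := by
    refine (norm_inner_le_weightedNorm η a _ _).trans ?_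
    rw [hF, ← hQ]
    gcongr
    · exact hF ▸ weightedNorm_nonneg _ _ _
    · simpa only [one_mul] using weightedNorm_schMul_le_of_le (C := 1)
        (bracketPow_hasTemperateGrowth η (-a)) (fun x => by
          rw [abs_bracketPow]; exact bracketPow_le_one (by linarith) x) η a u
  have hgrad : 2 * |a| * η * (∑ i, weightedNorm η a (schDeriv i u)) * Q ≤
      2 * 1 * η * (n * P) * Q := by
    rw [abs_of_nonneg ha]
    exact mul_le_mul_of_nonneg_right (mul_le_mul (by gcongr)
      (hP ▸ sum_weightedNorm_schDeriv_le η a u)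
      (Finset.sum_nonneg fun i _ => weightedNorm_nonneg _ _ _) (by positivity)) hQ0
  rw [hP, hQ] at henergy
  linarith

/-- If `η` is small, the cross terms `η P Q` in both inequalities are dominated by `P² + (lQ)²`;
what remains is a quadratic form in `P + lQ` bounded by `F (P + lQ)`. -/
lemma mul_le_of_morawetz_of_energy {ε l₀ l K N η P Q F : ℝ} (hε : 0 < ε) (hε' : ε ≤ 1)
    (hl₀ : 0 < l₀) (hl : l₀ ≤ l) (hK : 0 ≤ K) (hN : 0 ≤ N) (hη : 0 < η)
    (hsmall : (K + 1) * N * η ≤ ε / 4 * l₀) (hP : 0 ≤ P) (hQ : 0 ≤ Q) (hF : 0 ≤ F)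
    (hmorawetz : ε * P ^ 2 ≤
      K * η * (N * P) * Q + F * (N * P / η + K * Q) + (N * (l + 1) / η + K) * (F * Q))
    (henergy : l ^ 2 * Q ^ 2 ≤ P ^ 2 + 2 * η * (N * P) * Q + F * Q) :
    l * Q ≤ 8 * (N / η + (2 * K + 1 + N / η) / l₀) / ε * F := by
  set M := N / η + (2 * K + 1 + N / η) / l₀ with hM
  have hlQ : 0 ≤ l * Q := mul_nonneg (hl₀.le.trans hl) hQ
  have hcross : (K + 1) * N * η * (P * Q) ≤ ε / 4 * (P * (l * Q)) := by
    calc _ ≤ ε / 4 * l₀ * (P * Q) := by gcongr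
      _ ≤ ε / 4 * l * (P * Q) := by gcongr
      _ = _ := by ring
  have hsource : F * (N * P / η + K * Q) + (N * (l + 1) / η + K) * (F * Q) + F * Q ≤
      M * F * (P + l * Q) := by
    have hQl : Q ≤ l * Q / l₀ := by
      rw [le_div_iff₀ hl₀, mul_comm]
      gcongr
    calc _ = F * (N / η * (P + l * Q) + (2 * K + 1 + N / η) * Q) := by ring
      _ ≤ F * (N / η * (P + l * Q) + (2 * K + 1 + N / η) * ((P + l * Q) / l₀)) := by
          gcongr
          exact hQl.trans (by gcongr; linarith)
      _ = M * F * (P + l * Q) := by rw [hM]; ring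
  have hquad : ε / 8 * (P + l * Q) ^ 2 ≤ M * F * (P + l * Q) := by
    have hcross' : ε * (η * (N * P) * Q) ≤ 1 * (η * (N * P) * Q) := by gcongr
    have hFQ : ε * (F * Q) ≤ 1 * (F * Q) := by gcongr
    nlinarith [mul_le_mul_of_nonneg_left henergy hε.le, mul_nonneg hε.le (sq_nonneg (P - l * Q)),
      mul_nonneg hF hQ]
  have hlinear : ε / 8 * (P + l * Q) ≤ M * F := by
    rcases (add_nonneg hP hlQ).eq_or_lt with h | h
    · rw [← h, mul_zero]
      positivity
    · exact le_of_mul_le_mul_right (by linarith [sq (P + l * Q)]) h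
  rw [div_mul_eq_mul_div, le_div_iff₀ hε]
  nlinarith

theorem exists_mul_weightedNorm_le {ε l₀ : ℝ} (hε : 0 < ε) (hε' : ε ≤ 1 / 2) (hl₀ : 0 < l₀) :
    ∃ C > 0, ∀ (l : ℝ) (z : ℂ), l₀ ≤ l → z.re = l ^ 2 → |z.im| ≤ 1 → ∀ u : Sch n,
      l * weightedNorm 1 (1 / 2 + ε) u ≤
        C * weightedNorm 1 (-(1 / 2 + ε)) (negLaplacian u - z • u) := by
  obtain ⟨η', hη', hsmall'⟩ := exists_pos_mul_lt (by positivity : 0 < ε / 4 * l₀)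
    (((n : ℝ) + 5 + 1) * n)
  set η := min η' 1
  have hη : 0 < η := lt_min hη' one_pos
  have hη1 : η ≤ 1 := min_le_right _ _
  have hsmall : ((n : ℝ) + 5 + 1) * n * η ≤ ε / 4 * l₀ := by
    refine le_trans ?_ hsmall'.le
    gcongr
    exact min_le_left _ _
  set C := 8 * (n / η + (2 * (n + 5) + 1 + n / η) / l₀) / ε
  refine ⟨C, by positivity, fun l z hl hre him u => ?_⟩
  have hl0 : 0 ≤ l := hl₀.le.trans hl
  have henergy := weighted_energy_inequality (z := z) (u := u) hη.le
    (by positivity : 0 ≤ 1 / 2 + ε) (by linarith) rfl rfl rfl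
  rw [hre] at henergy
  calc l * weightedNorm 1 (1 / 2 + ε) u ≤ l * weightedNorm η (1 / 2 + ε) u := by
        gcongr
        exact weightedNorm_le_of_le_scale hη.le hη1 (by positivity) u
    _ ≤ C * weightedNorm η (-(1 / 2 + ε)) (negLaplacian u - z • u) :=
        mul_le_of_morawetz_of_energy hε (by linarith) hl₀ hl (by positivity) (by positivity) hη
          hsmall (gradNorm_nonneg _ _ _) (weightedNorm_nonneg _ _ _) (weightedNorm_nonneg _ _ _)
          (morawetz_inequality hη hε.le hε' hl0 hre him rfl rfl rfl) henergy
    _ ≤ C * weightedNorm 1 (-(1 / 2 + ε)) (negLaplacian u - z • u) := by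
        gcongr
        exact weightedNorm_neg_le_of_le_scale hη.le hη1 (by positivity) _

/-! ### Dilations and powers of the free resolvent -/

/-- The antisymmetric generator of dilations `x·∇ + n/2`. -/
def dilationGen : Module.End ℂ (Sch n) := skewFieldDeriv fun k x => x k

lemma divergence_coord : divergence (fun (k : Fin n) x => x k) = fun _ => (n : ℝ) := by
  ext x
  simp [divergence, partialDeriv_coord]

lemma schMul_ite (p : Prop) [Decidable p] (u : Sch n) :
    schMul (fun _ => if p then 1 else 0) u = if p then u else 0 := by
  split_ifs with h
  · exact schMul_one u
  · ext x
    simp [schMul_apply]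

lemma schDeriv_dilationGen (i : Fin n) (u : Sch n) :
    schDeriv i (dilationGen u) = dilationGen (schDeriv i u) + schDeriv i u := by
  have hdiv : schMul (partialDeriv i (divergence fun (k : Fin n) x => x k)) u = 0 := by
    have hconst : partialDeriv i (fun _ : Euc n => (n : ℝ)) = fun _ => 0 := by
      ext x
      simp [partialDeriv]
    rw [divergence_coord, hconst]
    ext x
    simp [schMul_apply]
  rw [dilationGen, schDeriv_skewFieldDeriv coord_hasTemperateGrowth, hdiv, smul_zero, add_zero]
  simp only [partialDeriv_coord, schMul_ite, Finset.sum_ite_eq, Finset.mem_univ, if_true]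

lemma negLaplacian_dilationGen (u : Sch n) :
    negLaplacian (dilationGen u) = dilationGen (negLaplacian u) + 2 • negLaplacian u := by
  rw [negLaplacian_eq, negLaplacian_eq]
  simp only [schDeriv_dilationGen, map_add, Finset.sum_add_distrib, map_neg, map_sum]
  rw [smul_neg, two_smul]
  abel

lemma inner_dilationGen (u v : Sch n) :
    inner ℂ (toL2 (dilationGen u)) (toL2 v) = -inner ℂ (toL2 u) (toL2 (dilationGen v)) :=
  inner_skewFieldDeriv coord_hasTemperateGrowth u v

lemma dilationGen_schFreeResolvent {z : ℂ} (hz : z.im ≠ 0) (g : Sch n) :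
    dilationGen (schFreeResolvent z g) = schFreeResolvent z (dilationGen g) +
      2 • (schFreeResolvent z g + z • schFreeResolvent z (schFreeResolvent z g)) := by
  have hΔ : negLaplacian (schFreeResolvent z g) = g + z • schFreeResolvent z g :=
    sub_eq_iff_eq_add.1 (negLaplacian_sub_smul_schFreeResolvent hz g)
  have happlied : negLaplacian (dilationGen (schFreeResolvent z g)) -
      z • dilationGen (schFreeResolvent z g) =
        dilationGen g + 2 • (g + z • schFreeResolvent z g) := by
    rw [negLaplacian_dilationGen, hΔ, map_add, map_smul]
    abel
  have h := schFreeResolvent_negLaplacian_sub_smul hz (dilationGen (schFreeResolvent z g))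
  rw [happlied] at h
  rw [← h]
  simp only [map_add, map_nsmul, map_smul]

lemma dilationGen_mul_schFreeResolvent_pow {z : ℂ} (hz : z.im ≠ 0) (j : ℕ) :
    (dilationGen : Module.End ℂ (Sch n)) * schFreeResolvent z ^ j =
      schFreeResolvent z ^ j * dilationGen +
        (2 * j) • (schFreeResolvent z ^ j + z • schFreeResolvent z ^ (j + 1)) := by
  have hone : (dilationGen : Module.End ℂ (Sch n)) * schFreeResolvent z =
      schFreeResolvent z * dilationGen +
        2 • (schFreeResolvent z + z • (schFreeResolvent z * schFreeResolvent z)) :=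
    LinearMap.ext fun g => dilationGen_schFreeResolvent hz g
  induction j with
  | zero => simp
  | succ j ih =>
    have hpow : schFreeResolvent (n := n) z ^ j * (schFreeResolvent z * schFreeResolvent z) =
        schFreeResolvent z ^ (j + 1) * schFreeResolvent z := by
      rw [pow_succ, mul_assoc]
    rw [pow_succ, ← mul_assoc, ih, add_mul, mul_assoc, hone, mul_add, ← mul_assoc, smul_mul_assoc,
      add_mul, mul_smul_comm, mul_add, smul_mul_assoc, mul_smul_comm, hpow, ← pow_succ, ← pow_succ,
      add_assoc, ← add_smul]
    congr 2
    ring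

lemma inner_schFreeResolvent_pow {z : ℂ} (hz : z.im ≠ 0) (j : ℕ) (f g : Sch n) :
    inner ℂ (toL2 ((schFreeResolvent z ^ j) f)) (toL2 g) =
      inner ℂ (toL2 f) (toL2 ((schFreeResolvent (conj z) ^ j) g)) := by
  induction j generalizing f g with
  | zero => rfl
  | succ j ih =>
    rw [pow_succ', Module.End.mul_apply, inner_schFreeResolvent hz, ih, pow_succ,
      Module.End.mul_apply]

lemma negLaplacian_sub_smul_schFreeResolvent_pow_succ {z : ℂ} (hz : z.im ≠ 0) (j : ℕ)
    (f : Sch n) :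
    negLaplacian ((schFreeResolvent z ^ (j + 1)) f) - z • (schFreeResolvent z ^ (j + 1)) f =
      (schFreeResolvent z ^ j) f := by
  rw [pow_succ', Module.End.mul_apply]
  exact negLaplacian_sub_smul_schFreeResolvent hz _

lemma norm_mul_weightedNorm_schFreeResolvent_pow_le {z : ℂ} (hz : z.im ≠ 0) {j : ℕ} (hj : 0 < j)
    (η a : ℝ) (f : Sch n) :
    ‖z‖ * weightedNorm η a ((schFreeResolvent z ^ (j + 1)) f) ≤
      weightedNorm η a (dilationGen ((schFreeResolvent z ^ j) f)) +
        weightedNorm η a ((schFreeResolvent z ^ j) (dilationGen f)) +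
        weightedNorm η a ((schFreeResolvent z ^ j) f) := by
  have hcomm : ((2 * j : ℕ) : ℂ) • (z • (schFreeResolvent z ^ (j + 1)) f) =
      dilationGen ((schFreeResolvent z ^ j) f) - (schFreeResolvent z ^ j) (dilationGen f) -
        ((2 * j : ℕ) : ℂ) • (schFreeResolvent z ^ j) f := by
    have h := LinearMap.congr_fun (dilationGen_mul_schFreeResolvent_pow (n := n) hz j) f
    simp only [Module.End.mul_apply, LinearMap.add_apply, LinearMap.smul_apply] at h
    rw [h, Nat.cast_smul_eq_nsmul, Nat.cast_smul_eq_nsmul, smul_add]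
    abel
  have hj' : (1 : ℝ) ≤ (2 * j : ℕ) := by exact_mod_cast (by omega : 1 ≤ 2 * j)
  have htri := (weightedNorm_sub_le η a (dilationGen ((schFreeResolvent z ^ j) f) -
    (schFreeResolvent z ^ j) (dilationGen f))
      (((2 * j : ℕ) : ℂ) • (schFreeResolvent z ^ j) f)).trans
        (add_le_add_left (weightedNorm_sub_le η a _ _) _)
  rw [← hcomm, weightedNorm_smul, weightedNorm_smul, weightedNorm_smul, Complex.norm_natCast]
    at htri
  have hA := weightedNorm_nonneg η a (dilationGen ((schFreeResolvent z ^ j) f))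
  have hA' := weightedNorm_nonneg η a ((schFreeResolvent z ^ j) (dilationGen f))
  refine le_of_mul_le_mul_left (htri.trans ?_) (one_pos.trans_le hj')
  rw [mul_add]
  gcongr
  exact le_mul_of_one_le_left (by positivity) hj'

/-! ### Weighted bounds for powers of the free resolvent -/

lemma weightedNorm_mul_coord_le (a : ℝ) (k : Fin n) (u : Sch n) :
    weightedNorm 1 (a + 1) (schMul (fun x => x k) u) ≤ weightedNorm 1 a u := by
  have h := weightedNorm_schMul_le (coord_hasTemperateGrowth k) (η := 1) (a := a + 1) (b := a)
    (C := 1) (fun x => by simpa using mul_abs_coord_le 1 k x) u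
  rwa [one_mul] at h

lemma weightedNorm_dilationGen_le (a : ℝ) (u : Sch n) :
    weightedNorm 1 (a + 1) (dilationGen u) ≤ n * gradNorm 1 a u + n * weightedNorm 1 a u := by
  rw [dilationGen, skewFieldDeriv_apply, fieldDeriv_apply, divergence_coord]
  refine (weightedNorm_add_le _ _ _ _).trans (add_le_add ?_ ?_)
  · exact (weightedNorm_sum_le _ _ _ _).trans ((Finset.sum_le_sum fun k _ =>
      weightedNorm_mul_coord_le a k _).trans (sum_weightedNorm_schDeriv_le 1 a u))
  · have hmul := weightedNorm_schMul_le_of_le (.const (n : ℝ)) (fun _ => (Nat.abs_cast n).le) 1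
      (a + 1) u
    have hanti := weightedNorm_anti (η := 1) (le_add_of_nonneg_right zero_le_one : a ≤ a + 1) u
    have hn : (n : ℝ) * weightedNorm 1 (a + 1) u ≤ n * weightedNorm 1 a u := by gcongr
    have hnonneg := mul_nonneg n.cast_nonneg (weightedNorm_nonneg 1 a u)
    rw [weightedNorm_smul, norm_inv, Complex.norm_ofNat]
    linarith

lemma gradNorm_le {a l : ℝ} (ha : 0 ≤ a) (hl : 0 ≤ l) {z : ℂ} (hre : z.re = l ^ 2) (u : Sch n) :
    gradNorm 1 a u ≤ (l + 2 * a * n + 1) * weightedNorm 1 a u +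
      weightedNorm 1 a (negLaplacian u - z • u) := by
  have henergy := (abs_le.1 (abs_gradNorm_sq_sub_le zero_le_one a z u)).2
  have hsource := norm_inner_schMul_le_weightedNorm (bracketPow_hasTemperateGrowth 1 (-a))
    (η := 1) (a := a) (C := 1) (fun x => by rw [abs_bracketPow, one_mul])
    (negLaplacian u - z • u) u
  have hgrad := mul_le_mul_of_nonneg_right (mul_le_mul_of_nonneg_left
    (sum_weightedNorm_schDeriv_le 1 a u) ha) (weightedNorm_nonneg 1 a u)
  rw [hre, abs_of_nonneg ha, mul_one] at henergy
  have hP := gradNorm_nonneg 1 a u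
  have hQ := weightedNorm_nonneg 1 a u
  have hG := weightedNorm_nonneg 1 a (negLaplacian u - z • u)
  set P := gradNorm 1 a u
  set Q := weightedNorm 1 a u
  set G := weightedNorm 1 a (negLaplacian u - z • u)
  have hlQ : 0 ≤ l * Q := by positivity
  have haQ : 0 ≤ 2 * a * n * Q := by positivity
  by_contra! hlt
  have hlQP : (l * Q) ^ 2 ≤ l * Q * P := by
    rw [sq]
    gcongr
    linarith
  have hGQ : G * Q ≤ P * Q := by
    gcongr
    linarith
  nlinarith [mul_nonneg hG hP]

lemma weightedNorm_le_of_adjoint {S T : Module.End ℂ (Sch n)}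
    (hST : ∀ f g, ‖inner ℂ (toL2 (T f)) (toL2 g)‖ ≤ ‖inner ℂ (toL2 f) (toL2 (S g))‖) {η a C : ℝ}
    (hC : 0 ≤ C) (hS : ∀ g, weightedNorm η a (S g) ≤ C * weightedNorm η (-a) g) (f : Sch n) :
    weightedNorm η a (T f) ≤ C * weightedNorm η (-a) f := by
  set g := schMul (bracketPow η (-a)) (T f)
  have hg : weightedNorm η (-a) g ≤ weightedNorm η a (T f) := by
    have h := weightedNorm_schMul_le (bracketPow_hasTemperateGrowth η (-a)) (η := η) (a := -a)
      (b := a) (C := 1) (fun x => by rw [abs_bracketPow, one_mul]; ring_nf; rfl) (T f)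
    rwa [one_mul] at h
  have hf := weightedNorm_nonneg η (-a) f
  have hsq : weightedNorm η a (T f) * weightedNorm η a (T f) ≤
      C * weightedNorm η (-a) f * weightedNorm η a (T f) :=
    calc weightedNorm η a (T f) * weightedNorm η a (T f)
        = ‖inner ℂ (toL2 (T f)) (toL2 g)‖ := by
          rw [inner_schMul_bracketPow, Complex.norm_real, norm_of_nonneg (sq_nonneg _), sq]
      _ ≤ weightedNorm η (-a) f * weightedNorm η a (S g) :=
          (hST f g).trans (norm_inner_le_weightedNorm η a _ _)
      _ ≤ weightedNorm η (-a) f * (C * weightedNorm η a (T f)) := by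
          gcongr
          exact (hS g).trans (by gcongr)
      _ = C * weightedNorm η (-a) f * weightedNorm η a (T f) := by ring
  rcases (weightedNorm_nonneg η a (T f)).eq_or_lt with h | h
  · rw [← h]
    positivity
  · exact le_of_mul_le_mul_right hsq h

/-- Nonreal spectral parameters `z` with `Re z = l²`, `l ≥ l₀`, in a strip around the real axis. -/
structure NearAxis (l₀ l : ℝ) (z : ℂ) : Prop where
  le : l₀ ≤ l
  re_eq : z.re = l ^ 2
  im_ne_zero : z.im ≠ 0
  abs_im_le : |z.im| ≤ 1

lemma NearAxis.conj {l₀ l : ℝ} {z : ℂ} (hz : NearAxis l₀ l z) : NearAxis l₀ l (conj z) where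
  le := hz.le
  re_eq := by simpa using hz.re_eq
  im_ne_zero := conj_im_ne_zero hz.im_ne_zero
  abs_im_le := by simpa using hz.abs_im_le

lemma pow_mul_weightedNorm_dilationGen_le {a l₀ l C F : ℝ} (ha : 0 ≤ a) (hl₀ : 0 < l₀)
    (hl : l₀ ≤ l) {z : ℂ} (hre : z.re = l ^ 2) {i : ℕ} {u : Sch n}
    (hu : l ^ (i + 1) * weightedNorm 1 a u ≤ C * F)
    (hz : l ^ i * weightedNorm 1 a (negLaplacian u - z • u) ≤ C * F) :
    l ^ i * weightedNorm 1 (a + 1) (dilationGen u) ≤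
      n * (2 + (2 * a * n + 2) / l₀) * (C * F) := by
  have hlpos : 0 < l := hl₀.trans_le hl
  have hu' : l ^ i * weightedNorm 1 a u ≤ C * F / l₀ := by
    rw [le_div_iff₀ hl₀]
    refine le_trans ?_ hu
    rw [pow_succ, mul_right_comm]
    have := weightedNorm_nonneg 1 a u
    gcongr
  calc l ^ i * weightedNorm 1 (a + 1) (dilationGen u)
      ≤ l ^ i * (n * ((l + 2 * a * n + 1) * weightedNorm 1 a u +
          weightedNorm 1 a (negLaplacian u - z • u)) + n * weightedNorm 1 a u) := by
        gcongr
        refine (weightedNorm_dilationGen_le a u).trans ?_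
        gcongr
        exact gradNorm_le ha hlpos.le hre u
    _ = n * (l ^ (i + 1) * weightedNorm 1 a u +
          l ^ i * weightedNorm 1 a (negLaplacian u - z • u) +
          (2 * a * n + 2) * (l ^ i * weightedNorm 1 a u)) := by ring
    _ ≤ n * (C * F + C * F + (2 * a * n + 2) * (C * F / l₀)) := by gcongr
    _ = n * (2 + (2 * a * n + 2) / l₀) * (C * F) := by ring

lemma norm_mul_weightedNorm_schFreeResolvent_pow_succ_le {z : ℂ} (hz : z.im ≠ 0) {j : ℕ}
    (hj : 0 < j) {η a K D : ℝ} (hK : 0 ≤ K)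
    (hdil : ∀ f : Sch n, weightedNorm η a (dilationGen ((schFreeResolvent z ^ j) f)) ≤
      K * weightedNorm η (-a) f)
    (hdil' : ∀ f : Sch n, weightedNorm η a (dilationGen ((schFreeResolvent (conj z) ^ j) f)) ≤
      K * weightedNorm η (-a) f)
    (hpow : ∀ f : Sch n, weightedNorm η a ((schFreeResolvent z ^ j) f) ≤ D * weightedNorm η (-a) f)
    (f : Sch n) :
    ‖z‖ * weightedNorm η a ((schFreeResolvent z ^ (j + 1)) f) ≤
      (2 * K + D) * weightedNorm η (-a) f := by
  have hdual := weightedNorm_le_of_adjoint (S := dilationGen * schFreeResolvent (conj z) ^ j)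
    (T := schFreeResolvent z ^ j * dilationGen) (fun f g => by
      simp only [Module.End.mul_apply]
      rw [inner_schFreeResolvent_pow hz, inner_dilationGen, norm_neg]) hK
    (fun g => (congrArg _ (Module.End.mul_apply _ _ g)).trans_le (hdil' g)) f
  have hcomm := norm_mul_weightedNorm_schFreeResolvent_pow_le hz hj η a f
  rw [Module.End.mul_apply] at hdual
  linarith [hdil f, hpow f]

lemma weightedNorm_dilationGen_schFreeResolvent_pow_le {a l₀ l C : ℝ} (ha : 0 ≤ a) (hl₀ : 0 < l₀)
    (hC : 0 ≤ C) {z : ℂ} (hz : NearAxis l₀ l z) {i : ℕ} {f : Sch n}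
    (h : l ^ (i + 1) * weightedNorm 1 a ((schFreeResolvent z ^ (i + 1)) f) ≤
        C * weightedNorm 1 (-a) f ∧
      l ^ i * weightedNorm 1 a ((schFreeResolvent z ^ i) f) ≤ C * weightedNorm 1 (-a) f) :
    weightedNorm 1 (a + 1) (dilationGen ((schFreeResolvent z ^ (i + 1)) f)) ≤
      n * (2 + (2 * a * n + 2) / l₀) * C / l ^ i * weightedNorm 1 (-(a + 1)) f := by
  have hl : 0 < l := hl₀.trans_le hz.le
  have hanti : weightedNorm 1 (-a) f ≤ weightedNorm 1 (-(a + 1)) f :=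
    weightedNorm_anti (by linarith) f
  have hdil := pow_mul_weightedNorm_dilationGen_le ha hl₀ hz.le hz.re_eq
    (u := (schFreeResolvent z ^ (i + 1)) f) h.1 (by
      rw [negLaplacian_sub_smul_schFreeResolvent_pow_succ hz.im_ne_zero]
      exact h.2)
  have hM : 0 ≤ n * (2 + (2 * a * n + 2) / l₀) * C := by positivity
  rw [← mul_assoc] at hdil
  rw [div_mul_eq_mul_div, le_div_iff₀' (by positivity)]
  exact hdil.trans (mul_le_mul_of_nonneg_left hanti hM)

lemma weightedNorm_schFreeResolvent_pow_le_div {a l₀ l C : ℝ} (hl₀ : 0 < l₀) (hC : 0 ≤ C)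
    {z : ℂ} (hz : NearAxis l₀ l z) {i : ℕ} {f : Sch n}
    (h : l ^ (i + 1) * weightedNorm 1 a ((schFreeResolvent z ^ (i + 1)) f) ≤
      C * weightedNorm 1 (-a) f) :
    weightedNorm 1 (a + 1) ((schFreeResolvent z ^ (i + 1)) f) ≤
      C / l₀ / l ^ i * weightedNorm 1 (-(a + 1)) f := by
  have hl : 0 < l := hl₀.trans_le hz.le
  have hpow : l₀ * l ^ i ≤ l ^ (i + 1) := by
    rw [pow_succ']
    gcongr
    exact hz.le
  rw [div_div, div_mul_eq_mul_div, le_div_iff₀' (by positivity)]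
  calc l₀ * l ^ i * weightedNorm 1 (a + 1) ((schFreeResolvent z ^ (i + 1)) f)
      ≤ l ^ (i + 1) * weightedNorm 1 a ((schFreeResolvent z ^ (i + 1)) f) :=
        mul_le_mul hpow (weightedNorm_anti (by linarith) _) (weightedNorm_nonneg _ _ _)
          (by positivity)
    _ ≤ C * weightedNorm 1 (-a) f := h
    _ ≤ C * weightedNorm 1 (-(a + 1)) f :=
        mul_le_mul_of_nonneg_left (weightedNorm_anti (by linarith) f) hC

lemma pow_mul_weightedNorm_schFreeResolvent_pow_le {a l₀ C : ℝ} (ha : 0 ≤ a) (hl₀ : 0 < l₀)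
    (hC : 0 ≤ C) {i : ℕ} (h : ∀ (l : ℝ) (z : ℂ), NearAxis l₀ l z → ∀ f : Sch n,
      l ^ (i + 1) * weightedNorm 1 a ((schFreeResolvent z ^ (i + 1)) f) ≤
        C * weightedNorm 1 (-a) f ∧
      l ^ i * weightedNorm 1 a ((schFreeResolvent z ^ i) f) ≤ C * weightedNorm 1 (-a) f)
    {l : ℝ} {z : ℂ} (hz : NearAxis l₀ l z) (f : Sch n) :
    l ^ (i + 2) * weightedNorm 1 (a + 1) ((schFreeResolvent z ^ (i + 2)) f) ≤
      (2 * (n * (2 + (2 * a * n + 2) / l₀) * C) + C / l₀) * weightedNorm 1 (-(a + 1)) f := by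
  have hl : 0 < l := hl₀.trans_le hz.le
  have hbound := norm_mul_weightedNorm_schFreeResolvent_pow_succ_le hz.im_ne_zero i.succ_pos
    (by positivity)
    (fun f => weightedNorm_dilationGen_schFreeResolvent_pow_le ha hl₀ hC hz (h l z hz f))
    (fun f => weightedNorm_dilationGen_schFreeResolvent_pow_le ha hl₀ hC hz.conj
      (h l _ hz.conj f))
    (fun f => weightedNorm_schFreeResolvent_pow_le_div hl₀ hC hz (h l z hz f).1) f
  have hnorm : l ^ 2 ≤ ‖z‖ := hz.re_eq ▸ Complex.re_le_norm z
  have hnonneg := weightedNorm_nonneg 1 (a + 1) ((schFreeResolvent z ^ (i + 2)) f)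
  rw [← mul_div_assoc, ← add_div, div_mul_eq_mul_div, le_div_iff₀' (by positivity)] at hbound
  refine le_trans (le_of_eq_of_le ?_ (mul_le_mul_of_nonneg_left
    (mul_le_mul_of_nonneg_right hnorm hnonneg) (by positivity : 0 ≤ l ^ i))) hbound
  ring

/-- The second bound is carried along for the induction. -/
theorem exists_pow_mul_weightedNorm_schFreeResolvent_pow_le {b l₀ : ℝ} (hb : 1 / 2 < b)
    (hb' : b ≤ 1) (hl₀ : 0 < l₀) (j : ℕ) :
    ∃ C > 0, ∀ (l : ℝ) (z : ℂ), NearAxis l₀ l z → ∀ f : Sch n,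
      l ^ (j + 1) * weightedNorm 1 (b + j) ((schFreeResolvent z ^ (j + 1)) f) ≤
        C * weightedNorm 1 (-(b + j)) f ∧
      l ^ j * weightedNorm 1 (b + j) ((schFreeResolvent z ^ j) f) ≤
        C * weightedNorm 1 (-(b + j)) f := by
  induction j with
  | zero =>
    obtain ⟨C, hC, h⟩ := exists_mul_weightedNorm_le (n := n) (sub_pos.2 hb) (by linarith) hl₀
    refine ⟨C + 1, by positivity, fun l z hz f => ?_⟩
    have hf := weightedNorm_nonneg 1 (-b) f
    have hfree := h l z hz.le hz.re_eq hz.abs_im_le (schFreeResolvent z f)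
    rw [negLaplacian_sub_smul_schFreeResolvent hz.im_ne_zero, add_sub_cancel] at hfree
    have hanti := weightedNorm_anti (η := 1) (by linarith : -b ≤ b) f
    simp only [Nat.cast_zero, add_zero, zero_add, pow_one, pow_zero, one_mul, Module.End.one_apply]
    constructor <;> nlinarith
  | succ i ih =>
    obtain ⟨C, hC, h⟩ := ih
    set M := 2 * (n * (2 + (2 * (b + i) * n + 2) / l₀) * C) + C / l₀
    refine ⟨M + C, by positivity, fun l z hz f => ?_⟩
    have hl : 0 < l := hl₀.trans_le hz.le
    have hf := weightedNorm_nonneg 1 (-(b + i + 1)) f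
    rw [Nat.cast_succ, ← add_assoc]
    constructor
    · exact (pow_mul_weightedNorm_schFreeResolvent_pow_le (by positivity) hl₀ hC.le h hz f).trans
        (mul_le_mul_of_nonneg_right (le_add_of_nonneg_right hC.le) hf)
    · calc _ ≤ l ^ (i + 1) * weightedNorm 1 (b + i) ((schFreeResolvent z ^ (i + 1)) f) := by
            gcongr
            exact weightedNorm_anti (by linarith) _
        _ ≤ C * weightedNorm 1 (-(b + i)) f := (h l z hz f).1
        _ ≤ (M + C) * weightedNorm 1 (-(b + i + 1)) f := by
            gcongr
            · exact weightedNorm_nonneg _ _ _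
            · exact le_add_of_nonneg_left (by positivity)
            · exact weightedNorm_anti (by linarith) f

/-! ### Multiplication operators and weighted operator norms -/

section MulOp

variable {α : Type*} {mα : MeasurableSpace α} {μ : Measure α}

open Classical in
/-- Multiplication by a real function as a bounded operator on complex `L²`. Junk (zero) unless
the function is essentially bounded and measurable. -/
def mulOp (μ : Measure α) (φ : α → ℝ) : Lp ℂ 2 μ →L[ℂ] Lp ℂ 2 μ :=
  if h : MemLp φ ⊤ μ then
    (ContinuousLinearMap.mul ℂ ℂ).holderL μ ⊤ 2 2 (h.ofReal (K := ℂ)).toLp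
  else 0

lemma mulOp_ae_eq {φ : α → ℝ} (hφ : MemLp φ ⊤ μ) (f : Lp ℂ 2 μ) :
    mulOp μ φ f =ᵐ[μ] fun x => (φ x : ℂ) * f x := by
  rw [mulOp, dif_pos hφ, ContinuousLinearMap.holderL_apply_apply]
  filter_upwards [(ContinuousLinearMap.mul ℂ ℂ).coeFn_holder (r := 2) (hφ.ofReal (K := ℂ)).toLp f,
    (hφ.ofReal (K := ℂ)).coeFn_toLp] with x hholder hφx
  rw [hholder, hφx]
  rfl

lemma mulOp_mul_mulOp {φ ψ χ : α → ℝ} (hφ : MemLp φ ⊤ μ) (hψ : MemLp ψ ⊤ μ)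
    (h : ∀ x, φ x * ψ x = χ x) : mulOp μ φ * mulOp μ ψ = mulOp μ χ := by
  have hχ : MemLp χ ⊤ μ := by rw [← funext h]; exact hψ.mul hφ
  ext1 f
  apply Lp.ext
  filter_upwards [mulOp_ae_eq hφ (mulOp μ ψ f), mulOp_ae_eq hψ f, mulOp_ae_eq hχ f]
    with x h₁ h₂ h₃
  rw [mul_apply_eq_comp, h₁, h₂, h₃, ← h]
  push_cast
  ring

lemma norm_mulOp_le {φ : α → ℝ} {C : ℝ} (hC : 0 ≤ C) (h : ∀ x, |φ x| ≤ C) : ‖mulOp μ φ‖ ≤ C := by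
  by_cases hφ : MemLp φ ⊤ μ
  · refine ContinuousLinearMap.opNorm_le_bound _ hC fun f => Lp.norm_le_mul_norm_of_ae_le_mul ?_
    filter_upwards [mulOp_ae_eq hφ f] with x hx
    rw [hx, norm_mul, Complex.norm_real]
    exact mul_le_mul_of_nonneg_right (h x) (norm_nonneg _)
  · rwa [mulOp, dif_neg hφ, norm_zero]

lemma isSelfAdjoint_mulOp (φ : α → ℝ) : IsSelfAdjoint (mulOp μ φ) := by
  by_cases hφ : MemLp φ ⊤ μ
  · rw [ContinuousLinearMap.isSelfAdjoint_iff_isSymmetric]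
    intro f g
    refine (L2.inner_def _ _).trans (Eq.trans (integral_congr_ae ?_) (L2.inner_def _ _).symm)
    filter_upwards [mulOp_ae_eq hφ f, mulOp_ae_eq hφ g] with x hf hg
    simp only [ContinuousLinearMap.coe_coe, hf, hg, RCLike.inner_apply, map_mul,
      Complex.conj_ofReal]
    ring
  · rw [mulOp, dif_neg hφ]
    exact .zero _

end MulOp

lemma mulOp_toL2 {φ : Euc n → ℝ} (hφ : MemLp φ ⊤ volume) (hφ' : φ.HasTemperateGrowth) (f : Sch n) :
    mulOp volume φ (toL2 f) = toL2 (schMul φ f) := by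
  apply Lp.ext
  filter_upwards [mulOp_ae_eq hφ (toL2 f), coeFn_toL2 f, coeFn_toL2 (schMul φ f)] with x h₁ h₂ h₃
  rw [h₁, h₂, h₃, schMul_apply hφ']

lemma measurable_bracketPow (η r : ℝ) : Measurable (bracketPow η r : Euc n → ℝ) := by
  unfold bracketPow
  fun_prop

lemma memLp_top_bracketPow {η r : ℝ} (h : r ≤ 0) :
    MemLp (bracketPow η r : Euc n → ℝ) ⊤ volume :=
  memLp_top_of_bound (measurable_bracketPow η r).aestronglyMeasurable 1 <|
    .of_forall fun x => by
      rw [Real.norm_eq_abs, abs_bracketPow]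
      exact bracketPow_le_one h x

/-- The bounded operators on `L²(ℝⁿ)`. -/
abbrev Op (n : ℕ) := L2 n →L[ℂ] L2 n

/-- The weight `⟨x⟩^{-a}`, `a ≥ 0`, as an operator on `L²`. -/
def weight (a : ℝ) : Op n := mulOp volume (bracketPow 1 (-a / 2))

lemma weight_mul_weight {a b : ℝ} (ha : 0 ≤ a) (hb : 0 ≤ b) :
    (weight a * weight b : Op n) = weight (a + b) :=
  mulOp_mul_mulOp (memLp_top_bracketPow (by linarith)) (memLp_top_bracketPow (by linarith))
    fun x => by
      rw [bracketPow_mul]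
      ring_nf

lemma norm_weight_le_one {a : ℝ} (ha : 0 ≤ a) : ‖(weight a : Op n)‖ ≤ 1 :=
  norm_mulOp_le zero_le_one fun x => by
    rw [abs_bracketPow]
    exact bracketPow_le_one (by linarith) x

lemma isSelfAdjoint_weight (a : ℝ) : IsSelfAdjoint (weight a : Op n) := isSelfAdjoint_mulOp _

/-- The weighted operator norm `‖⟨x⟩^{-p} S ⟨x⟩^{-q}‖`. -/
def wOpNorm (p q : ℝ) (S : Op n) : ℝ := ‖weight p * S * weight q‖

lemma wOpNorm_nonneg (p q : ℝ) (S : Op n) : 0 ≤ wOpNorm p q S := norm_nonneg _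

lemma wOpNorm_add_le (p q : ℝ) (S S' : Op n) :
    wOpNorm p q (S + S') ≤ wOpNorm p q S + wOpNorm p q S' := by
  rw [wOpNorm, mul_add, add_mul]
  exact norm_add_le _ _

lemma wOpNorm_sub_le (p q : ℝ) (S S' : Op n) :
    wOpNorm p q (S - S') ≤ wOpNorm p q S + wOpNorm p q S' := by
  rw [wOpNorm, mul_sub, sub_mul]
  exact norm_sub_le _ _

lemma wOpNorm_anti {p q p' q' : ℝ} (hp : 0 ≤ p) (hq : 0 ≤ q) (hpp' : p ≤ p') (hqq' : q ≤ q')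
    (S : Op n) : wOpNorm p' q' S ≤ wOpNorm p q S := by
  have hsplit : (weight p' * S * weight q' : Op n) =
      weight (p' - p) * (weight p * S * weight q) * weight (q' - q) := by
    rw [← sub_add_cancel p' p, ← add_sub_cancel q q', ← weight_mul_weight (by linarith) hp,
      ← weight_mul_weight hq (by linarith)]
    simp only [mul_assoc, add_sub_cancel_right, add_sub_cancel]
  rw [wOpNorm, hsplit]
  calc _ ≤ ‖(weight (p' - p) : Op n)‖ * ‖weight p * S * weight q‖ * ‖(weight (q' - q) : Op n)‖ :=
        norm_mul₃_le
    _ ≤ 1 * ‖weight p * S * weight q‖ * 1 := by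
        gcongr <;> exact norm_weight_le_one (by linarith)
    _ = wOpNorm p q S := by rw [one_mul, mul_one, wOpNorm]

lemma exists_mulOp_eq_weight_mul_weight {V : Euc n → ℝ} (hVm : Measurable V) {C δ : ℝ}
    (hV : ∀ x, |V x| ≤ C * bracketPow 1 (-δ / 2) x) {p q : ℝ} (hp : 0 ≤ p) (hq : 0 ≤ q)
    (hpq : p + q ≤ δ) :
    ∃ U : Op n, ‖U‖ ≤ C ∧ mulOp volume V = weight p * U * weight q := by
  have hC : 0 ≤ C :=
    nonneg_of_mul_nonneg_left ((abs_nonneg _).trans (hV 0)) (bracketPow_pos _ _ _)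
  set φ : Euc n → ℝ := fun x => V x * bracketPow 1 ((p + q) / 2) x with hφ_def
  have hφC (x) : |φ x| ≤ C := by
    rw [hφ_def, abs_mul, abs_bracketPow]
    calc _ ≤ C * bracketPow 1 (-δ / 2) x * bracketPow 1 ((p + q) / 2) x :=
          mul_le_mul_of_nonneg_right (hV x) (bracketPow_pos _ _ _).le
      _ = C * bracketPow 1 (-δ / 2 + (p + q) / 2) x := by rw [mul_assoc, bracketPow_mul]
      _ ≤ C := mul_le_of_le_one_right hC (bracketPow_le_one (by linarith) x)
  have hφ : MemLp φ ⊤ volume :=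
    memLp_top_of_bound (hVm.mul (measurable_bracketPow _ _)).aestronglyMeasurable C (.of_forall hφC)
  have hw {a : ℝ} (ha : 0 ≤ a) : MemLp (bracketPow 1 (-a / 2) : Euc n → ℝ) ⊤ volume :=
    memLp_top_bracketPow (by linarith)
  refine ⟨mulOp volume φ, norm_mulOp_le hC hφC, ?_⟩
  rw [weight, weight, mulOp_mul_mulOp (χ := bracketPow 1 (-p / 2) * φ) (hw hp) hφ fun _ => rfl,
    mulOp_mul_mulOp (hφ.mul (hw hp)) (hw hq) fun x => ?_]
  have hone :
      bracketPow 1 (-p / 2) x * bracketPow 1 ((p + q) / 2) x * bracketPow 1 (-q / 2) x = 1 := by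
    rw [bracketPow_mul, bracketPow_mul_eq_one (by ring)]
  rw [Pi.mul_apply, hφ_def]
  linear_combination V x * hone

/-- The decay of `V` is split between its two neighbours. -/
lemma wOpNorm_mul_mulOp_mul_le {V : Euc n → ℝ} (hVm : Measurable V) {C δ : ℝ}
    (hV : ∀ x, |V x| ≤ C * bracketPow 1 (-δ / 2) x) {p q : ℝ} (hp : 0 ≤ p) (hq : 0 ≤ q)
    (hpq : p + q ≤ δ) (r t : ℝ) (S S' : Op n) :
    wOpNorm r t (S * mulOp volume V * S') ≤ C * wOpNorm r p S * wOpNorm q t S' := by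
  obtain ⟨U, hU, hVU⟩ := exists_mulOp_eq_weight_mul_weight hVm hV hp hq hpq
  calc wOpNorm r t (S * mulOp volume V * S')
      = ‖(weight r * S * weight p) * U * (weight q * S' * weight t)‖ := by
        rw [wOpNorm, hVU]; simp only [mul_assoc]
    _ ≤ wOpNorm r p S * ‖U‖ * wOpNorm q t S' := norm_mul₃_le
    _ ≤ wOpNorm r p S * C * wOpNorm q t S' := by gcongr <;> exact wOpNorm_nonneg _ _ _
    _ = C * wOpNorm r p S * wOpNorm q t S' := by ring

/-! ### Resolvent families and the free resolvent on `L²` -/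

section ResolventFamily

variable {A : Type*} [NormedRing A] [NormedAlgebra ℂ A]

/-- `P z` behaves like the resolvent `(T - z)⁻¹` of a self-adjoint operator `T`, for nonreal `z`:
it satisfies the first resolvent identity and is bounded by the inverse distance to the real
axis. -/
structure IsResolventFamily (P : ℂ → A) : Prop where
  sub_eq : ∀ z w : ℂ, z.im ≠ 0 → w.im ≠ 0 → P z - P w = (z - w) • (P z * P w)
  norm_le : ∀ z : ℂ, z.im ≠ 0 → ‖P z‖ ≤ |z.im|⁻¹

variable {P : ℂ → A} {z : ℂ}

lemma IsResolventFamily.continuousAt (hP : IsResolventFamily P) (hz : z.im ≠ 0) :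
    ContinuousAt P z := by
  have him : ∀ᶠ w in 𝓝 z, w.im ≠ 0 := Complex.continuous_im.continuousAt.eventually_ne hz
  have hlim : Tendsto (fun w : ℂ => ‖w - z‖ * (|w.im|⁻¹ * |z.im|⁻¹)) (𝓝 z)
      (𝓝 (‖z - z‖ * (|z.im|⁻¹ * |z.im|⁻¹))) := by
    refine (continuous_id.sub continuous_const).norm.continuousAt.mul
      (ContinuousAt.mul ?_ continuousAt_const)
    exact Complex.continuous_im.abs.continuousAt.inv₀ (abs_ne_zero.2 hz)
  rw [sub_self, norm_zero, zero_mul] at hlim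
  rw [ContinuousAt, tendsto_iff_norm_sub_tendsto_zero]
  refine squeeze_zero' (.of_forall fun _ => norm_nonneg _) ?_ hlim
  filter_upwards [him] with w hw
  rw [hP.sub_eq w z hw hz, norm_smul]
  gcongr
  refine (norm_mul_le _ _).trans ?_
  gcongr
  exacts [hP.norm_le w hw, hP.norm_le z hz]

lemma IsResolventFamily.hasDerivAt (hP : IsResolventFamily P) (hz : z.im ≠ 0) :
    HasDerivAt P (P z * P z) z := by
  rw [hasDerivAt_iff_tendsto_slope]
  have him : ∀ᶠ w in 𝓝[≠] z, w.im ≠ 0 :=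
    (Complex.continuous_im.continuousAt.eventually_ne hz).filter_mono nhdsWithin_le_nhds
  have hlim : Tendsto (fun w => P w * P z) (𝓝[≠] z) (𝓝 (P z * P z)) :=
    ((hP.continuousAt hz).mul continuousAt_const).mono_left nhdsWithin_le_nhds
  refine hlim.congr' ?_
  filter_upwards [him, self_mem_nhdsWithin] with w hw hwz
  rw [slope_def_module, hP.sub_eq w z hw hz, smul_smul, inv_mul_cancel₀ (sub_ne_zero.2 hwz),
    one_smul]

lemma IsResolventFamily.hasDerivAt_pow (hP : IsResolventFamily P) (hz : z.im ≠ 0) (k : ℕ) :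
    HasDerivAt (fun w => P w ^ k) ((k : ℂ) • P z ^ (k + 1)) z := by
  induction k with
  | zero => simpa using hasDerivAt_const z (1 : A)
  | succ k ih =>
    simp only [pow_succ _ k]
    refine (ih.mul (hP.hasDerivAt hz)).congr_deriv ?_
    rw [smul_mul_assoc, ← pow_succ, ← mul_assoc, ← pow_succ, ← pow_succ, Nat.cast_succ, add_smul,
      one_smul]

end ResolventFamily

/-- The free resolvent `(-Δ - z)⁻¹` on `L²`, for nonreal `z`: the continuous extension of
`schFreeResolvent z`. -/
def freeResolvent (z : ℂ) : Op n :=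
  LinearMap.extendOfNorm (toL2.toLinearMap ∘ₗ schFreeResolvent z : Sch n →ₗ[ℂ] L2 n)
    toL2.toLinearMap

lemma freeResolvent_toL2 {z : ℂ} (hz : z.im ≠ 0) (f : Sch n) :
    freeResolvent z (toL2 f) = toL2 (schFreeResolvent z f) :=
  LinearMap.extendOfNorm_eq (f := (toL2.toLinearMap ∘ₗ schFreeResolvent z : Sch n →ₗ[ℂ] L2 n))
    (e := toL2.toLinearMap) denseRange_toL2 ⟨|z.im|⁻¹, norm_schFreeResolvent_le hz⟩ f

lemma freeResolvent_pow_toL2 {z : ℂ} (hz : z.im ≠ 0) (k : ℕ) (f : Sch n) :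
    (freeResolvent z ^ k) (toL2 f) = toL2 ((schFreeResolvent z ^ k) f) := by
  induction k with
  | zero => simp
  | succ k ih =>
    rw [pow_succ', pow_succ', mul_apply_eq_comp, ih, freeResolvent_toL2 hz, Module.End.mul_apply]

lemma eq_of_eq_on_toL2 {S S' : Op n} (h : ∀ f : Sch n, S (toL2 f) = S' (toL2 f)) : S = S' :=
  ContinuousLinearMap.ext fun u =>
    congrFun (denseRange_toL2.equalizer S.continuous S'.continuous (funext h)) u

lemma isResolventFamily_freeResolvent : IsResolventFamily (freeResolvent : ℂ → Op n) where
  sub_eq z w hz hw := by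
    refine eq_of_eq_on_toL2 fun f => ?_
    have hres : negLaplacian (schFreeResolvent w f) - z • schFreeResolvent w f =
        f - (z - w) • schFreeResolvent w f := by
      rw [sub_smul, eq_add_of_sub_eq (negLaplacian_sub_smul_schFreeResolvent hw f)]
      abel
    have hcomp := schFreeResolvent_negLaplacian_sub_smul hz (schFreeResolvent w f)
    rw [hres, map_sub, map_smul] at hcomp
    rw [sub_apply, smul_apply, mul_apply_eq_comp, freeResolvent_toL2 hz, freeResolvent_toL2 hw,
      freeResolvent_toL2 hz, ← map_smul, ← map_sub]
    congr 1
    rw [sub_eq_iff_eq_add, ← sub_eq_iff_eq_add']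
    exact hcomp
  norm_le z hz :=
    LinearMap.opNorm_extendOfNorm_le denseRange_toL2 (by positivity) (norm_schFreeResolvent_le hz)

lemma inner_freeResolvent {z : ℂ} (hz : z.im ≠ 0) (u v : L2 n) :
    inner ℂ (freeResolvent z u) v = inner ℂ u (freeResolvent (conj z) v) := by
  refine denseRange_toL2.induction_on₂
    (p := fun u v => inner ℂ (freeResolvent z u) v = inner ℂ u (freeResolvent (conj z) v))
    (isClosed_eq (by fun_prop) (by fun_prop)) (fun f g => ?_) u v
  rw [freeResolvent_toL2 hz, freeResolvent_toL2 (conj_im_ne_zero hz), inner_schFreeResolvent hz]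

lemma wOpNorm_le_of_weightedNorm_le {S : Op n} {S' : Sch n → Sch n}
    (hS : ∀ f, S (toL2 f) = toL2 (S' f)) {a K : ℝ} (ha : 0 ≤ a) (hK : 0 ≤ K)
    (h : ∀ f, weightedNorm 1 a (S' f) ≤ K * weightedNorm 1 (-a) f) : wOpNorm a a S ≤ K := by
  refine ContinuousLinearMap.opNorm_le_bound _ hK fun u => ?_
  refine denseRange_toL2.induction_on
    (p := fun u : L2 n => ‖(weight a * S * weight a : Op n) u‖ ≤ K * ‖u‖) u
    (isClosed_le (by fun_prop) (by fun_prop)) fun g => ?_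
  have hweight (f : Sch n) : weight a (toL2 f) = toL2 (schMul (bracketPow 1 (-a / 2)) f) :=
    mulOp_toL2 (memLp_top_bracketPow (by linarith)) (by fun_prop) f
  rw [mul_apply_eq_comp, mul_apply_eq_comp, hweight, hS, hweight]
  refine (h _).trans_eq ?_
  rw [weightedNorm, schMul_schMul (by fun_prop) (by fun_prop) (χ := fun _ => 1), schMul_one]
  exact fun x => bracketPow_mul_eq_one (by ring) x

/-- The half-strip `Re z ≥ l²`, `0 < σ Im z ≤ e`, on the side of the real axis given by the sign
`σ`. -/
def halfStrip (σ l e : ℝ) : Set ℂ := {z | l ^ 2 ≤ z.re ∧ 0 < σ * z.im ∧ σ * z.im ≤ e}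

lemma im_ne_zero_of_mem_halfStrip {σ l e : ℝ} {z : ℂ} (hz : z ∈ halfStrip σ l e) : z.im ≠ 0 :=
  right_ne_zero_of_mul hz.2.1.ne'

lemma halfStrip_subset {σ l l' e e' : ℝ} (hl : 0 ≤ l) (hll' : l ≤ l') (hee' : e' ≤ e) :
    halfStrip σ l' e' ⊆ halfStrip σ l e := fun _ hz =>
  ⟨le_trans (by gcongr) hz.1, hz.2.1, hz.2.2.trans hee'⟩

lemma convex_halfStrip (σ l e : ℝ) : Convex ℝ (halfStrip σ l e) := by
  have hlin : IsLinearMap ℝ fun z : ℂ => σ * z.im :=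
    (σ • Complex.imLm).isLinear
  exact (convex_halfSpace_re_ge _).inter
    ((convex_halfSpace_gt hlin 0).inter (convex_halfSpace_le hlin e))

lemma nearAxis_of_mem_halfStrip {σ l₀ l : ℝ} (hσ : |σ| = 1) (hl : l₀ ≤ l) {z : ℂ}
    (hz : z ∈ halfStrip σ l 1) : NearAxis l₀ (√z.re) z where
  le := hl.trans (Real.le_sqrt_of_sq_le hz.1)
  re_eq := (Real.sq_sqrt ((sq_nonneg l).trans hz.1)).symm
  im_ne_zero := im_ne_zero_of_mem_halfStrip hz
  abs_im_le := by
    have habs : |z.im| = σ * z.im := by rw [← abs_of_pos hz.2.1, abs_mul, hσ, one_mul]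
    exact habs.trans_le hz.2.2

lemma exists_pow_mul_wOpNorm_freeResolvent_pow_le {b l₀ σ : ℝ} (hb : 1 / 2 < b) (hb' : b ≤ 1)
    (hl₀ : 0 < l₀) (hσ : |σ| = 1) (k : ℕ) : ∃ C > 0, ∀ l, l₀ ≤ l → ∀ z ∈ halfStrip σ l 1,
      l ^ (k + 1) * wOpNorm (b + k) (b + k) (freeResolvent z ^ (k + 1) : Op n) ≤ C := by
  obtain ⟨C, hC, h⟩ :=
    exists_pow_mul_weightedNorm_schFreeResolvent_pow_le (n := n) hb hb' hl₀ k
  refine ⟨C, hC, fun l hl z hz => ?_⟩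
  have hlpos : 0 < l := hl₀.trans_le hl
  rw [mul_comm, ← le_div_iff₀ (by positivity)]
  refine wOpNorm_le_of_weightedNorm_le (S' := fun f => (schFreeResolvent z ^ (k + 1)) f)
    (freeResolvent_pow_toL2 (im_ne_zero_of_mem_halfStrip hz) _) (by positivity) (by positivity)
    fun f => ?_
  rw [div_mul_eq_mul_div, le_div_iff₀ (by positivity), mul_comm]
  refine le_trans ?_ (h _ z (nearAxis_of_mem_halfStrip hσ hl hz) f).1
  have hsqrt : l ≤ √z.re := Real.le_sqrt_of_sq_le hz.1
  gcongr
  exact weightedNorm_nonneg _ _ _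

/-! ### Interpolation of weighted norms -/

lemma spectralRadius_mul_comm {𝕜 A : Type*} [NormedField 𝕜] [Ring A] [Algebra 𝕜 A] (a b : A) :
    spectralRadius 𝕜 (a * b) = spectralRadius 𝕜 (b * a) := by
  have hle (a b : A) : spectralRadius 𝕜 (a * b) ≤ spectralRadius 𝕜 (b * a) := by
    refine iSup₂_le fun k hk => ?_
    rcases eq_or_ne k 0 with rfl | hk0
    · simp
    · have hk' : k ∈ spectrum 𝕜 (b * a) \ {0} := spectrum.nonzero_mul_comm (𝕜 := 𝕜) a b ▸ ⟨hk, hk0⟩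
      exact le_iSup₂ (f := fun k _ => (‖k‖₊ : ENNReal)) k hk'.1
  exact (hle a b).antisymm (hle b a)

section CStarAlgebra

variable {A : Type*} [CStarAlgebra A]

/-- Since `‖a d b‖²` is the spectral radius of `(a d b)⋆ (a d b) = b d⋆ a² d b`, the outer factor
`b` may be moved to the right end. -/
lemma norm_mul_mul_sq_le {a b : A} (ha : IsSelfAdjoint a) (hb : IsSelfAdjoint b) (d : A) :
    ‖a * d * b‖ ^ 2 ≤ ‖d‖ * ‖a * a * d * (b * b)‖ := by
  nontriviality A
  set T : A := a * d * b
  have hT : star T * T = b * (star d * (a * a * d * b)) := by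
    simp only [T, star_mul, ha.star_eq, hb.star_eq, mul_assoc]
  have hspec : (‖star T * T‖₊ : ENNReal) ≤ ‖star d * (a * a * d * (b * b))‖₊ := by
    rw [← (IsSelfAdjoint.star_mul_self T).spectralRadius_eq_nnnorm, hT, spectralRadius_mul_comm,
      mul_assoc, mul_assoc _ b b]
    exact spectrum.spectralRadius_le_nnnorm _
  calc ‖T‖ ^ 2 = ‖star T * T‖ := by rw [CStarRing.norm_star_mul_self, sq]
    _ ≤ ‖star d * (a * a * d * (b * b))‖ := mod_cast hspec
    _ ≤ ‖d‖ * ‖a * a * d * (b * b)‖ := (norm_mul_le _ _).trans_eq (by rw [norm_star])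

end CStarAlgebra

lemma le_one_of_sq_le_mul {φ : ℝ → ℝ} {M : ℝ} (hM : ∀ t ∈ Icc (0 : ℝ) 1, φ t ≤ M)
    (hφ : ∀ t, 0 ≤ φ t) (h₀ : φ 0 ≤ 1) (h₁ : φ 1 ≤ 1)
    (hmid : ∀ s ∈ Icc (0 : ℝ) 1, ∀ t ∈ Icc (0 : ℝ) 1, φ ((s + t) / 2) ^ 2 ≤ φ s * φ t)
    {t : ℝ} (ht : t ∈ Icc (0 : ℝ) 1) : φ t ≤ 1 := by
  set S : ℝ := ⨆ t : Icc (0 : ℝ) 1, φ t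
  have hbdd : BddAbove (range fun t : Icc (0 : ℝ) 1 => φ t) :=
    ⟨M, by rintro _ ⟨t, rfl⟩; exact hM t t.2⟩
  have hleS {t : ℝ} (ht : t ∈ Icc (0 : ℝ) 1) : φ t ≤ S := le_ciSup hbdd ⟨t, ht⟩
  have hsq {t : ℝ} (ht : t ∈ Icc (0 : ℝ) 1) : φ t ^ 2 ≤ S := by
    rcases le_total t (1 / 2) with h | h
    · have h2t : 2 * t ∈ Icc (0 : ℝ) 1 := ⟨by linarith [ht.1], by linarith⟩
      calc φ t ^ 2 = φ ((0 + 2 * t) / 2) ^ 2 := by ring_nf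
        _ ≤ φ 0 * φ (2 * t) := hmid 0 (by simp) _ h2t
        _ ≤ 1 * S := mul_le_mul h₀ (hleS h2t) (hφ _) zero_le_one
        _ = S := one_mul S
    · have h2t : 2 * t - 1 ∈ Icc (0 : ℝ) 1 := ⟨by linarith, by linarith [ht.2]⟩
      calc φ t ^ 2 = φ ((1 + (2 * t - 1)) / 2) ^ 2 := by ring_nf
        _ ≤ φ 1 * φ (2 * t - 1) := hmid 1 (by simp) _ h2t
        _ ≤ 1 * S := mul_le_mul h₁ (hleS h2t) (hφ _) zero_le_one
        _ = S := one_mul S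
  have hS : S ≤ √S := ciSup_le fun t => Real.le_sqrt_of_sq_le (hsq t.2)
  have hS₁ : S ≤ 1 := by
    by_contra! hlt
    nlinarith [(Real.le_sqrt' (by linarith)).1 hS]
  exact (hleS ht).trans hS₁

lemma norm_mul_mul_midpoint_sq_le {A : Type*} [CStarAlgebra A] {w : ℝ → A}
    (hw : ∀ t, IsSelfAdjoint (w t)) (hw_add : ∀ s t, 0 ≤ s → 0 ≤ t → w s * w t = w (s + t))
    (D : A) {s t : ℝ} (hs : 0 ≤ s) (ht : 0 ≤ t) :
    ‖w ((s + t) / 2) * D * w ((s + t) / 2)‖ ^ 2 ≤ ‖w s * D * w s‖ * ‖w t * D * w t‖ := by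
  wlog hst : s ≤ t generalizing s t
  · rw [add_comm, mul_comm]
    exact this ht hs (le_of_not_ge hst)
  set a : A := w ((t - s) / 2)
  have ha : IsSelfAdjoint a := hw _
  have hmid₁ : a * w s = w ((s + t) / 2) := by
    rw [hw_add _ _ (by linarith) hs]; ring_nf
  have hmid₂ : w s * a = w ((s + t) / 2) := by
    rw [hw_add _ _ hs (by linarith)]; ring_nf
  have hend₁ : a * a * w s = w t := by
    rw [hw_add _ _ (by linarith) (by linarith), hw_add _ _ (by linarith) hs]; ring_nf
  have hend₂ : w s * (a * a) = w t := by
    rw [hw_add _ _ (by linarith) (by linarith), hw_add _ _ hs (by linarith)]; ring_nf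
  have h := norm_mul_mul_sq_le ha ha (w s * D * w s)
  rwa [show a * (w s * D * w s) * a = (a * w s) * D * (w s * a) by simp only [mul_assoc],
    show a * a * (w s * D * w s) * (a * a) = (a * a * w s) * D * (w s * (a * a)) by
      simp only [mul_assoc], hmid₁, hmid₂, hend₁, hend₂] at h

theorem norm_mul_mul_le_mul_rpow {A : Type*} [CStarAlgebra A] {w : ℝ → A}
    (hw : ∀ t, IsSelfAdjoint (w t)) (hw_add : ∀ s t, 0 ≤ s → 0 ≤ t → w s * w t = w (s + t))
    (hw_le : ∀ t, 0 ≤ t → ‖w t‖ ≤ 1) {D : A} {K h ν : ℝ} (hK : 0 < K) (hh : 0 < h)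
    (hD : ‖D‖ ≤ K) (hD' : ‖w 1 * D * w 1‖ ≤ K * h) (hν : ν ∈ Icc (0 : ℝ) 1) :
    ‖w ν * D * w ν‖ ≤ K * h ^ ν := by
  have hnorm_le {t : ℝ} (ht : 0 ≤ t) : ‖w t * D * w t‖ ≤ K :=
    calc _ ≤ ‖w t‖ * ‖D‖ * ‖w t‖ := norm_mul₃_le
      _ ≤ 1 * K * 1 := by
        have := hw_le t ht
        gcongr
      _ = K := by ring
  set φ : ℝ → ℝ := fun t => ‖w t * D * w t‖ / (K * h ^ t)
  suffices φ ν ≤ 1 by rwa [div_le_one (by positivity)] at this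
  obtain ⟨M, hM⟩ := isCompact_Icc.exists_bound_of_continuousOn (s := Icc (0 : ℝ) 1)
    (f := fun t => (h ^ t)⁻¹) (by fun_prop (disch := intros; positivity))
  refine le_one_of_sq_le_mul (φ := φ) (M := M) (fun t ht => ?_) (fun t => by positivity) ?_ ?_
    (fun s hs t ht => ?_) hν
  · calc φ t ≤ K / (K * h ^ t) := div_le_div_of_nonneg_right (hnorm_le ht.1) (by positivity)
      _ = (h ^ t)⁻¹ := by field_simp
      _ ≤ M := (le_abs_self _).trans (hM t ht)
  · simpa [φ, div_le_one hK] using hnorm_le le_rfl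
  · simpa [φ, div_le_one (mul_pos hK hh)] using hD'
  · have hpow : (h ^ ((s + t) / 2)) ^ 2 = h ^ s * h ^ t := by
      rw [← Real.rpow_natCast, ← Real.rpow_mul hh.le, ← Real.rpow_add hh]
      congr 1
      push_cast
      ring
    have := norm_mul_mul_midpoint_sq_le hw hw_add D hs.1 ht.1
    simp only [φ]
    rw [div_pow, mul_pow, hpow, div_mul_div_comm, mul_mul_mul_comm, ← sq]
    gcongr

lemma wOpNorm_add_add {p q : ℝ} (hp : 0 ≤ p) (hq : 0 ≤ q) (S : Op n) :
    wOpNorm (p + q) (p + q) S = ‖weight q * (weight p * S * weight p) * weight q‖ := by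
  have hleft : (weight (p + q) : Op n) = weight q * weight p := by
    rw [weight_mul_weight hq hp, add_comm]
  have hright : (weight (p + q) : Op n) = weight p * weight q := (weight_mul_weight hp hq).symm
  rw [wOpNorm]
  nth_rw 1 [hleft]
  rw [hright]
  simp only [mul_assoc]

lemma wOpNorm_le_mul_rpow {p : ℝ} (hp : 0 ≤ p) {S : Op n} {K h ν : ℝ} (hK : 0 < K) (hh : 0 < h)
    (hS : wOpNorm p p S ≤ K) (hS' : wOpNorm (p + 1) (p + 1) S ≤ K * h) (hν : ν ∈ Icc (0 : ℝ) 1) :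
    wOpNorm (p + ν) (p + ν) S ≤ K * h ^ ν := by
  rw [wOpNorm_add_add hp zero_le_one] at hS'
  rw [wOpNorm_add_add hp hν.1]
  exact norm_mul_mul_le_mul_rpow isSelfAdjoint_weight (fun _ _ => weight_mul_weight)
    (fun _ => norm_weight_le_one) hK hh hS hS' hν

/-! ### Hölder continuity of the free resolvent -/

lemma wOpNorm_smul (p q : ℝ) (c : ℂ) (S : Op n) : wOpNorm p q (c • S) = ‖c‖ * wOpNorm p q S := by
  rw [wOpNorm, mul_smul_comm, smul_mul_assoc, norm_smul, wOpNorm]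

lemma IsResolventFamily.wOpNorm_pow_sub_pow_le {P : ℂ → Op n} (hP : IsResolventFamily P)
    {p q M : ℝ} {k : ℕ} {D : Set ℂ} (hD : Convex ℝ D) (him : ∀ z ∈ D, z.im ≠ 0)
    (hM : ∀ z ∈ D, wOpNorm p q (P z ^ (k + 1)) ≤ M) {z w : ℂ} (hz : z ∈ D) (hw : w ∈ D) :
    wOpNorm p q (P z ^ k - P w ^ k) ≤ k * M * ‖z - w‖ := by
  have hderiv (x : ℂ) (hx : x ∈ D) : HasDerivWithinAt (fun x => weight p * P x ^ k * weight q)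
      (weight p * ((k : ℂ) • P x ^ (k + 1)) * weight q) D x :=
    (((hP.hasDerivAt_pow (him x hx) k).const_mul _).mul_const _).hasDerivWithinAt
  have hbound (x : ℂ) (hx : x ∈ D) :
      ‖weight p * ((k : ℂ) • P x ^ (k + 1)) * weight q‖ ≤ k * M := by
    have := wOpNorm_smul p q k (P x ^ (k + 1))
    rw [wOpNorm, Complex.norm_natCast] at this
    rw [this]
    exact mul_le_mul_of_nonneg_left (hM x hx) k.cast_nonneg
  have := hD.norm_image_sub_le_of_norm_hasDerivWithin_le hderiv hbound hw hz
  rwa [← sub_mul, ← mul_sub] at this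

theorem exists_pow_mul_wOpNorm_freeResolvent_pow_sub_le {b l₀ σ ν : ℝ} (hb : 1 / 2 < b)
    (hb' : b ≤ 1) (hl₀ : 0 < l₀) (hσ : |σ| = 1) (hν : ν ∈ Icc (0 : ℝ) 1) (k : ℕ) :
    ∃ C > 0, ∀ l, l₀ ≤ l → ∀ z ∈ halfStrip σ l 1, ∀ w ∈ halfStrip σ l 1, z ≠ w →
      l ^ (k + 1) * wOpNorm (b + k + ν) (b + k + ν)
        (freeResolvent z ^ (k + 1) - freeResolvent w ^ (k + 1) : Op n) ≤
        C * (‖z - w‖ / l) ^ ν := by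
  obtain ⟨C₁, hC₁, h₁⟩ :=
    exists_pow_mul_wOpNorm_freeResolvent_pow_le (n := n) hb hb' hl₀ hσ k
  obtain ⟨C₂, hC₂, h₂⟩ :=
    exists_pow_mul_wOpNorm_freeResolvent_pow_le (n := n) hb hb' hl₀ hσ (k + 1)
  set C : ℝ := 2 * C₁ + (k + 1) * C₂
  refine ⟨C, by positivity, fun l hl z hz w hw hzw => ?_⟩
  have hlpos : 0 < l := hl₀.trans_le hl
  have hdist : 0 < ‖z - w‖ := norm_sub_pos_iff.2 hzw
  have hbound : wOpNorm (b + k) (b + k)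
      (freeResolvent z ^ (k + 1) - freeResolvent w ^ (k + 1) : Op n) ≤ C / l ^ (k + 1) := by
    refine (wOpNorm_sub_le _ _ _ _).trans ?_
    rw [le_div_iff₀' (by positivity), mul_add]
    have : 0 ≤ (k + 1) * C₂ := by positivity
    linarith [h₁ l hl z hz, h₁ l hl w hw]
  have hlip : wOpNorm (b + k + 1) (b + k + 1)
      (freeResolvent z ^ (k + 1) - freeResolvent w ^ (k + 1) : Op n) ≤
      C / l ^ (k + 1) * (‖z - w‖ / l) := by
    rw [add_assoc b]
    calc _ ≤ (k + 1 : ℕ) * (C₂ / l ^ (k + 2)) * ‖z - w‖ :=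
          isResolventFamily_freeResolvent.wOpNorm_pow_sub_pow_le (convex_halfStrip σ l 1)
            (fun _ => im_ne_zero_of_mem_halfStrip) (fun x hx => by
              rw [le_div_iff₀' (by positivity)]
              exact_mod_cast h₂ l hl x hx) hz hw
      _ = (k + 1) * C₂ / l ^ (k + 1) * (‖z - w‖ / l) := by
        push_cast
        rw [pow_succ l (k + 1)]
        field_simp
      _ ≤ C / l ^ (k + 1) * (‖z - w‖ / l) := by
        gcongr
        linarith
  calc _ ≤ l ^ (k + 1) * (C / l ^ (k + 1) * (‖z - w‖ / l) ^ ν) := by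
        gcongr
        exact wOpNorm_le_mul_rpow (by positivity) (by positivity) (by positivity) hbound hlip hν
    _ = C * (‖z - w‖ / l) ^ ν := by field_simp

/-! ### Resolvents of symmetric operators -/

section SymmetricOperator

variable {H : Type*} [NormedAddCommGroup H] [InnerProductSpace ℂ H] {T : H →ₗ.[ℂ] H}
  {Q : ℂ → H →L[ℂ] H} {z : ℂ}

/-- `Q z` is the resolvent `(T - z)⁻¹` for all nonreal `z`. Only the surjectivity half
`(T - z) Q z = 1` is asked for; for symmetric `T` it determines `Q z`. -/
def IsResolventOf (T : H →ₗ.[ℂ] H) (Q : ℂ → H →L[ℂ] H) : Prop :=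
  ∀ z : ℂ, z.im ≠ 0 → ∀ u : H, ∃ v : T.domain, (v : H) = Q z u ∧ T v = z • (v : H) + u

lemma abs_im_mul_norm_le_of_isFormalAdjoint (hT : T.IsFormalAdjoint T) (z : ℂ) (u : T.domain) :
    |z.im| * ‖(u : H)‖ ≤ ‖T u - z • (u : H)‖ := by
  have hreal : (inner ℂ (u : H) (T u)).im = 0 := by
    rw [← Complex.conj_eq_iff_im, inner_conj_symm]
    exact hT u u
  have him : (inner ℂ (u : H) (T u - z • (u : H))).im = -z.im * ‖(u : H)‖ ^ 2 := by
    rw [inner_sub_right, inner_smul_right, inner_self_eq_ofReal_norm_sq, Complex.sub_im, hreal,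
      Complex.im_mul_ofReal]
    ring
  have hCS := (Complex.abs_im_le_norm _).trans
    (norm_inner_le_norm (𝕜 := ℂ) (u : H) (T u - z • (u : H)))
  rw [him, abs_mul, abs_neg, abs_of_nonneg (sq_nonneg ‖(u : H)‖)] at hCS
  rcases eq_or_lt_of_le (norm_nonneg (u : H)) with h | h
  · rw [← h, mul_zero]
    exact norm_nonneg _
  · refine le_of_mul_le_mul_left ?_ h
    linarith

lemma IsResolventOf.apply_eq (hQ : IsResolventOf T Q) (hT : T.IsFormalAdjoint T)
    (hz : z.im ≠ 0) {u : H} {v : T.domain} (h : T v = z • (v : H) + u) : Q z u = v := by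
  obtain ⟨w, hw, hTw⟩ := hQ z hz u
  have hker : T (w - v) - z • ((w - v : T.domain) : H) = 0 := by
    rw [LinearPMap.map_sub, hTw, h, AddSubgroupClass.coe_sub, smul_sub]
    abel
  have hle := abs_im_mul_norm_le_of_isFormalAdjoint hT z (w - v)
  rw [hker, norm_zero] at hle
  have hzero : ‖((w - v : T.domain) : H)‖ = 0 :=
    (nonpos_of_mul_nonpos_right hle (abs_pos.2 hz)).antisymm (norm_nonneg _)
  rw [norm_eq_zero, AddSubgroupClass.coe_sub, sub_eq_zero] at hzero
  rw [← hw, hzero]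

lemma IsResolventOf.isResolventFamily (hQ : IsResolventOf T Q) (hT : T.IsFormalAdjoint T) :
    IsResolventFamily Q where
  sub_eq z w hz hw := by
    ext1 u
    obtain ⟨v, hv, hTv⟩ := hQ w hw u
    have happly := hQ.apply_eq hT hz (u := u + (w - z) • (v : H)) (v := v) (by
      rw [hTv, sub_smul]
      abel)
    rw [map_add, map_smul, hv] at happly
    rw [sub_apply, smul_apply, mul_apply_eq_comp, ← neg_sub w z, neg_smul, sub_eq_iff_eq_add,
      neg_add_eq_sub, eq_sub_iff_add_eq, happly]
  norm_le z hz := by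
    refine ContinuousLinearMap.opNorm_le_bound _ (by positivity) fun u => ?_
    obtain ⟨v, hv, hTv⟩ := hQ z hz u
    have hle := abs_im_mul_norm_le_of_isFormalAdjoint hT z v
    rw [hTv, add_sub_cancel_left] at hle
    rwa [← hv, inv_mul_eq_div, le_div_iff₀' (abs_pos.2 hz)]

lemma IsResolventOf.inner_apply (hQ : IsResolventOf T Q) (hT : T.IsFormalAdjoint T)
    (hz : z.im ≠ 0) (f g : H) : inner ℂ (Q z f) g = inner ℂ f (Q (conj z) g) := by
  obtain ⟨v, hv, hTv⟩ := hQ z hz f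
  obtain ⟨w, hw, hTw⟩ := hQ _ (conj_im_ne_zero hz) g
  have hsymm := hT v w
  rw [hTv, hTw, inner_add_left, inner_add_right, inner_smul_left, inner_smul_right] at hsymm
  rw [← hv, ← hw]
  exact (add_left_cancel hsymm).symm

end SymmetricOperator

/-! ### The second resolvent identity -/

section SecondResolventIdentity

/-- The perturbation hypothesis: `V` is measurable and `|V(x)| ≤ C ⟨x⟩^{-δ}`. -/
structure IsDecayingPotential (V : Euc n → ℝ) (C δ : ℝ) : Prop where
  measurable : Measurable V
  abs_le : ∀ x, |V x| ≤ C * bracketPow 1 (-δ / 2) x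

/-- `Q` is a resolvent family satisfying both forms of the second resolvent identity relative to
the free resolvent and the potential `V`, as the resolvent of `-Δ + V` does. -/
structure IsPerturbedResolvent (V : Euc n → ℝ) (Q : ℂ → Op n) : Prop where
  isResolventFamily : IsResolventFamily Q
  eq_left : ∀ z : ℂ, z.im ≠ 0 →
    Q z = freeResolvent z - Q z * mulOp volume V * freeResolvent z
  eq_right : ∀ z : ℂ, z.im ≠ 0 →
    Q z = freeResolvent z - freeResolvent z * mulOp volume V * Q z

variable {V : Euc n → ℝ} {C₀ δ : ℝ} {Q : ℂ → Op n}

lemma IsDecayingPotential.nonneg (hV : IsDecayingPotential V C₀ δ) : 0 ≤ C₀ :=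
  nonneg_of_mul_nonneg_left ((abs_nonneg _).trans (hV.abs_le 0)) (bracketPow_pos _ _ _)

lemma IsDecayingPotential.memLp_top (hV : IsDecayingPotential V C₀ δ) (hδ : 0 ≤ δ) :
    MemLp V ⊤ volume :=
  memLp_top_of_bound hV.measurable.aestronglyMeasurable C₀ <| .of_forall fun x =>
    (hV.abs_le x).trans
      (mul_le_of_le_one_right hV.nonneg (bracketPow_le_one (by linarith) x))

lemma IsDecayingPotential.wOpNorm_mul_mulOp_mul_le (hV : IsDecayingPotential V C₀ δ) {p q r : ℝ}
    (hp : 0 ≤ p) (hq : 0 ≤ q) (hpr : p ≤ r) (hqr : q ≤ r) (hpq : p + q ≤ δ) (S S' : Op n) :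
    wOpNorm r r (S * mulOp volume V * S') ≤ C₀ * wOpNorm p p S * wOpNorm q q S' := by
  have hC₀ := hV.nonneg
  calc wOpNorm r r (S * mulOp volume V * S')
      ≤ C₀ * wOpNorm r p S * wOpNorm q r S' :=
        _root_.wOpNorm_mul_mulOp_mul_le hV.measurable hV.abs_le hp hq hpq r r S S'
    _ ≤ C₀ * wOpNorm p p S * wOpNorm q q S' :=
        mul_le_mul (mul_le_mul_of_nonneg_left (wOpNorm_anti hp hp hpr le_rfl S) hC₀)
          (wOpNorm_anti hq hq le_rfl hqr S') (wOpNorm_nonneg _ _ _)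
          (mul_nonneg hC₀ (wOpNorm_nonneg _ _ _))

lemma IsSchrodingerOp.isFormalAdjoint {T : L2 n →ₗ.[ℂ] L2 n} (hT : IsSchrodingerOp V T) :
    T.IsFormalAdjoint T := by
  have hadjoint := LinearPMap.adjoint_isFormalAdjoint hT.selfAdjoint.dense_domain
  rwa [show T.adjoint = T from hT.selfAdjoint] at hadjoint

lemma IsSchrodingerOp.exists_apply_eq {T : L2 n →ₗ.[ℂ] L2 n} (hT : IsSchrodingerOp V T)
    (hV : MemLp V ⊤ volume) (f : Sch n) :
    ∃ u : T.domain, (u : L2 n) = toL2 f ∧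
      T u = toL2 (negLaplacian f) + mulOp volume V (toL2 f) := by
  obtain ⟨u, hu, hTu⟩ := hT.eq_on_schwartz f
  refine ⟨u, Lp.ext (hu.trans (coeFn_toL2 f).symm), Lp.ext ?_⟩
  filter_upwards [hTu, coeFn_toL2 f, coeFn_toL2 (negLaplacian f), mulOp_ae_eq hV (toL2 f),
    Lp.coeFn_add (toL2 (negLaplacian f)) (mulOp volume V (toL2 f))] with x hTux hf hLf hVf hadd
  rw [hTux, hadd, Pi.add_apply, hLf, hVf, hf, negLaplacian_apply]

/-- The free resolvent preserves Schwartz functions, on which `T` is known explicitly. -/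
lemma IsResolventOf.eq_freeResolvent_sub_left {T : L2 n →ₗ.[ℂ] L2 n} (hQ : IsResolventOf T Q)
    (hT : IsSchrodingerOp V T) (hV : MemLp V ⊤ volume) {z : ℂ} (hz : z.im ≠ 0) :
    Q z = freeResolvent z - Q z * mulOp volume V * freeResolvent z := by
  refine eq_of_eq_on_toL2 fun f => ?_
  obtain ⟨u, hu, hTu⟩ := hT.exists_apply_eq hV (schFreeResolvent z f)
  rw [sub_apply, mul_apply_eq_comp, mul_apply_eq_comp, freeResolvent_toL2 hz,
    eq_sub_iff_add_eq, ← map_add, ← hu]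
  refine hQ.apply_eq hT.isFormalAdjoint hz ?_
  rw [hTu, hu, sub_eq_iff_eq_add'.1 (negLaplacian_sub_smul_schFreeResolvent hz f), map_add,
    map_smul, add_assoc]

lemma IsResolventOf.eq_freeResolvent_sub_right {T : L2 n →ₗ.[ℂ] L2 n} (hQ : IsResolventOf T Q)
    (hT : IsSchrodingerOp V T) (hV : MemLp V ⊤ volume) {z : ℂ} (hz : z.im ≠ 0) :
    Q z = freeResolvent z - freeResolvent z * mulOp volume V * Q z := by
  have hz' := conj_im_ne_zero hz
  have hT' := hT.isFormalAdjoint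
  ext1 g
  refine ext_inner_left ℂ fun f => ?_
  have hleft := congrArg (fun S : Op n => inner ℂ (S f) g)
    (hQ.eq_freeResolvent_sub_left hT hV hz')
  have hsymm (u v : L2 n) : inner ℂ (mulOp volume V u) v = inner ℂ u (mulOp volume V v) :=
    (isSelfAdjoint_mulOp V).isSymmetric u v
  simpa only [sub_apply, mul_apply_eq_comp, inner_sub_left, inner_sub_right,
    hQ.inner_apply hT' hz', inner_freeResolvent hz', hsymm, Complex.conj_conj] using hleft

lemma IsResolventOf.isPerturbedResolvent {T : L2 n →ₗ.[ℂ] L2 n} (hQ : IsResolventOf T Q)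
    (hT : IsSchrodingerOp V T) (hV : MemLp V ⊤ volume) : IsPerturbedResolvent V Q where
  isResolventFamily := hQ.isResolventFamily hT.isFormalAdjoint
  eq_left _ hz := hQ.eq_freeResolvent_sub_left hT hV hz
  eq_right _ hz := hQ.eq_freeResolvent_sub_right hT hV hz

lemma IsPerturbedResolvent.sub_eq (hQ : IsPerturbedResolvent V Q) {z w : ℂ} (hz : z.im ≠ 0)
    (hw : w.im ≠ 0) :
    Q z - Q w = (freeResolvent z - freeResolvent w -
        (freeResolvent z - freeResolvent w) * mulOp volume V * Q w) -
      Q z * mulOp volume V * (freeResolvent z - freeResolvent w -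
        (freeResolvent z - freeResolvent w) * mulOp volume V * Q w) := by
  have hmul : Q z * Q w = (freeResolvent z * freeResolvent w -
        freeResolvent z * freeResolvent w * mulOp volume V * Q w) -
      Q z * mulOp volume V * (freeResolvent z * freeResolvent w -
        freeResolvent z * freeResolvent w * mulOp volume V * Q w) := by
    conv_lhs => rw [hQ.eq_left z hz, hQ.eq_right w hw]
    noncomm_ring
  rw [hQ.isResolventFamily.sub_eq z w hz hw, isResolventFamily_freeResolvent.sub_eq z w hz hw,
    hmul]
  simp only [smul_sub, smul_mul_assoc, mul_smul_comm, mul_assoc, mul_sub]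

lemma IsPerturbedResolvent.wOpNorm_sub_le (hQ : IsPerturbedResolvent V Q)
    (hV : IsDecayingPotential V C₀ δ) {b r : ℝ} (hb : 0 ≤ b) (hbr : b ≤ r) (hδ : b + r ≤ δ)
    {z w : ℂ} (hz : z.im ≠ 0) (hw : w.im ≠ 0) :
    wOpNorm r r (Q z - Q w) ≤ (1 + C₀ * wOpNorm b b (Q z)) * (1 + C₀ * wOpNorm b b (Q w)) *
      wOpNorm r r (freeResolvent z - freeResolvent w : Op n) := by
  have hC₀ := hV.nonneg
  have hQz := wOpNorm_nonneg b b (Q z)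
  have hr : 0 ≤ r := hb.trans hbr
  rw [hQ.sub_eq hz hw]
  generalize freeResolvent z - freeResolvent w = D
  have hright : wOpNorm r r (D - D * mulOp volume V * Q w) ≤
      (1 + C₀ * wOpNorm b b (Q w)) * wOpNorm r r D := by
    have h := hV.wOpNorm_mul_mulOp_mul_le hr hb le_rfl hbr (by linarith) D (Q w)
    linarith [_root_.wOpNorm_sub_le r r D (D * mulOp volume V * Q w)]
  generalize D - D * mulOp volume V * Q w = Y at hright ⊢
  calc wOpNorm r r (Y - Q z * mulOp volume V * Y)
      ≤ (1 + C₀ * wOpNorm b b (Q z)) * wOpNorm r r Y := by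
        have h := hV.wOpNorm_mul_mulOp_mul_le hb hr hbr le_rfl hδ (Q z) Y
        linarith [_root_.wOpNorm_sub_le r r Y (Q z * mulOp volume V * Y)]
    _ ≤ (1 + C₀ * wOpNorm b b (Q z)) *
        ((1 + C₀ * wOpNorm b b (Q w)) * wOpNorm r r D) := by gcongr
    _ = _ := by ring

end SecondResolventIdentity

/-! ### Hölder estimates for products of resolvents -/

section ProductEstimates

/-- Uniform bounds and Hölder continuity, of order `ν` and with constant `C`, of an operator family
on the half-strips `halfStrip σ l e`, `l ≥ l₀`, with the weights `b + k` and the power `l^{-k-1}`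
that are natural for a product of `k + 1` resolvents. -/
structure HolderBound (σ l₀ e b ν : ℝ) (k : ℕ) (C : ℝ) (F : ℂ → Op n) : Prop where
  nonneg : 0 ≤ C
  pow_mul_le : ∀ l, l₀ ≤ l → ∀ z ∈ halfStrip σ l e,
    l ^ (k + 1) * wOpNorm (b + k) (b + k) (F z) ≤ C
  pow_mul_sub_le : ∀ l, l₀ ≤ l → ∀ z ∈ halfStrip σ l e, ∀ w ∈ halfStrip σ l e,
    l ^ (k + 1) * wOpNorm (b + k + ν) (b + k + ν) (F z - F w) ≤ C * (‖z - w‖ / l) ^ ν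

namespace HolderBound

variable {σ l₀ e b ν C D : ℝ} {i j k : ℕ} {F G : ℂ → Op n}

lemma congr (hF : HolderBound σ l₀ e b ν k C F) (hFG : ∀ z : ℂ, z.im ≠ 0 → F z = G z) :
    HolderBound σ l₀ e b ν k C G where
  nonneg := hF.nonneg
  pow_mul_le l hl z hz := by
    rw [← hFG z (im_ne_zero_of_mem_halfStrip hz)]
    exact hF.pow_mul_le l hl z hz
  pow_mul_sub_le l hl z hz w hw := by
    rw [← hFG z (im_ne_zero_of_mem_halfStrip hz), ← hFG w (im_ne_zero_of_mem_halfStrip hw)]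
    exact hF.pow_mul_sub_le l hl z hz w hw

lemma sub (hl₀ : 0 < l₀) (hF : HolderBound σ l₀ e b ν k C F)
    (hG : HolderBound σ l₀ e b ν k D G) :
    HolderBound σ l₀ e b ν k (C + D) fun z => F z - G z where
  nonneg := add_nonneg hF.nonneg hG.nonneg
  pow_mul_le l hl z hz := by
    have hl' : 0 < l := hl₀.trans_le hl
    calc l ^ (k + 1) * wOpNorm (b + k) (b + k) (F z - G z)
        ≤ l ^ (k + 1) * (wOpNorm (b + k) (b + k) (F z) + wOpNorm (b + k) (b + k) (G z)) := by
          gcongr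
          exact wOpNorm_sub_le _ _ _ _
      _ ≤ C + D := by
          rw [mul_add]
          exact add_le_add (hF.pow_mul_le l hl z hz) (hG.pow_mul_le l hl z hz)
  pow_mul_sub_le l hl z hz w hw := by
    have hl' : 0 < l := hl₀.trans_le hl
    rw [sub_sub_sub_comm, add_mul]
    calc l ^ (k + 1) * wOpNorm (b + k + ν) (b + k + ν) (F z - F w - (G z - G w))
        ≤ l ^ (k + 1) * (wOpNorm (b + k + ν) (b + k + ν) (F z - F w) +
            wOpNorm (b + k + ν) (b + k + ν) (G z - G w)) := by
          gcongr
          exact wOpNorm_sub_le _ _ _ _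
      _ ≤ C * (‖z - w‖ / l) ^ ν + D * (‖z - w‖ / l) ^ ν := by
          rw [mul_add]
          exact add_le_add (hF.pow_mul_sub_le l hl z hz w hw) (hG.pow_mul_sub_le l hl z hz w hw)

end HolderBound

variable {V : Euc n → ℝ} {C₀ δ : ℝ}

/-- The decay of `V` pays for the inner weights of both factors. -/
lemma IsDecayingPotential.pow_mul_wOpNorm_mul_le (hV : IsDecayingPotential V C₀ δ)
    {l₀ l p q r c d : ℝ} (hl₀ : 0 < l₀) (hl : l₀ ≤ l) (hp : 0 ≤ p) (hq : 0 ≤ q) (hpr : p ≤ r)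
    (hqr : q ≤ r) (hpq : p + q ≤ δ) {i j : ℕ} {S S' : Op n}
    (hS : l ^ (i + 1) * wOpNorm p p S ≤ c) (hS' : l ^ (j + 1) * wOpNorm q q S' ≤ d) :
    l ^ (i + j + 1) * wOpNorm r r (S * mulOp volume V * S') ≤ C₀ * (c * d / l₀) := by
  have hl' : 0 < l := hl₀.trans_le hl
  have hC₀ := hV.nonneg
  have hSnn : 0 ≤ l ^ (i + 1) * wOpNorm p p S := mul_nonneg (by positivity) (wOpNorm_nonneg _ _ _)
  have hSnn' : 0 ≤ l ^ (j + 1) * wOpNorm q q S' :=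
    mul_nonneg (by positivity) (wOpNorm_nonneg _ _ _)
  calc l ^ (i + j + 1) * wOpNorm r r (S * mulOp volume V * S')
      ≤ l ^ (i + j + 1) * (C₀ * wOpNorm p p S * wOpNorm q q S') := by
        gcongr
        exact hV.wOpNorm_mul_mulOp_mul_le hp hq hpr hqr hpq S S'
    _ = C₀ * ((l ^ (i + 1) * wOpNorm p p S) * (l ^ (j + 1) * wOpNorm q q S') / l) := by
        field_simp
        ring
    _ ≤ C₀ * (c * d / l₀) := by
        have hc := hSnn.trans hS
        have hd := hSnn'.trans hS'
        gcongr

namespace HolderBound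

variable {σ l₀ e b ν C D : ℝ} {i j : ℕ} {F G : ℂ → Op n}

lemma mul_mulOp_mul (hV : IsDecayingPotential V C₀ δ) (hl₀ : 0 < l₀) (hb : 0 ≤ b) (hν : 0 ≤ ν)
    (hδ : 2 * b + (i + j) + ν ≤ δ) (hF : HolderBound σ l₀ e b ν i C F)
    (hG : HolderBound σ l₀ e b ν j D G) :
    HolderBound σ l₀ e b ν (i + j) (2 * (C₀ * (C * D / l₀)))
      fun z => F z * mulOp volume V * G z := by
  have hK : 0 ≤ C₀ * (C * D / l₀) :=
    mul_nonneg hV.nonneg (div_nonneg (mul_nonneg hF.nonneg hG.nonneg) hl₀.le)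
  refine ⟨by linarith, fun l hl z hz => ?_, fun l hl z hz w hw => ?_⟩ <;>
    rw [Nat.cast_add]
  · have hprod := hV.pow_mul_wOpNorm_mul_le hl₀ hl (r := b + (i + j)) (by linarith) (by linarith)
      (by linarith) (by linarith) (by linarith) (hF.pow_mul_le l hl z hz)
      (hG.pow_mul_le l hl z hz)
    linarith
  · have hsplit : F z * mulOp volume V * G z - F w * mulOp volume V * G w =
        (F z - F w) * mulOp volume V * G z + F w * mulOp volume V * (G z - G w) := by
      noncomm_ring
    have hfirst := hV.pow_mul_wOpNorm_mul_le hl₀ hl (r := b + (i + j) + ν) (by linarith)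
      (by linarith) (by linarith) (by linarith) (by linarith) (hF.pow_mul_sub_le l hl z hz w hw)
      (hG.pow_mul_le l hl z hz)
    have hsecond := hV.pow_mul_wOpNorm_mul_le hl₀ hl (r := b + (i + j) + ν) (by linarith)
      (by linarith) (by linarith) (by linarith) (by linarith) (hF.pow_mul_le l hl w hw)
      (hG.pow_mul_sub_le l hl z hz w hw)
    have hl' : 0 ≤ l ^ (i + j + 1) := pow_nonneg (hl₀.le.trans hl) _
    rw [hsplit]
    refine (mul_le_mul_of_nonneg_left (wOpNorm_add_le _ _ _ _) hl').trans ?_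
    rw [mul_add]
    refine (add_le_add hfirst hsecond).trans_eq ?_
    ring

end HolderBound

variable {Q : ℂ → Op n} {σ l₀ e b ν : ℝ} {m k : ℕ}

lemma exists_holderBound_freeResolvent_pow_mul_pow (hV : IsDecayingPotential V C₀ δ)
    (hQ : IsPerturbedResolvent V Q) (hl₀ : 0 < l₀) (hb : 0 ≤ b) (hν : 0 ≤ ν)
    (hδ : 2 * b + k + ν ≤ δ)
    (hfree : ∀ i, ∃ C, HolderBound σ l₀ e b ν i C fun z => (freeResolvent z ^ (i + 1) : Op n))
    (hlower : ∀ i < k, ∃ C, HolderBound σ l₀ e b ν i C fun z => Q z ^ (i + 1)) (j : ℕ) :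
    ∀ i, i + j = k →
      ∃ C, HolderBound σ l₀ e b ν k C fun z => freeResolvent z ^ (i + 1) * Q z ^ j := by
  induction j with
  | zero =>
    rintro i rfl
    simpa using hfree i
  | succ j ih =>
    intro i hi
    obtain ⟨C, hC⟩ := ih (i + 1) (by lia)
    obtain ⟨D, hD⟩ := hfree (i + 1)
    obtain ⟨E, hE⟩ := hlower j (by lia)
    obtain rfl : i + 1 + j = k := by lia
    have hprod := hD.mul_mulOp_mul hV hl₀ hb hν (by push_cast at hδ ⊢; linarith) hE
    refine ⟨_, (hC.sub hl₀ hprod).congr fun z hz => ?_⟩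
    calc freeResolvent z ^ (i + 1 + 1) * Q z ^ j -
          freeResolvent z ^ (i + 1 + 1) * mulOp volume V * Q z ^ (j + 1)
        = freeResolvent z ^ (i + 1) *
            (freeResolvent z - freeResolvent z * mulOp volume V * Q z) * Q z ^ j := by
          rw [pow_succ (freeResolvent z) (i + 1), pow_succ' (Q z) j]
          noncomm_ring
      _ = freeResolvent z ^ (i + 1) * Q z ^ (j + 1) := by
          rw [← hQ.eq_right z hz, pow_succ' (Q z) j, mul_assoc]

lemma exists_holderBound_pow (hV : IsDecayingPotential V C₀ δ) (hQ : IsPerturbedResolvent V Q)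
    (hl₀ : 0 < l₀) (hb : 0 ≤ b) (hν : 0 ≤ ν) (hδ : 2 * b + m + ν ≤ δ)
    (hfree : ∀ i, ∃ C, HolderBound σ l₀ e b ν i C fun z => (freeResolvent z ^ (i + 1) : Op n))
    (hbase : ∃ C, HolderBound σ l₀ e b ν 0 C Q) :
    ∀ k ≤ m, ∃ C, HolderBound σ l₀ e b ν k C fun z => Q z ^ (k + 1) := by
  intro k
  induction k using Nat.strong_induction_on with
  | _ k ih =>
    intro hk
    have hkm : (k : ℝ) ≤ m := by exact_mod_cast hk
    obtain ⟨C, hC⟩ := exists_holderBound_freeResolvent_pow_mul_pow hV hQ hl₀ hb hν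
      (by linarith) hfree (fun i hi => ih i hi (hi.le.trans hk)) k 0 (zero_add k)
    obtain ⟨D, hD⟩ := hbase
    have hprod := hD.mul_mulOp_mul hV hl₀ hb hν (by push_cast; linarith) hC
    rw [zero_add] at hprod
    refine ⟨_, (hC.sub hl₀ hprod).congr fun z hz => ?_⟩
    calc freeResolvent z ^ (0 + 1) * Q z ^ k -
          Q z * mulOp volume V * (freeResolvent z ^ (0 + 1) * Q z ^ k)
        = (freeResolvent z - Q z * mulOp volume V * freeResolvent z) * Q z ^ k := by
          rw [zero_add, pow_one]
          noncomm_ring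
      _ = Q z ^ (k + 1) := by rw [← hQ.eq_left z hz, pow_succ']

lemma exists_holderBound_freeResolvent_pow (hb : 1 / 2 < b) (hb' : b ≤ 1) (hl₀ : 0 < l₀)
    (hσ : |σ| = 1) (hν : ν ∈ Icc 0 1) (he : e ≤ 1) (k : ℕ) :
    ∃ C, HolderBound σ l₀ e b ν k C fun z => (freeResolvent z ^ (k + 1) : Op n) := by
  obtain ⟨C, hC, hle⟩ := exists_pow_mul_wOpNorm_freeResolvent_pow_le (n := n) hb hb' hl₀ hσ k
  obtain ⟨D, _, hsub⟩ :=
    exists_pow_mul_wOpNorm_freeResolvent_pow_sub_le (n := n) hb hb' hl₀ hσ hν k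
  have hmem {l : ℝ} (hl : l₀ ≤ l) {z : ℂ} (hz : z ∈ halfStrip σ l e) : z ∈ halfStrip σ l 1 :=
    halfStrip_subset (hl₀.le.trans hl) le_rfl he hz
  refine ⟨max C D, hC.le.trans (le_max_left _ _), fun l hl z hz =>
    (hle l hl z (hmem hl hz)).trans (le_max_left _ _), fun l hl z hz w hw => ?_⟩
  have hrhs : 0 ≤ (‖z - w‖ / l) ^ ν :=
    Real.rpow_nonneg (div_nonneg (norm_nonneg _) (hl₀.le.trans hl)) _
  rcases eq_or_ne z w with rfl | hzw
  · rw [sub_self, wOpNorm, mul_zero, zero_mul, norm_zero, mul_zero]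
    exact mul_nonneg (hC.le.trans (le_max_left _ _)) hrhs
  · exact (hsub l hl z (hmem hl hz) w (hmem hl hw) hzw).trans
      (mul_le_mul_of_nonneg_right (le_max_right _ _) hrhs)

end ProductEstimates

/-! ### Uniform limiting absorption bounds -/

section LimitingAbsorption

lemma tendsto_const_mul_div_rpow_nhds_zero (C c : ℝ) {ν : ℝ} (hν : 0 < ν) :
    Tendsto (fun x : ℝ => C * (x / c) ^ ν) (𝓝 0) (𝓝 0) := by
  have : ContinuousAt (fun x : ℝ => C * (x / c) ^ ν) 0 :=
    continuousAt_const.mul ((continuousAt_id.div_const c).rpow_const (Or.inr hν.le))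
  simpa [ContinuousAt, hν.ne'] using this

section FreeResolvent

variable {σ l₀ b : ℝ}

lemma exists_mul_wOpNorm_freeResolvent_le (hb : 1 / 2 < b) (hb' : b ≤ 1) (hl₀ : 0 < l₀)
    (hσ : |σ| = 1) : ∃ C > 0, ∀ l, l₀ ≤ l → ∀ z ∈ halfStrip σ l 1,
      l * wOpNorm b b (freeResolvent z : Op n) ≤ C := by
  simpa using exists_pow_mul_wOpNorm_freeResolvent_pow_le (n := n) hb hb' hl₀ hσ 0

lemma exists_wOpNorm_freeResolvent_sub_le (hb : 1 / 2 < b) (hb' : b ≤ 1) (hl₀ : 0 < l₀)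
    (hσ : |σ| = 1) {ε : ℝ} (hε : 0 < ε) : ∃ r > 0, ∀ z ∈ halfStrip σ l₀ 1, ∀ w ∈ halfStrip σ l₀ 1,
      ‖z - w‖ < r → wOpNorm b b (freeResolvent z - freeResolvent w : Op n) ≤ ε := by
  set ν := (b - 1 / 2) / 2 with hν
  have hν₀ : 0 < ν := by linarith
  obtain ⟨C, hC⟩ := exists_holderBound_freeResolvent_pow (n := n) (b := 1 / 2 + ν) (ν := ν)
    (by linarith) (by linarith) hl₀ hσ ⟨hν₀.le, by linarith⟩ le_rfl 0
  obtain ⟨r, hr, hsmall⟩ := Metric.eventually_nhds_iff.1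
    ((tendsto_const_mul_div_rpow_nhds_zero C l₀ hν₀).eventually (gt_mem_nhds (mul_pos hl₀ hε)))
  refine ⟨r, hr, fun z hz w hw hzw => ?_⟩
  have hholder := hC.pow_mul_sub_le l₀ le_rfl z hz w hw
  have hlt := hsmall (y := ‖z - w‖) (by rwa [dist_zero_right, norm_norm])
  simp only [zero_add, pow_one, Nat.cast_zero, add_zero] at hholder
  rw [show 1 / 2 + ν + ν = b by rw [hν]; ring] at hholder
  exact le_of_mul_le_mul_left (hholder.trans hlt.le) hl₀

end FreeResolvent

/-- The limiting absorption bound over a set `S` of energies: `Q z` is bounded in the weights `a`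
as `z` approaches `S` from the half-plane `σ Im z > 0`, uniformly over `S`. -/
def LimitingAbsorptionOn (σ a : ℝ) (S : Set ℝ) (Q : ℂ → Op n) : Prop :=
  ∃ e > 0, ∃ M : ℝ, ∀ z : ℂ, z.re ∈ S → 0 < σ * z.im → σ * z.im ≤ e → wOpNorm a a (Q z) ≤ M

variable {V : Euc n → ℝ} {C₀ δ σ l₀ a b : ℝ} {Q : ℂ → Op n}

namespace LimitingAbsorptionOn

variable {S S' : Set ℝ}

lemma mono (h : LimitingAbsorptionOn σ a S' Q) (hS : S ⊆ S') : LimitingAbsorptionOn σ a S Q := by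
  obtain ⟨e, he, M, hM⟩ := h
  exact ⟨e, he, M, fun z hz => hM z (hS hz)⟩

lemma union (h : LimitingAbsorptionOn σ a S Q) (h' : LimitingAbsorptionOn σ a S' Q) :
    LimitingAbsorptionOn σ a (S ∪ S') Q := by
  obtain ⟨e, he, M, hM⟩ := h
  obtain ⟨e', he', M', hM'⟩ := h'
  refine ⟨min e e', lt_min he he', max M M', fun z hz hpos hle => ?_⟩
  rcases hz with hz | hz
  · exact (hM z hz hpos (hle.trans (min_le_left _ _))).trans (le_max_left _ _)
  · exact (hM' z hz hpos (hle.trans (min_le_right _ _))).trans (le_max_right _ _)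

lemma of_isCompact (hS : IsCompact S)
    (h : ∀ t ∈ S, ∃ U ∈ 𝓝[S] t, LimitingAbsorptionOn σ a U Q) : LimitingAbsorptionOn σ a S Q :=
  hS.induction_on (p := (LimitingAbsorptionOn σ a · Q))
    ⟨1, one_pos, 0, fun _ hz => absurd hz (notMem_empty _)⟩
    (fun _ _ hsub h => h.mono hsub) (fun _ _ => union) h

end LimitingAbsorptionOn

lemma IsPerturbedResolvent.exists_mul_wOpNorm_le_of_le (hQ : IsPerturbedResolvent V Q)
    (hV : IsDecayingPotential V C₀ δ) (hb : 1 / 2 < b) (hb' : b ≤ 1) (hδ : 2 * b ≤ δ)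
    (hl₀ : 0 < l₀) (hσ : |σ| = 1) :
    ∃ L, l₀ ≤ L ∧ ∃ C, 0 ≤ C ∧ ∀ l, L ≤ l → ∀ z ∈ halfStrip σ l 1, l * wOpNorm b b (Q z) ≤ C := by
  obtain ⟨C, hC, hfree⟩ := exists_mul_wOpNorm_freeResolvent_le (n := n) hb hb' hl₀ hσ
  have hC₀ := hV.nonneg
  refine ⟨max l₀ (2 * C₀ * C), le_max_left _ _, 2 * C, by positivity, fun l hl z hz => ?_⟩
  have hll₀ : l₀ ≤ l := (le_max_left _ _).trans hl
  have hlC : 2 * C₀ * C ≤ l := (le_max_right _ _).trans hl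
  have hl' : 0 < l := hl₀.trans_le hll₀
  have hfreez := hfree l hll₀ z hz
  have hQnn := wOpNorm_nonneg b b (Q z)
  have hneumann : wOpNorm b b (Q z) ≤ wOpNorm b b (freeResolvent z : Op n) +
      C₀ * wOpNorm b b (Q z) * wOpNorm b b (freeResolvent z : Op n) := by
    conv_lhs => rw [hQ.eq_left z (im_ne_zero_of_mem_halfStrip hz)]
    refine (_root_.wOpNorm_sub_le _ _ _ _).trans (add_le_add le_rfl ?_)
    exact hV.wOpNorm_mul_mulOp_mul_le (by linarith) (by linarith) le_rfl le_rfl (by linarith) _ _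
  generalize wOpNorm b b (freeResolvent z : Op n) = Y at hfreez hneumann
  have hhalf : C₀ * Y ≤ 1 / 2 := by
    refine le_of_mul_le_mul_left ?_ hl'
    calc l * (C₀ * Y) = C₀ * (l * Y) := by ring
      _ ≤ C₀ * C := by gcongr
      _ ≤ l * (1 / 2) := by linarith
  have habsorb : wOpNorm b b (Q z) ≤ 2 * Y := by
    linarith [mul_le_mul_of_nonneg_left hhalf hQnn]
  linarith [mul_le_mul_of_nonneg_left habsorb hl'.le]

lemma IsPerturbedResolvent.wOpNorm_le (hQ : IsPerturbedResolvent V Q)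
    (hV : IsDecayingPotential V C₀ δ) (hb : 0 ≤ b) (ha : 0 ≤ a) (hab : a + b ≤ δ)
    (h2b : 2 * b ≤ δ) {z : ℂ} (hz : z.im ≠ 0) {K M : ℝ}
    (hK : wOpNorm b b (freeResolvent z : Op n) ≤ K) (hM : wOpNorm a a (Q z) ≤ M) :
    wOpNorm b b (Q z) ≤ K + C₀ * K * K + C₀ * K * (C₀ * M * K) := by
  have htwice : Q z = freeResolvent z - freeResolvent z * mulOp volume V * freeResolvent z +
      freeResolvent z * mulOp volume V * (Q z * mulOp volume V * freeResolvent z) := by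
    conv_lhs => rw [hQ.eq_right z hz, hQ.eq_left z hz]
    noncomm_ring
  have hC₀ := hV.nonneg
  have hfree := wOpNorm_nonneg b b (freeResolvent z : Op n)
  have hQnn := wOpNorm_nonneg a a (Q z)
  have hK₀ := hfree.trans hK
  have hM₀ := hQnn.trans hM
  have hmeas := hV.measurable
  have hsingle := hV.wOpNorm_mul_mulOp_mul_le hb hb le_rfl le_rfl (by linarith)
    (freeResolvent z) (freeResolvent z)
  have hdouble : wOpNorm b b (freeResolvent z * mulOp volume V *
      (Q z * mulOp volume V * freeResolvent z)) ≤
      C₀ * wOpNorm b b (freeResolvent z : Op n) *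
        (C₀ * wOpNorm a a (Q z) * wOpNorm b b (freeResolvent z : Op n)) := by
    refine (wOpNorm_mul_mulOp_mul_le hmeas hV.abs_le hb ha (by linarith) b b _ _).trans ?_
    gcongr
    exact wOpNorm_mul_mulOp_mul_le hmeas hV.abs_le ha hb hab a b _ _
  conv_lhs => rw [htwice]
  calc _ ≤ wOpNorm b b (freeResolvent z : Op n) +
        C₀ * wOpNorm b b (freeResolvent z : Op n) * wOpNorm b b (freeResolvent z : Op n) +
        C₀ * wOpNorm b b (freeResolvent z : Op n) *
          (C₀ * wOpNorm a a (Q z) * wOpNorm b b (freeResolvent z : Op n)) :=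
        (wOpNorm_add_le _ _ _ _).trans (add_le_add ((_root_.wOpNorm_sub_le _ _ _ _).trans
          (add_le_add le_rfl hsingle)) hdouble)
    _ ≤ _ := by gcongr

lemma LimitingAbsorptionOn.of_perturbedResolvent {S : Set ℝ}
    (h : LimitingAbsorptionOn σ a S Q) (hQ : IsPerturbedResolvent V Q)
    (hV : IsDecayingPotential V C₀ δ) (hb : 1 / 2 < b) (hb' : b ≤ 1) (ha : 0 ≤ a)
    (hab : a + b ≤ δ) (h2b : 2 * b ≤ δ) (hl₀ : 0 < l₀) (hσ : |σ| = 1) (hS : S ⊆ Ici (l₀ ^ 2)) :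
    LimitingAbsorptionOn σ b S Q := by
  obtain ⟨C, -, hfree⟩ := exists_mul_wOpNorm_freeResolvent_le (n := n) hb hb' hl₀ hσ
  obtain ⟨e, he, M, hM⟩ := h
  refine ⟨min e 1, by positivity, C / l₀ + C₀ * (C / l₀) * (C / l₀) +
    C₀ * (C / l₀) * (C₀ * M * (C / l₀)), fun z hz hpos hle => ?_⟩
  have hzstrip : z ∈ halfStrip σ l₀ 1 := ⟨hS hz, hpos, hle.trans (min_le_right _ _)⟩
  exact hQ.wOpNorm_le hV (by linarith) ha hab h2b (im_ne_zero_of_mem_halfStrip hzstrip)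
    ((le_div_iff₀' hl₀).2 (hfree l₀ le_rfl z hzstrip))
    (hM z hz hpos (hle.trans (min_le_left _ _)))

/-- `Q z` is compared with `Q w`, `w` being the point at the same height above the energy `t`, by
the Hölder continuity of the free resolvent. -/
lemma LimitingAbsorptionOn.exists_ball {t : ℝ} (h : LimitingAbsorptionOn σ b {t} Q)
    (hQ : IsPerturbedResolvent V Q) (hV : IsDecayingPotential V C₀ δ) (hb : 1 / 2 < b)
    (hb' : b ≤ 1) (h2b : 2 * b ≤ δ) (hl₀ : 0 < l₀) (hσ : |σ| = 1) (ht : l₀ ^ 2 ≤ t) :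
    ∃ r > 0, LimitingAbsorptionOn σ b (Ici (l₀ ^ 2) ∩ Metric.ball t r) Q := by
  obtain ⟨e, he, M, hM⟩ := h
  have hC₀ := hV.nonneg
  obtain ⟨r, hr, hfree⟩ := exists_wOpNorm_freeResolvent_sub_le (n := n) hb hb' hl₀ hσ
    (ε := 1 / (2 * (C₀ + 1) * (1 + C₀ * |M|))) (by positivity)
  refine ⟨r, hr, min e 1, by positivity, 2 * |M| + 1, fun z hz hpos hle => ?_⟩
  set w : ℂ := ⟨t, z.im⟩ with hw
  have hzstrip : z ∈ halfStrip σ l₀ 1 := ⟨hz.1, hpos, hle.trans (min_le_right _ _)⟩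
  have hwstrip : w ∈ halfStrip σ l₀ 1 := ⟨ht, hpos, hle.trans (min_le_right _ _)⟩
  have hzw : ‖z - w‖ < r := by
    have : z - w = ((z.re - t : ℝ) : ℂ) := by apply Complex.ext <;> simp [hw]
    rw [this, Complex.norm_real, ← dist_eq_norm]
    exact hz.2
  have hQw : wOpNorm b b (Q w) ≤ |M| :=
    (hM w rfl hpos (hle.trans (min_le_left _ _))).trans (le_abs_self M)
  have hQz := wOpNorm_nonneg b b (Q z)
  have hsub := wOpNorm_nonneg b b (freeResolvent z - freeResolvent w : Op n)
  have hdiff : wOpNorm b b (Q z - Q w) ≤ 1 / 2 + wOpNorm b b (Q z) / 2 := by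
    calc wOpNorm b b (Q z - Q w)
        ≤ (1 + C₀ * wOpNorm b b (Q z)) * (1 + C₀ * wOpNorm b b (Q w)) *
            wOpNorm b b (freeResolvent z - freeResolvent w : Op n) :=
          hQ.wOpNorm_sub_le hV (by linarith) le_rfl (by linarith)
            (im_ne_zero_of_mem_halfStrip hzstrip) (im_ne_zero_of_mem_halfStrip hwstrip)
      _ ≤ (1 + C₀ * wOpNorm b b (Q z)) * (1 + C₀ * |M|) *
            (1 / (2 * (C₀ + 1) * (1 + C₀ * |M|))) := by
          gcongr
          exact hfree z hzstrip w hwstrip hzw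
      _ = (1 + C₀ * wOpNorm b b (Q z)) / (2 * (C₀ + 1)) := by field_simp
      _ ≤ 1 / 2 + wOpNorm b b (Q z) / 2 := by
          rw [div_le_iff₀ (by positivity)]
          linarith
  have htri := wOpNorm_add_le b b (Q w) (Q z - Q w)
  rw [add_sub_cancel] at htri
  linarith

section Uniform

variable (hQ : IsPerturbedResolvent V Q) (hV : IsDecayingPotential V C₀ δ) (hb : 1 / 2 < b)
  (hb' : b ≤ 1) (hl₀ : 0 < l₀) (hσ : |σ| = 1)
include hQ hV hb hb' hl₀ hσ

lemma exists_mul_wOpNorm_le (hδ : 2 * b ≤ δ)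
    (h : ∀ L, LimitingAbsorptionOn σ b (Icc (l₀ ^ 2) (L ^ 2)) Q) :
    ∃ e > 0, e ≤ 1 ∧ ∃ C, 0 ≤ C ∧ ∀ l, l₀ ≤ l → ∀ z ∈ halfStrip σ l e,
      l * wOpNorm b b (Q z) ≤ C := by
  obtain ⟨L, hL, C, hC, hhigh⟩ := hQ.exists_mul_wOpNorm_le_of_le hV hb hb' hδ hl₀ hσ
  obtain ⟨e, he, M, hM⟩ := h L
  have hL₀ : 0 < L := hl₀.trans_le hL
  refine ⟨min e 1, by positivity, min_le_right _ _, C + L * |M|, by positivity,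
    fun l hl z hz => ?_⟩
  have hl' : 0 < l := hl₀.trans_le hl
  have hQz := wOpNorm_nonneg b b (Q z)
  have hLM : 0 ≤ L * |M| := by positivity
  rcases le_total (L ^ 2) z.re with hzL | hzL
  · have hzmax : z ∈ halfStrip σ (max l L) 1 := by
      refine ⟨?_, hz.2.1, hz.2.2.trans (min_le_right _ _)⟩
      rcases max_choice l L with h | h <;> rw [h]
      exacts [hz.1, hzL]
    linarith [hhigh _ (le_max_right l L) z hzmax,
      mul_le_mul_of_nonneg_right (le_max_left l L) hQz]
  · have hlL : l ≤ L := (pow_le_pow_iff_left₀ hl'.le hL₀.le two_ne_zero).1 (hz.1.trans hzL)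
    have hQM : wOpNorm b b (Q z) ≤ |M| :=
      (hM z ⟨(pow_le_pow_left₀ hl₀.le hl 2).trans hz.1, hzL⟩ hz.2.1
        (hz.2.2.trans (min_le_left _ _))).trans (le_abs_self M)
    linarith [mul_le_mul hlL hQM hQz hL₀.le]

lemma exists_holderBound {ν : ℝ} (hν : ν ∈ Icc 0 1) (hδ : 2 * b + ν ≤ δ) {e C : ℝ} (he : e ≤ 1)
    (hC : 0 ≤ C) (h : ∀ l, l₀ ≤ l → ∀ z ∈ halfStrip σ l e, l * wOpNorm b b (Q z) ≤ C) :
    ∃ D, HolderBound σ l₀ e b ν 0 D Q := by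
  obtain ⟨D, hD⟩ := exists_holderBound_freeResolvent_pow (n := n) hb hb' hl₀ hσ hν he 0
  have hD₀ := hD.nonneg
  have hC₀ := hV.nonneg
  set K := 1 + C₀ * (C / l₀)
  have hQK (l : ℝ) (hl : l₀ ≤ l) (z : ℂ) (hz : z ∈ halfStrip σ l e) :
      1 + C₀ * wOpNorm b b (Q z) ≤ K := by
    have := (mul_le_mul_of_nonneg_right hl (wOpNorm_nonneg b b (Q z))).trans (h l hl z hz)
    exact add_le_add le_rfl (mul_le_mul_of_nonneg_left ((le_div_iff₀' hl₀).2 this) hC₀)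
  refine ⟨C + K * K * D, by positivity, fun l hl z hz => ?_, fun l hl z hz w hw => ?_⟩
  · have : 0 ≤ K * K * D := by positivity
    simpa using (h l hl z hz).trans (by linarith)
  · have hl' : 0 < l := hl₀.trans_le hl
    have hfree := hD.pow_mul_sub_le l hl z hz w hw
    simp only [zero_add, pow_one, Nat.cast_zero, add_zero] at hfree ⊢
    have hQw := wOpNorm_nonneg b b (Q w)
    have hsub := wOpNorm_nonneg (b + ν) (b + ν) (freeResolvent z - freeResolvent w : Op n)
    calc l * wOpNorm (b + ν) (b + ν) (Q z - Q w)
        ≤ l * ((1 + C₀ * wOpNorm b b (Q z)) * (1 + C₀ * wOpNorm b b (Q w)) *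
            wOpNorm (b + ν) (b + ν) (freeResolvent z - freeResolvent w : Op n)) := by
          gcongr
          exact hQ.wOpNorm_sub_le hV (by linarith) (by linarith [hν.1]) (by linarith)
            (im_ne_zero_of_mem_halfStrip hz) (im_ne_zero_of_mem_halfStrip hw)
      _ ≤ l * (K * K *
            wOpNorm (b + ν) (b + ν) (freeResolvent z - freeResolvent w : Op n)) := by
          gcongr
          exacts [hQK l hl z hz, hQK l hl w hw]
      _ = K * K * (l * wOpNorm (b + ν) (b + ν) (freeResolvent z - freeResolvent w : Op n)) := by
          ring
      _ ≤ K * K * (D * (‖z - w‖ / l) ^ ν) := by gcongr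
      _ ≤ (C + K * K * D) * (‖z - w‖ / l) ^ ν := by
          rw [← mul_assoc]
          gcongr
          linarith

lemma exists_holderBound_of_limitingAbsorption (ha : 0 ≤ a) (hab : a + b ≤ δ) {ν : ℝ}
    (hν : ν ∈ Icc 0 1) (hδ : 2 * b + ν ≤ δ) (h : ∀ t, 0 < t → LimitingAbsorptionOn σ a {t} Q) :
    ∃ e > 0, e ≤ 1 ∧ ∃ D, HolderBound σ l₀ e b ν 0 D Q := by
  have h2b : 2 * b ≤ δ := by linarith [hν.1]
  have hcompact (L : ℝ) : LimitingAbsorptionOn σ b (Icc (l₀ ^ 2) (L ^ 2)) Q := by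
    refine .of_isCompact isCompact_Icc fun t ht => ?_
    obtain ⟨r, hr, hball⟩ := ((h t (lt_of_lt_of_le (by positivity) ht.1)).of_perturbedResolvent
      hQ hV hb hb' ha hab h2b hl₀ hσ (singleton_subset_iff.2 ht.1)).exists_ball
      hQ hV hb hb' h2b hl₀ hσ ht.1
    exact ⟨_, inter_mem (mem_of_superset self_mem_nhdsWithin Icc_subset_Ici_self)
      (mem_nhdsWithin_of_mem_nhds (Metric.ball_mem_nhds t hr)), hball⟩
  obtain ⟨e, he, he', C, hC, hle⟩ := exists_mul_wOpNorm_le hQ hV hb hb' hl₀ hσ h2b hcompact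
  exact ⟨e, he, he', exists_holderBound hQ hV hb hb' hl₀ hσ hν hδ he' hC hle⟩

end Uniform

end LimitingAbsorption

/-! ### Boundary values -/

section BoundaryValues

/-- The point `t + iσe`, which approaches the energy `t` from the half-plane `σ Im z > 0`. -/
def boundaryPoint (σ t e : ℝ) : ℂ := ⟨t, σ * e⟩

section BoundaryPoint

variable {σ : ℝ}

lemma eq_boundaryPoint (hσ : |σ| = 1) (z : ℂ) : z = boundaryPoint σ z.re (σ * z.im) := by
  have hσσ : σ * σ = 1 := by rw [← abs_mul_abs_self, hσ, one_mul]
  simp [boundaryPoint, ← mul_assoc, hσσ]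

lemma boundaryPoint_mem_halfStrip (hσ : |σ| = 1) {l t e e' : ℝ} (ht : l ^ 2 ≤ t) (he : 0 < e)
    (hee' : e ≤ e') : boundaryPoint σ t e ∈ halfStrip σ l e' := by
  have hσe : σ * (σ * e) = e := by rw [← mul_assoc, ← abs_mul_abs_self, hσ, one_mul, one_mul]
  exact ⟨ht, he.trans_eq hσe.symm, hσe.trans_le hee'⟩

lemma norm_boundaryPoint_sub_of_re (σ t t' e : ℝ) :
    ‖boundaryPoint σ t e - boundaryPoint σ t' e‖ = |t - t'| := by
  have : boundaryPoint σ t e - boundaryPoint σ t' e = ((t - t' : ℝ) : ℂ) := by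
    apply Complex.ext <;> simp [boundaryPoint]
  rw [this, Complex.norm_real, Real.norm_eq_abs]

lemma norm_boundaryPoint_sub_of_im (hσ : |σ| = 1) (t e e' : ℝ) :
    ‖boundaryPoint σ t e - boundaryPoint σ t e'‖ = |e - e'| := by
  have : boundaryPoint σ t e - boundaryPoint σ t e' = ((σ * (e - e') : ℝ) : ℂ) * Complex.I := by
    apply Complex.ext <;> simp [boundaryPoint, mul_sub]
  rw [this, norm_mul, Complex.norm_I, mul_one, Complex.norm_real, Real.norm_eq_abs, abs_mul, hσ,
    one_mul]

lemma hasDerivAt_boundaryPoint (σ t e : ℝ) : HasDerivAt (boundaryPoint σ · e) 1 t := by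
  have : (boundaryPoint σ · e) = fun x : ℝ => (x : ℂ) + ((σ * e : ℝ) : ℂ) * Complex.I := by
    funext x
    apply Complex.ext <;> simp [boundaryPoint]
  rw [this]
  exact (hasDerivAt_id t).ofReal_comp.add_const _

end BoundaryPoint

variable {𝓑 : Type*} [NormedAddCommGroup 𝓑]

/-- Decay of order `l^{-q}` and Hölder continuity of order `ν` of `F`, with the scaling of a
`q`-th power of a resolvent, on half-strips of a height that is uniform over energies `≥ l₀²`. -/
def HolderUpToAxis (σ ν : ℝ) (q : ℕ) (F : ℂ → 𝓑) : Prop :=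
  ∀ l₀ > 0, ∃ e > 0, ∃ C ≥ 0, ∀ l, l₀ ≤ l → ∀ z ∈ halfStrip σ l e, l ^ q * ‖F z‖ ≤ C ∧
    ∀ w ∈ halfStrip σ l e, l ^ q * ‖F z - F w‖ ≤ C * (‖z - w‖ / l) ^ ν

/-- The limit of `F z` as `z` approaches the energy `t` from the half-plane `σ Im z > 0`, a junk
value if the limit does not exist. -/
def boundaryValue [Nonempty 𝓑] (σ : ℝ) (F : ℂ → 𝓑) (t : ℝ) : 𝓑 :=
  limUnder (𝓝[>] 0) fun e => F (boundaryPoint σ t e)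

namespace HolderUpToAxis

variable {σ ν t t₀ : ℝ} {p q : ℕ} {F G : ℂ → 𝓑}

lemma uniformCauchySeqOn (hF : HolderUpToAxis σ ν q F) (hσ : |σ| = 1) (hν : 0 < ν)
    (ht₀ : 0 < t₀) :
    UniformCauchySeqOn (fun e t => F (boundaryPoint σ t e)) (𝓝[>] 0) (Ici t₀) := by
  have hl : 0 < √t₀ := sqrt_pos.2 ht₀
  obtain ⟨e, he, C, -, hC⟩ := hF _ hl
  intro u hu
  obtain ⟨κ, hκ, hu⟩ := Metric.mem_uniformity_dist.1 hu
  obtain ⟨r, hr, hsmall⟩ := Metric.eventually_nhds_iff.1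
    ((tendsto_const_mul_div_rpow_nhds_zero C (√t₀) hν).eventually
      (gt_mem_nhds (mul_pos (pow_pos hl q) hκ)))
  have hmem : Ioc 0 (min e (r / 2)) ∈ 𝓝[>] (0 : ℝ) := Ioc_mem_nhdsGT (by positivity)
  filter_upwards [prod_mem_prod hmem hmem] with ⟨x, y⟩ ⟨hx, hy⟩ t ht
  have hmem_strip {x : ℝ} (hx : x ∈ Ioc 0 (min e (r / 2))) :
      boundaryPoint σ t x ∈ halfStrip σ (√t₀) e :=
    boundaryPoint_mem_halfStrip hσ (by rwa [sq_sqrt ht₀.le]) hx.1 (le_min_iff.1 hx.2).1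
  have hxy : dist |x - y| 0 < r := by
    rw [dist_zero_right, norm_abs_eq_norm, norm_eq_abs, abs_lt]
    constructor <;> linarith [hx.1, hy.1, (le_min_iff.1 hx.2).2, (le_min_iff.1 hy.2).2]
  have hholder := (hC _ le_rfl _ (hmem_strip hx)).2 _ (hmem_strip hy)
  rw [norm_boundaryPoint_sub_of_im hσ] at hholder
  refine hu (lt_of_mul_lt_mul_left ?_ (pow_nonneg hl.le q))
  rw [dist_eq_norm]
  exact hholder.trans_lt (hsmall hxy)

variable [CompleteSpace 𝓑]

lemma tendsto_boundaryValue (hF : HolderUpToAxis σ ν q F) (hσ : |σ| = 1) (hν : 0 < ν)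
    (ht : 0 < t) :
    Tendsto (fun e => F (boundaryPoint σ t e)) (𝓝[>] 0) (𝓝 (boundaryValue σ F t)) :=
  tendsto_nhds_limUnder (cauchy_map_iff_exists_tendsto.1
    ((hF.uniformCauchySeqOn hσ hν ht).cauchy_map self_mem_Ici))

lemma tendstoUniformlyOn_boundaryValue (hF : HolderUpToAxis σ ν q F) (hσ : |σ| = 1) (hν : 0 < ν)
    (ht₀ : 0 < t₀) : TendstoUniformlyOn (fun e t => F (boundaryPoint σ t e)) (boundaryValue σ F)
      (𝓝[>] 0) (Ici t₀) :=
  (hF.uniformCauchySeqOn hσ hν ht₀).tendstoUniformlyOn_of_tendsto fun _ ht =>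
    hF.tendsto_boundaryValue hσ hν (ht₀.trans_le ht)

lemma exists_boundaryValue_le (hF : HolderUpToAxis σ ν q F) (hσ : |σ| = 1) (hν : 0 < ν) {l₀ : ℝ}
    (hl₀ : 0 < l₀) : ∃ C ≥ 0, ∀ l, l₀ ≤ l → ∀ t, l ^ 2 ≤ t →
      l ^ q * ‖boundaryValue σ F t‖ ≤ C ∧ ∀ t', l ^ 2 ≤ t' →
        l ^ q * ‖boundaryValue σ F t - boundaryValue σ F t'‖ ≤ C * (|t - t'| / l) ^ ν := by
  obtain ⟨e, he, C, hC₀, hC⟩ := hF l₀ hl₀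
  have hlim (l : ℝ) (hl : l₀ ≤ l) (t : ℝ) (ht : l ^ 2 ≤ t) := hF.tendsto_boundaryValue hσ hν
    ((pow_pos (hl₀.trans_le hl) 2).trans_le ht)
  refine ⟨C, hC₀, fun l hl t ht => ⟨?_, fun t' ht' => ?_⟩⟩
  · refine le_of_tendsto ((hlim l hl t ht).norm.const_mul (l ^ q)) ?_
    filter_upwards [Ioc_mem_nhdsGT he] with x hx
    exact (hC l hl _ (boundaryPoint_mem_halfStrip hσ ht hx.1 hx.2)).1
  · refine le_of_tendsto (((hlim l hl t ht).sub (hlim l hl t' ht')).norm.const_mul (l ^ q)) ?_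
    filter_upwards [Ioc_mem_nhdsGT he] with x hx
    rw [← norm_boundaryPoint_sub_of_re σ t t' x]
    exact (hC l hl _ (boundaryPoint_mem_halfStrip hσ ht hx.1 hx.2)).2 _
      (boundaryPoint_mem_halfStrip hσ ht' hx.1 hx.2)

lemma hasDerivAt_boundaryValue [NormedSpace ℝ 𝓑] [NormedSpace ℂ 𝓑] [IsScalarTower ℝ ℂ 𝓑] {c : ℝ}
    (hFG : ∀ z : ℂ, z.im ≠ 0 → HasDerivAt F ((c : ℂ) • G z) z) (hF : HolderUpToAxis σ ν p F)
    (hG : HolderUpToAxis σ ν q G) (hσ : |σ| = 1) (hν : 0 < ν) (ht : 0 < t) :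
    HasDerivAt (boundaryValue σ F) (c • boundaryValue σ G t) t := by
  refine hasDerivAt_of_tendstoUniformlyOn (l := 𝓝[>] (0 : ℝ)) (s := Ioi (t / 2))
    (f := fun e x => F (boundaryPoint σ x e)) (f' := fun e x => c • G (boundaryPoint σ x e))
    (g' := fun x => c • boundaryValue σ G x) isOpen_Ioi ?_ ?_ ?_ (half_lt_self ht)
  · exact (uniformContinuous_const_smul c).comp_tendstoUniformlyOn
      ((hG.tendstoUniformlyOn_boundaryValue hσ hν (half_pos ht)).mono Ioi_subset_Ici_self)
  · filter_upwards [self_mem_nhdsWithin] with e he x hx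
    have him : (boundaryPoint σ x e).im ≠ 0 := im_ne_zero_of_mem_halfStrip
      (boundaryPoint_mem_halfStrip (l := 0) hσ (by simpa using ((half_pos ht).trans hx).le) he
        le_rfl)
    have hchain := (hFG _ him).scomp x (hasDerivAt_boundaryPoint σ x e)
    rw [one_smul] at hchain
    rwa [← algebraMap_smul ℂ c]
  · exact fun x hx => hF.tendsto_boundaryValue hσ hν ((half_pos ht).trans hx)

end HolderUpToAxis

end BoundaryValues

/-! ### Bounded Hölder functions on half-lines -/

section HalfLines

variable {𝓑 : Type*} [NormedAddCommGroup 𝓑]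

/-- Boundedness and Hölder continuity of order `ν` on every half-line `[l₀, ∞)` with `l₀ > 0`. -/
def HolderOnHalfLines (ν : ℝ) (G : ℝ → 𝓑) : Prop :=
  ∀ l₀ > 0, ∃ C, ∀ x, l₀ ≤ x → ‖G x‖ ≤ C ∧ ∀ y, l₀ ≤ y → ‖G y - G x‖ ≤ C * |y - x| ^ ν

namespace HolderOnHalfLines

variable {μ ν : ℝ} {G G' : ℝ → 𝓑}

/-- Increments of length greater than one are controlled by the uniform bound. -/
lemma of_le_add_one (hμ : 0 ≤ μ) (hμν : μ ≤ ν)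
    (h : ∀ l₀ > 0, ∃ C, ∀ x, l₀ ≤ x → ‖G x‖ ≤ C ∧
      ∀ y, x < y → y ≤ x + 1 → ‖G y - G x‖ ≤ C * (y - x) ^ ν) : HolderOnHalfLines μ G := by
  intro l₀ hl₀
  obtain ⟨C, hC⟩ := h l₀ hl₀
  have hC₀ : 0 ≤ C := (norm_nonneg _).trans (hC l₀ le_rfl).1
  have hlt (x y : ℝ) (hx : l₀ ≤ x) (hxy : x < y) : ‖G y - G x‖ ≤ 2 * C * |y - x| ^ μ := by
    have hpos : 0 < y - x := sub_pos.2 hxy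
    rw [abs_of_pos hpos]
    rcases le_total (y - x) 1 with h1 | h1
    · calc ‖G y - G x‖ ≤ C * (y - x) ^ ν := (hC x hx).2 y hxy (by linarith)
        _ ≤ C * (y - x) ^ μ := by
          gcongr C * ?_
          exact rpow_le_rpow_of_exponent_ge hpos h1 hμν
        _ ≤ 2 * C * (y - x) ^ μ := by
          gcongr
          linarith
    · calc ‖G y - G x‖ ≤ ‖G y‖ + ‖G x‖ := norm_sub_le _ _
        _ ≤ 2 * C * 1 := by linarith [(hC x hx).1, (hC y (hx.trans hxy.le)).1]
        _ ≤ 2 * C * (y - x) ^ μ := by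
          gcongr
          exact one_le_rpow h1 hμ
  refine ⟨2 * C, fun x hx => ⟨by linarith [(hC x hx).1], fun y hy => ?_⟩⟩
  rcases lt_trichotomy x y with hxy | rfl | hxy
  · exact hlt x y hx hxy
  · rw [sub_self, norm_zero]
    positivity
  · rw [norm_sub_rev, abs_sub_comm]
    exact hlt y x hy hxy

lemma mono (hG : HolderOnHalfLines ν G) (hμ : 0 ≤ μ) (hμν : μ ≤ ν) : HolderOnHalfLines μ G := by
  refine .of_le_add_one hμ hμν fun l₀ hl₀ => ?_
  obtain ⟨C, hC⟩ := hG l₀ hl₀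
  refine ⟨C, fun x hx => ⟨(hC x hx).1, fun y hxy _ => ?_⟩⟩
  simpa [abs_of_pos (sub_pos.2 hxy)] using (hC x hx).2 y (hx.trans hxy.le)

lemma congr (hG : HolderOnHalfLines ν G) (h : EqOn G G' (Ioi 0)) : HolderOnHalfLines ν G' := by
  intro l₀ hl₀
  obtain ⟨C, hC⟩ := hG l₀ hl₀
  refine ⟨C, fun x hx => ?_⟩
  rw [← h (hl₀.trans_le hx)]
  refine ⟨(hC x hx).1, fun y hy => ?_⟩
  rw [← h (hl₀.trans_le hy)]
  exact (hC x hx).2 y hy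

lemma add (hG : HolderOnHalfLines ν G) (hG' : HolderOnHalfLines ν G') :
    HolderOnHalfLines ν (G + G') := by
  intro l₀ hl₀
  obtain ⟨C, hC⟩ := hG l₀ hl₀
  obtain ⟨C', hC'⟩ := hG' l₀ hl₀
  refine ⟨C + C', fun x hx => ⟨norm_add_le_of_le (hC x hx).1 (hC' x hx).1, fun y hy => ?_⟩⟩
  rw [Pi.add_apply, Pi.add_apply, add_sub_add_comm, add_mul]
  exact norm_add_le_of_le ((hC x hx).2 y hy) ((hC' x hx).2 y hy)

lemma const_smul [NormedSpace ℝ 𝓑] (hG : HolderOnHalfLines ν G) (c : ℝ) :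
    HolderOnHalfLines ν (c • G) := by
  intro l₀ hl₀
  obtain ⟨C, hC⟩ := hG l₀ hl₀
  refine ⟨‖c‖ * C, fun x hx => ⟨?_, fun y hy => ?_⟩⟩
  · rw [Pi.smul_apply, norm_smul]
    exact mul_le_mul_of_nonneg_left (hC x hx).1 (norm_nonneg c)
  · rw [Pi.smul_apply, Pi.smul_apply, ← smul_sub, norm_smul, mul_assoc]
    exact mul_le_mul_of_nonneg_left ((hC x hx).2 y hy) (norm_nonneg c)

lemma continuousOn (hG : HolderOnHalfLines ν G) (hν : 0 < ν) : ContinuousOn G (Ioi 0) := by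
  intro x hx
  obtain ⟨C, hC⟩ := hG (x / 2) (half_pos hx)
  have hlim : Tendsto (fun y => C * |y - x| ^ ν) (𝓝 x) (𝓝 0) := by
    have : Tendsto (fun y => |y - x|) (𝓝 x) (𝓝 0) := by
      simpa [Function.comp_def] using (continuous_abs.comp (continuous_sub_right x)).tendsto x
    simpa [Function.comp_def] using (tendsto_const_mul_div_rpow_nhds_zero C 1 hν).comp this
  refine (tendsto_iff_norm_sub_tendsto_zero.2 (squeeze_zero' (.of_forall fun _ => norm_nonneg _) ?_
    hlim)).mono_left nhdsWithin_le_nhds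
  filter_upwards [Ioi_mem_nhds (half_lt_self hx)] with y hy
  exact (hC x (half_lt_self hx).le).2 y hy.le

end HolderOnHalfLines

variable [NormedSpace ℝ 𝓑] {ν : ℝ} {m : ℕ} {G G' : ℝ → 𝓑}

/-- The class `C^{m,ν}` on `(0, ∞)`, with bounds that are uniform on half-lines `[l₀, ∞)`. -/
structure HolderContDiff (ν : ℝ) (m : ℕ) (G : ℝ → 𝓑) : Prop where
  contDiffOn : ContDiffOn ℝ m G (Ioi 0)
  iteratedDerivWithin : ∀ j ≤ m, HolderOnHalfLines ν (iteratedDerivWithin j G (Ioi 0))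

namespace HolderContDiff

lemma zero (hG : HolderOnHalfLines ν G) (hν : 0 < ν) : HolderContDiff ν 0 G where
  contDiffOn := by simpa using hG.continuousOn hν
  iteratedDerivWithin j hj := by simpa [Nat.le_zero.1 hj] using hG

lemma succ (hG : HolderOnHalfLines ν G) (hderiv : ∀ x, 0 < x → HasDerivAt G (G' x) x)
    (hG' : HolderContDiff ν m G') : HolderContDiff ν (m + 1) G := by
  have heq : EqOn (derivWithin G (Ioi 0)) G' (Ioi 0) := fun x hx =>
    (hderiv x hx).hasDerivWithinAt.derivWithin (isOpen_Ioi.uniqueDiffWithinAt hx)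
  constructor
  · rw [Nat.cast_add, Nat.cast_one, contDiffOn_succ_iff_derivWithin isOpen_Ioi.uniqueDiffOn]
    exact ⟨fun x hx => (hderiv x hx).differentiableAt.differentiableWithinAt,
      fun h => absurd h (WithTop.natCast_ne_top m), hG'.contDiffOn.congr heq⟩
  · rintro (_ | j) hj
    · simpa using hG
    · refine (hG'.iteratedDerivWithin j (by omega)).congr fun x hx => ?_
      rw [iteratedDerivWithin_succ', iteratedDerivWithin_congr heq hx]

lemma congr (hG : HolderContDiff ν m G) (h : EqOn G G' (Ioi 0)) : HolderContDiff ν m G' where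
  contDiffOn := hG.contDiffOn.congr h.symm
  iteratedDerivWithin j hj := (hG.iteratedDerivWithin j hj).congr (iteratedDerivWithin_congr h)

lemma add (hG : HolderContDiff ν m G) (hG' : HolderContDiff ν m G') :
    HolderContDiff ν m (G + G') where
  contDiffOn := hG.contDiffOn.add hG'.contDiffOn
  iteratedDerivWithin j hj := by
    have hj' : (j : WithTop ℕ∞) ≤ m := by exact_mod_cast hj
    refine ((hG.iteratedDerivWithin j hj).add (hG'.iteratedDerivWithin j hj)).congr fun x hx => ?_
    exact (iteratedDerivWithin_add hx isOpen_Ioi.uniqueDiffOn ((hG.contDiffOn.of_le hj') x hx)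
      ((hG'.contDiffOn.of_le hj') x hx)).symm

lemma const_smul (hG : HolderContDiff ν m G) (c : ℝ) : HolderContDiff ν m (c • G) where
  contDiffOn := hG.contDiffOn.const_smul c
  iteratedDerivWithin j hj := by
    have hj' : (j : WithTop ℕ∞) ≤ m := by exact_mod_cast hj
    refine ((hG.iteratedDerivWithin j hj).const_smul c).congr fun x hx => ?_
    exact (iteratedDerivWithin_const_smul hx isOpen_Ioi.uniqueDiffOn c
      ((hG.contDiffOn.of_le hj') x hx)).symm

lemma exists_bound (hG : HolderContDiff ν m G) {μ : ℝ} (hμ : 0 ≤ μ) (hμν : μ ≤ ν) {l₀ : ℝ}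
    (hl₀ : 0 < l₀) : ∃ C : ℝ, 0 < C ∧
      (∀ j : ℕ, j ≤ m → ∀ x, l₀ ≤ x → ‖_root_.iteratedDerivWithin j G (Ioi 0) x‖ ≤ C) ∧
      ∀ x y, l₀ ≤ x → x < y → ‖_root_.iteratedDerivWithin m G (Ioi 0) y -
        _root_.iteratedDerivWithin m G (Ioi 0) x‖ ≤ C * (y - x) ^ μ := by
  choose! C hC using fun j hj => (hG.iteratedDerivWithin j hj).mono hμ hμν l₀ hl₀
  obtain ⟨D, hD⟩ := ((Finset.range (m + 1)).image C).exists_le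
  have hCD (j : ℕ) (hj : j ≤ m) : C j ≤ max D 1 :=
    (hD _ (Finset.mem_image_of_mem C (Finset.mem_range_succ_iff.2 hj))).trans (le_max_left _ _)
  refine ⟨max D 1, by positivity, fun j hj x hx => (hC j hj x hx).1.trans (hCD j hj),
    fun x y hx hxy => ?_⟩
  have hholder := (hC m le_rfl x hx).2 y (hx.trans hxy.le)
  rw [abs_of_pos (sub_pos.2 hxy)] at hholder
  exact hholder.trans (mul_le_mul_of_nonneg_right (hCD m le_rfl)
    (rpow_nonneg (sub_pos.2 hxy).le μ))

end HolderContDiff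

end HalfLines

/-! ### Regularity of the boundary values in the momentum variable -/

section Momentum

variable {𝓑 : Type*} [NormedAddCommGroup 𝓑] {σ ν : ℝ} {q r m : ℕ}

lemma pow_mul_le_div {l₀ x X C : ℝ} (hl₀ : 0 < l₀) (hx : l₀ ≤ x) (hr : r ≤ q) (hX : 0 ≤ X)
    (h : x ^ q * X ≤ C) : x ^ r * X ≤ C / l₀ ^ (q - r) := by
  have hx' : 0 < x := hl₀.trans_le hx
  rw [le_div_iff₀ (by positivity)]
  calc x ^ r * X * l₀ ^ (q - r) ≤ x ^ r * X * x ^ (q - r) := by gcongr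
    _ = x ^ q * X := by rw [← pow_mul_pow_sub x hr]; ring
    _ ≤ C := h

lemma abs_pow_sub_pow_mul_le {l₀ x y X C : ℝ} (hl₀ : 0 < l₀) (hx : l₀ ≤ x) (hxy : x ≤ y)
    (hr : r ≤ q) (hX : 0 ≤ X) (h : y ^ q * X ≤ C) :
    |y ^ r - x ^ r| * X ≤ r * (C / l₀ ^ (q - (r - 1))) * (y - x) := by
  have hx' : 0 ≤ x := hl₀.le.trans hx
  have hpow := abs_pow_sub_pow_le y x r
  rw [abs_of_nonneg (sub_nonneg.2 hxy), abs_of_nonneg (hx'.trans hxy), abs_of_nonneg hx',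
    max_eq_left hxy] at hpow
  calc |y ^ r - x ^ r| * X ≤ (y - x) * r * y ^ (r - 1) * X := by gcongr
    _ = r * (y ^ (r - 1) * X) * (y - x) := by ring
    _ ≤ r * (C / l₀ ^ (q - (r - 1))) * (y - x) := by
      gcongr
      exact pow_mul_le_div hl₀ (hx.trans hxy) ((Nat.sub_le r 1).trans hr) hX h

lemma abs_sq_sub_sq_div_le {l₀ x y : ℝ} (hl₀ : 0 < l₀) (hx : l₀ ≤ x) (hxy : x ≤ y)
    (hy : y ≤ x + 1) : |y ^ 2 - x ^ 2| / x ≤ (2 + 1 / l₀) * (y - x) := by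
  have hx' : 0 < x := hl₀.trans_le hx
  have hone : 1 ≤ 1 / l₀ * x := by rwa [one_div_mul_eq_div, one_le_div hl₀]
  rw [sq_sub_sq, abs_of_nonneg (by nlinarith), div_le_iff₀ hx', mul_right_comm]
  gcongr
  linarith

lemma norm_pow_smul_sub_pow_smul_le [NormedSpace ℝ 𝓑] {x y : ℝ} (hx : 0 ≤ x) (u v : 𝓑) :
    ‖y ^ r • v - x ^ r • u‖ ≤ x ^ r * ‖v - u‖ + |y ^ r - x ^ r| * ‖v‖ := by
  have hsplit : y ^ r • v - x ^ r • u = x ^ r • (v - u) + (y ^ r - x ^ r) • v := by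
    rw [smul_sub, sub_smul]
    abel
  calc ‖y ^ r • v - x ^ r • u‖ ≤ ‖x ^ r • (v - u)‖ + ‖(y ^ r - x ^ r) • v‖ := by
        rw [hsplit]
        exact norm_add_le _ _
    _ = x ^ r * ‖v - u‖ + |y ^ r - x ^ r| * ‖v‖ := by
        rw [norm_smul, norm_smul, norm_of_nonneg (pow_nonneg hx r), Real.norm_eq_abs]

namespace HolderUpToAxis

variable [CompleteSpace 𝓑] [NormedSpace ℝ 𝓑] {F : ℂ → 𝓑}

/-- The growth of `x ^ r` is compensated by the decay `O(x ^ (-q))` of the boundary value. -/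
lemma holderOnHalfLines (hF : HolderUpToAxis σ ν q F) (hσ : |σ| = 1) (hν : ν ∈ Ioc 0 1)
    (hr : r ≤ q) : HolderOnHalfLines ν fun x => x ^ r • boundaryValue σ F (x ^ 2) := by
  refine .of_le_add_one hν.1.le le_rfl fun l₀ hl₀ => ?_
  obtain ⟨C, hC₀, hC⟩ := hF.exists_boundaryValue_le hσ hν.1 hl₀
  set C₁ := C / l₀ ^ (q - r)
  set C₂ := C * (2 + 1 / l₀) ^ ν / l₀ ^ (q - r)
  set C₃ := r * (C / l₀ ^ (q - (r - 1)))
  have hC₁ : 0 ≤ C₁ := by positivity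
  have hC₂ : 0 ≤ C₂ := by positivity
  have hC₃ : 0 ≤ C₃ := by positivity
  refine ⟨C₁ + (C₂ + C₃), fun x hx => ⟨?_, fun y hxy hy => ?_⟩⟩
  all_goals have hx' : 0 < x := hl₀.trans_le hx
  · rw [norm_smul, norm_pow, norm_of_nonneg hx'.le]
    linarith [pow_mul_le_div hl₀ hx hr (norm_nonneg _) (hC x hx _ le_rfl).1]
  set g := fun x => boundaryValue σ F (x ^ 2)
  have hpos : 0 < y - x := sub_pos.2 hxy
  have hincr : x ^ r * ‖g y - g x‖ ≤ C₂ * (y - x) ^ ν := by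
    have hq : x ^ q * ‖g y - g x‖ ≤ C * (2 + 1 / l₀) ^ ν * (y - x) ^ ν := by
      refine ((hC x hx _ (by gcongr)).2 _ le_rfl).trans ?_
      rw [mul_assoc, ← mul_rpow (by positivity) hpos.le]
      gcongr
      exacts [hν.1.le, abs_sq_sub_sq_div_le hl₀ hx hxy.le hy]
    exact (pow_mul_le_div hl₀ hx hr (norm_nonneg _) hq).trans_eq (mul_div_right_comm _ _ _)
  have hpow : |y ^ r - x ^ r| * ‖g y‖ ≤ C₃ * (y - x) ^ ν := by
    refine (abs_pow_sub_pow_mul_le hl₀ hx hxy.le hr (norm_nonneg _)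
      (hC y (hx.trans hxy.le) _ le_rfl).1).trans ?_
    gcongr
    exact self_le_rpow_of_le_one hpos.le (by linarith) hν.2
  calc ‖y ^ r • g y - x ^ r • g x‖ ≤ x ^ r * ‖g y - g x‖ + |y ^ r - x ^ r| * ‖g y‖ :=
        norm_pow_smul_sub_pow_smul_le hx'.le _ _
    _ ≤ C₂ * (y - x) ^ ν + C₃ * (y - x) ^ ν := add_le_add hincr hpow
    _ ≤ (C₁ + (C₂ + C₃)) * (y - x) ^ ν := by
        rw [← add_mul]
        exact mul_le_mul_of_nonneg_right (by linarith) (rpow_nonneg hpos.le ν)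

end HolderUpToAxis

variable [CompleteSpace 𝓑] [NormedSpace ℝ 𝓑] [NormedSpace ℂ 𝓑] [IsScalarTower ℝ ℂ 𝓑]
  {E : ℕ → ℂ → 𝓑}

/-- Each derivative of `x ^ r • g_q (x ^ 2)`, `g_q` being the boundary value of `E q`, consumes one
of the functions `E q`, because `g_q' = q • g_{q + 1}`. -/
lemma holderContDiff_pow_smul_boundaryValue (hσ : |σ| = 1) (hν : ν ∈ Ioc 0 1)
    (hderiv : ∀ (q : ℕ) (z : ℂ), z.im ≠ 0 → HasDerivAt (E q) ((q : ℂ) • E (q + 1) z) z)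
    (hr : r ≤ q) (hE : ∀ p, q ≤ p → p ≤ q + m → HolderUpToAxis σ ν p (E p)) :
    HolderContDiff ν m fun x => x ^ r • boundaryValue σ (E q) (x ^ 2) := by
  induction m generalizing q r with
  | zero => exact .zero ((hE q le_rfl le_rfl).holderOnHalfLines hσ hν hr) hν.1
  | succ m ih =>
    have hq := hE q le_rfl (by omega)
    have hlower := ih (r := r - 1) (q := q) (by omega) fun p hp hp' => hE p hp (by omega)
    have hupper := ih (r := r + 1) (q := q + 1) (by omega) fun p hp hp' =>
      hE p (by omega) (by omega)
    refine .succ (hq.holderOnHalfLines hσ hν hr) (fun x hx => ?_)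
      ((hlower.const_smul r).add (hupper.const_smul (2 * q)))
    have henergy := hq.hasDerivAt_boundaryValue (c := q) (fun z hz => by simpa using hderiv q z hz)
      (hE (q + 1) (by omega) (by omega)) hσ hν.1 (pow_pos hx 2)
    have hboundary := henergy.scomp (h := fun y : ℝ => y ^ 2) x (hasDerivAt_pow 2 x)
    refine ((hasDerivAt_pow r x).fun_smul hboundary).congr_deriv ?_
    change _ = (r : ℝ) • x ^ (r - 1) • boundaryValue σ (E q) (x ^ 2) +
      (2 * q : ℝ) • x ^ (r + 1) • boundaryValue σ (E (q + 1)) (x ^ 2)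
    rw [Function.comp_apply]
    module

end Momentum

/-! ### Regularity of the perturbed resolvent -/

section PerturbedResolvent

variable {Q : ℂ → Op n} {σ a : ℝ}

lemma IsResolventFamily.hasDerivAt_mul_pow_mul (hQ : IsResolventFamily Q) (A : Op n) (q : ℕ)
    {z : ℂ} (hz : z.im ≠ 0) :
    HasDerivAt (fun w => A * Q w ^ q * A) ((q : ℂ) • (A * Q z ^ (q + 1) * A)) z := by
  simpa only [mul_smul_comm, smul_mul_assoc] using
    ((hQ.hasDerivAt_pow hz q).const_mul A).mul_const A

lemma LimitingAbsorptionOn.of_tendsto (hσ : |σ| = 1) {t : ℝ} {R : Op n}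
    (h : Tendsto (fun e => weight a * Q (boundaryPoint σ t e) * weight a) (𝓝[>] 0) (𝓝 R)) :
    LimitingAbsorptionOn σ a {t} Q := by
  obtain ⟨e, he, hbound⟩ := mem_nhdsGT_iff_exists_Ioc_subset.1
    (h.norm.eventually (gt_mem_nhds (lt_add_one ‖R‖)))
  refine ⟨e, he, ‖R‖ + 1, fun z hz hpos hle => ?_⟩
  rw [eq_boundaryPoint hσ z, mem_singleton_iff.1 hz]
  exact (hbound ⟨hpos, hle⟩).le

variable {V : Euc n → ℝ} {C₀ δ b ν : ℝ}

namespace IsPerturbedResolvent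

lemma holderUpToAxis (hQ : IsPerturbedResolvent V Q) (hV : IsDecayingPotential V C₀ δ)
    (hb : 1 / 2 < b) (hb' : b ≤ 1) (hν : ν ∈ Icc 0 1) {k : ℕ} (ha : b + k + ν ≤ a)
    (hab : a + b ≤ δ) (hσ : |σ| = 1) (h : ∀ t, 0 < t → LimitingAbsorptionOn σ a {t} Q) :
    HolderUpToAxis σ ν (k + 1) fun z => weight a * Q z ^ (k + 1) * weight a := by
  intro l₀ hl₀
  have hbk : 0 ≤ b + k := add_nonneg (by linarith) k.cast_nonneg
  have hle : b + k ≤ a := by linarith [hν.1]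
  obtain ⟨e, he, he', hbase⟩ := exists_holderBound_of_limitingAbsorption hQ hV hb hb' hl₀ hσ
    (by linarith) hab hν (by linarith) h
  obtain ⟨C, hC⟩ := exists_holderBound_pow hV hQ hl₀ (by linarith) hν.1 (by linarith)
    (exists_holderBound_freeResolvent_pow hb hb' hl₀ hσ hν he') hbase k le_rfl
  refine ⟨e, he, C, hC.nonneg, fun l hl z hz => ?_⟩
  have hl' : 0 < l := hl₀.trans_le hl
  refine ⟨(mul_le_mul_of_nonneg_left (wOpNorm_anti hbk hbk hle hle _) (by positivity)).trans
    (hC.pow_mul_le l hl z hz), fun w hw => ?_⟩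
  rw [← sub_mul, ← mul_sub]
  exact (mul_le_mul_of_nonneg_left (wOpNorm_anti (add_nonneg hbk hν.1) (add_nonneg hbk hν.1) ha ha
    _) (by positivity)).trans (hC.pow_mul_sub_le l hl z hz w hw)

lemma holderContDiff (hQ : IsPerturbedResolvent V Q) (hV : IsDecayingPotential V C₀ δ)
    (hb : 1 / 2 < b) (hb' : b ≤ 1) (hν : ν ∈ Ioc 0 1) {m : ℕ} (ha : b + m + ν ≤ a)
    (hab : a + b ≤ δ) (hσ : |σ| = 1) {R : ℝ → Op n}
    (hR : ∀ lam, 0 < lam → Tendsto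
      (fun e => weight a * Q (boundaryPoint σ (lam ^ 2) e) * weight a) (𝓝[>] 0) (𝓝 (R lam))) :
    HolderContDiff ν m fun lam => (lam : ℂ) • R lam := by
  have habsorption (t : ℝ) (ht : 0 < t) : LimitingAbsorptionOn σ a {t} Q := by
    rw [← sq_sqrt ht.le]
    exact .of_tendsto hσ (hR _ (sqrt_pos.2 ht))
  have hE (q : ℕ) (hq : 1 ≤ q) (hqm : q ≤ 1 + m) :
      HolderUpToAxis σ ν q fun z => weight a * Q z ^ q * weight a := by
    obtain ⟨k, rfl⟩ := Nat.exists_eq_add_of_le' hq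
    have hkm : (k : ℝ) ≤ m := by exact_mod_cast (by omega : k ≤ m)
    exact hQ.holderUpToAxis hV hb hb' (Ioc_subset_Icc_self hν) (by linarith) hab hσ habsorption
  have hregular := holderContDiff_pow_smul_boundaryValue (m := m) hσ hν
    (fun q z hz => hQ.isResolventFamily.hasDerivAt_mul_pow_mul (weight a) q hz) le_rfl hE
  refine hregular.congr fun lam hlam => ?_
  have hlim := (hE 1 le_rfl (by omega)).tendsto_boundaryValue hσ hν.1 (pow_pos hlam 2)
  simp only [pow_one] at hlim ⊢
  rw [tendsto_nhds_unique hlim (hR lam hlam)]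
  exact (Complex.coe_smul _ _).symm

end IsPerturbedResolvent

end PerturbedResolvent

lemma jb_rpow (x : Euc n) (r : ℝ) : jb x ^ r = bracketPow 1 (r / 2) x := by
  rw [jb, bracketPow, sqrt_eq_rpow, ← rpow_mul (by positivity), one_pow, one_mul,
    one_div_mul_eq_div]

lemma eq_weight_of_ae_eq {a : ℝ} (ha : 0 ≤ a) {A : Op n}
    (hA : ∀ f : L2 n, (A f : Euc n → ℂ) =ᵐ[volume] fun x => ((jb x ^ (-a) : ℝ) : ℂ) * f x) :
    A = weight a := by
  ext1 f
  apply Lp.ext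
  filter_upwards [hA f, mulOp_ae_eq (memLp_top_bracketPow (r := -a / 2) (by linarith)) f]
    with x hAx hweight
  rw [hAx, jb_rpow]
  exact hweight.symm

theorem resolvent_regularity_general {V : Euc n → ℝ} (hVmeas : Measurable V) {C₀ δ : ℝ}
    (hV : ∀ x, |V x| ≤ C₀ * jb x ^ (-δ)) {T : L2 n →ₗ.[ℂ] L2 n} (hT : IsSchrodingerOp V T)
    {Q : ℂ → L2 n →L[ℂ] L2 n} (hQ : IsResolventOf T Q) {s : ℝ} (hs : 0 ≤ s) (hδ : s + 1 < δ) :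
    ∃ ε₀ : ℝ, 0 < ε₀ ∧ ∀ ε : ℝ, 0 < ε → ε < ε₀ →
      ∀ (m : ℕ) (μ : ℝ), m = Nat.floor s → μ = s - m →
      ∀ sg : ℝ, (sg = 1 ∨ sg = -1) →
      ∀ W : L2 n →L[ℂ] L2 n,
        (∀ f : L2 n, (W f : Euc n → ℂ) =ᵐ[volume]
          fun x => ((jb x ^ (-(1 / 2 : ℝ) - s - ε) : ℝ) : ℂ) * f x) →
      ∀ R : ℝ → (L2 n →L[ℂ] L2 n),
        (∀ lam : ℝ, 0 < lam →
          Tendsto (fun e : ℝ => W.comp ((Q (((lam ^ 2 : ℝ) : ℂ) - sg * e * Complex.I)).comp W))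
            (𝓝[>] (0 : ℝ)) (𝓝 (R lam))) →
      (ContDiffOn ℝ (m : ℕ∞) (fun lam : ℝ => (lam : ℂ) • R lam) (Set.Ioi (0 : ℝ)) ∧
        ∀ lam₀ : ℝ, 0 < lam₀ → ∃ C : ℝ, 0 < C ∧
          (∀ j : ℕ, j ≤ m → ∀ lam : ℝ, lam₀ ≤ lam →
            ‖iteratedDerivWithin j (fun lam : ℝ => (lam : ℂ) • R lam)
                (Set.Ioi (0 : ℝ)) lam‖ ≤ C) ∧
          (∀ lam₁ lam₂ : ℝ, lam₀ ≤ lam₁ → lam₁ < lam₂ →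
            ‖iteratedDerivWithin m (fun lam : ℝ => (lam : ℂ) • R lam)
                (Set.Ioi (0 : ℝ)) lam₂ -
              iteratedDerivWithin m (fun lam : ℝ => (lam : ℂ) • R lam)
                (Set.Ioi (0 : ℝ)) lam₁‖ ≤ C * (lam₂ - lam₁) ^ μ)) := by
  have hfloor : 0 < 1 - (s - Nat.floor s) := by linarith [Nat.lt_floor_add_one s]
  have hgap : 0 < (δ - 1 - s) / 2 := by linarith
  refine ⟨min (1 - (s - Nat.floor s)) ((δ - 1 - s) / 2), lt_min hfloor hgap, ?_⟩
  intro ε hε hε₀ m μ hm hμ sg hsg W hW R hR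
  obtain ⟨hεfloor, hεgap⟩ := lt_min_iff.1 hε₀
  rw [← hm, ← hμ] at hεfloor
  have hμ₀ : 0 ≤ μ := by linarith [hm ▸ Nat.floor_le hs]
  have hpot : IsDecayingPotential V C₀ δ := ⟨hVmeas, fun x => jb_rpow x (-δ) ▸ hV x⟩
  have hpert := hQ.isPerturbedResolvent hT (hpot.memLp_top (by linarith))
  obtain rfl : W = weight (1 / 2 + s + ε) := eq_weight_of_ae_eq (by linarith) (by
    simpa only [neg_add'] using hW)
  have hσ : |-sg| = 1 := by rcases hsg with rfl | rfl <;> simp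
  have hpoint (lam e : ℝ) :
      ((lam ^ 2 : ℝ) : ℂ) - sg * e * Complex.I = boundaryPoint (-sg) (lam ^ 2) e := by
    apply Complex.ext <;> simp [boundaryPoint, -Complex.ofReal_pow]
  simp only [hpoint] at hR
  have hregular := hpert.holderContDiff hpot (a := 1 / 2 + s + ε)
    (b := 1 / 2 + ε / 4) (ν := μ + ε / 2) (m := m)
    (by linarith) (by linarith) ⟨by linarith, by linarith⟩ (by linarith) (by linarith) hσ hR
  exact ⟨hregular.contDiffOn, fun lam₀ hlam₀ =>
    hregular.exists_bound hμ₀ (by linarith) hlam₀⟩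

end Proof

/-- **Lemma 3.5.** For `0 ≤ s ≤ n/2`, sufficiently small `ε > 0`,
`m = ⌊s⌋` and `μ = s − m`, the weighted boundary values of the resolvent
`ℛ_s^±(λ) = λ ⟨x⟩^{-1/2-s-ε} R^±(λ) ⟨x⟩^{-1/2-s-ε}` (obtained by the limiting absorption
principle as the norm limits of `λ ⟨x⟩^{-1/2-s-ε} (G − λ² ± iε₀)⁻¹ ⟨x⟩^{-1/2-s-ε}`)
form a `C^m` operator-valued function on `(0,∞)` whose `j`-th derivatives (`j ≤ m`) are
bounded on `[λ₀,∞)` and whose `m`-th derivative is Hölder continuous of order `μ`. -/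
theorem resolvent_regularity
    (n : ℕ) (hn : 4 ≤ n) (V : Euc n → ℝ) (hVmeas : Measurable V)
    (C₀ δ : ℝ) (hC₀ : 0 < C₀) (hδ : ((n : ℝ) + 2) / 2 < δ)
    (hV : ∀ x, |V x| ≤ C₀ * jb x ^ (-δ))
    (T : L2 n →ₗ.[ℂ] L2 n) (hT : IsSchrodingerOp V T)
    (fc : (ℝ → ℂ) → (L2 n →L[ℂ] L2 n)) (hfc : IsBorelFunctionalCalculus T fc)
    (s : ℝ) (hs0 : 0 ≤ s) (hs1 : s ≤ (n : ℝ) / 2) :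
    ∃ ε₀ : ℝ, 0 < ε₀ ∧ ∀ ε : ℝ, 0 < ε → ε < ε₀ →
      ∀ (m : ℕ) (μ : ℝ), m = Nat.floor s → μ = s - m →
      ∀ sg : ℝ, (sg = 1 ∨ sg = -1) →
      ∀ W : L2 n →L[ℂ] L2 n,
        (∀ f : L2 n, (W f : Euc n → ℂ) =ᵐ[volume]
          fun x => ((jb x ^ (-(1 / 2 : ℝ) - s - ε) : ℝ) : ℂ) * f x) →
      ∀ R : ℝ → (L2 n →L[ℂ] L2 n),
        (∀ lam : ℝ, 0 < lam →
          Tendsto (fun e : ℝ =>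
              W.comp ((fc (fun x : ℝ =>
                ((x : ℂ) - ((lam ^ 2 : ℝ) : ℂ) + sg * e * Complex.I)⁻¹)).comp W))
            (𝓝[>] (0 : ℝ)) (𝓝 (R lam))) →
      (ContDiffOn ℝ (m : ℕ∞) (fun lam : ℝ => (lam : ℂ) • R lam) (Set.Ioi (0 : ℝ)) ∧
        ∀ lam₀ : ℝ, 0 < lam₀ → ∃ C : ℝ, 0 < C ∧
          (∀ j : ℕ, j ≤ m → ∀ lam : ℝ, lam₀ ≤ lam →
            ‖iteratedDerivWithin j (fun lam : ℝ => (lam : ℂ) • R lam)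
                (Set.Ioi (0 : ℝ)) lam‖ ≤ C) ∧
          (∀ lam₁ lam₂ : ℝ, lam₀ ≤ lam₁ → lam₁ < lam₂ →
            ‖iteratedDerivWithin m (fun lam : ℝ => (lam : ℂ) • R lam)
                (Set.Ioi (0 : ℝ)) lam₂ -
              iteratedDerivWithin m (fun lam : ℝ => (lam : ℂ) • R lam)
                (Set.Ioi (0 : ℝ)) lam₁‖ ≤ C * (lam₂ - lam₁) ^ μ)) := by
  simpa only [sub_add] using resolvent_regularity_general hVmeas hV hT
    (Q := fun z => fc fun x => ((x : ℂ) - z)⁻¹) hfc.resolvent hs0 (by linarith)
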